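/- arXiv:1907.07926 — 7 statements merged into one kernel-verified Lean document; each statement's English description precedes it below -/
import Mathlib

section
/- Let 2 < q < 4 and μ > 0. Then the functional D_q is bounded below and has negative infimum on the mass-constraint set: there exists C ∈ ℝ such that D_q(u) ≥ C for every u ∈ H¹(ℝ) with ‖u‖₂² = μ, and there exists u₀ ∈ H¹(ℝ) with ‖u₀‖₂² = μ and D_q(u₀) < 0. -/
open MeasureTheory Real Set

noncomputable section

/-- `u ∈ H¹(ℝ)` with weak derivative `u'`: `u` is continuous, square-integrable,
`u'` is square-integrable, and `u(b) − u(a) = ∫_a^b u'(t) dt` for all `a ≤ b`. -/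
def IsH1 (u u' : ℝ → ℝ) : Prop :=
  Continuous u ∧ Integrable (fun x => (u x) ^ 2) ∧ Integrable (fun x => (u' x) ^ 2) ∧
    ∀ a b : ℝ, a ≤ b → u b - u a = ∫ t in a..b, u' t

/-- The mass `‖u‖₂² = ∫_ℝ u(x)² dx`. -/
def mass (u : ℝ → ℝ) : ℝ := ∫ x, (u x) ^ 2

/-- `D_q(u) = (1/2)∫ u'² − (1/q)|u(0)|^q`. -/
def Dfun (q : ℝ) (u u' : ℝ → ℝ) : ℝ :=
  (1 / 2) * (∫ x, (u' x) ^ 2) - (1 / q) * |u 0| ^ q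

/-- `F_{p,q}(u) = (1/2)∫ u'² − (1/p)∫ |u|^p − (1/q)|u(0)|^q`. -/
def Ffun (p q : ℝ) (u u' : ℝ → ℝ) : ℝ :=
  (1 / 2) * (∫ x, (u' x) ^ 2) - (1 / p) * (∫ x, |u x| ^ p) - (1 / q) * |u 0| ^ q

/-- Cauchy-Schwarz, valid also when `f` is not integrable on the interval. -/
lemma sq_intervalIntegral_le (f : ℝ → ℝ) (hf : Integrable (fun x => (f x) ^ 2)) (x : ℝ)
    (hx : 0 < x) : (∫ t in (0 : ℝ)..x, f t) ^ 2 ≤ x * ∫ t, (f t) ^ 2 := by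
  have hT : 0 ≤ ∫ t, (f t) ^ 2 := integral_nonneg fun t => sq_nonneg _
  by_cases hi : IntervalIntegrable f volume 0 x
  · set I := ∫ t in (0 : ℝ)..x, f t with hI
    have h2 : IntervalIntegrable (fun t => (f t) ^ 2) volume 0 x := hf.intervalIntegrable
    have h3 : ∫ t in (0 : ℝ)..x, (f t) ^ 2 ≤ ∫ t, (f t) ^ 2 := by
      rw [intervalIntegral.integral_of_le hx.le]
      exact setIntegral_le_integral hf (Filter.Eventually.of_forall fun t => sq_nonneg _)
    have h4 : 0 ≤ ∫ t in (0 : ℝ)..x, (((f t) ^ 2 - (2 * (I / x)) * f t) + (I / x) ^ 2) := by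
      apply intervalIntegral.integral_nonneg hx.le
      intro t _
      nlinarith [sq_nonneg (f t - I / x)]
    rw [intervalIntegral.integral_add (h2.sub (hi.const_mul _)) (by simp),
      intervalIntegral.integral_sub h2 (hi.const_mul _), intervalIntegral.integral_const_mul,
      intervalIntegral.integral_const, ← hI] at h4
    simp only [sub_zero, smul_eq_mul] at h4
    have h5 : x * (2 * (I / x) * I) = 2 * I ^ 2 := by field_simp
    have h6 : x * (x * (I / x) ^ 2) = I ^ 2 := by field_simp
    have h7 := mul_nonneg hx.le h4
    have h8 := mul_le_mul_of_nonneg_left h3 hx.le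
    nlinarith
  · rw [intervalIntegral.integral_undef hi]
    have := mul_nonneg hx.le hT
    simpa using this

lemma quartic_le (μ : ℝ) (hμ : 0 < μ) (u u' : ℝ → ℝ) (h : IsH1 u u') (hm : mass u = μ) :
    (u 0) ^ 4 ≤ 8 * μ * ∫ x, (u' x) ^ 2 := by
  obtain ⟨hc, hu, hu', hd⟩ := h
  unfold mass at hm
  set T := ∫ x, (u' x) ^ 2 with hTdef
  have hT : 0 ≤ T := integral_nonneg fun t => sq_nonneg _
  have key : ∀ L : ℝ, 0 < L → L * (u 0) ^ 2 ≤ 2 * μ + L ^ 2 * T := by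
    intro L hL
    have hp : ∀ x ∈ Icc (0 : ℝ) L, (u 0) ^ 2 ≤ 2 * (u x) ^ 2 + (2 * T) * x := by
      intro x hx
      rcases hx.1.eq_or_lt with rfl | hx0
      · nlinarith [sq_nonneg (u 0)]
      · have h1 := sq_intervalIntegral_le u' hu' x hx0
        rw [← hd 0 x hx0.le] at h1
        nlinarith [sq_nonneg (2 * u x - u 0)]
    have h1 : ∫ x in (0 : ℝ)..L, (u 0) ^ 2 ≤ ∫ x in (0 : ℝ)..L, (2 * (u x) ^ 2 + (2 * T) * x) := by
      apply intervalIntegral.integral_mono_on hL.le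
      · simp
      · apply Continuous.intervalIntegrable
        fun_prop
      · exact hp
    rw [intervalIntegral.integral_add (Continuous.intervalIntegrable (by fun_prop) _ _)
      (Continuous.intervalIntegrable (by fun_prop) _ _), intervalIntegral.integral_const_mul,
      intervalIntegral.integral_const_mul, integral_id, intervalIntegral.integral_const] at h1
    have h3 : ∫ t in (0 : ℝ)..L, (u t) ^ 2 ≤ μ := by
      rw [intervalIntegral.integral_of_le hL.le, ← hm]
      exact setIntegral_le_integral hu (Filter.Eventually.of_forall fun t => sq_nonneg _)
    simp only [sub_zero, smul_eq_mul] at h1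
    nlinarith
  by_cases h0 : u 0 = 0
  · have : 0 ≤ 8 * μ * T := by positivity
    simpa [h0] using this
  · have hs : 0 < (u 0) ^ 2 := by positivity
    have := key (4 * μ / (u 0) ^ 2) (by positivity)
    have e1 : 4 * μ / (u 0) ^ 2 * (u 0) ^ 2 = 4 * μ := by field_simp
    have e2 : (4 * μ / (u 0) ^ 2) ^ 2 * T = 16 * μ ^ 2 * T / (u 0) ^ 4 := by field_simp; ring
    rw [e1, e2] at this
    have h4 : 0 < (u 0) ^ 4 := by positivity
    have h5 : 2 * μ ≤ 16 * μ ^ 2 * T / (u 0) ^ 4 := by linarith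
    rw [le_div_iff₀ h4] at h5
    have h6 : (2 * μ) * (u 0) ^ 4 ≤ (2 * μ) * (8 * μ * T) := by nlinarith
    exact le_of_mul_le_mul_left h6 (by positivity)

lemma exp_integral (k : ℝ) (hk : 0 < k) : ∫ x : ℝ, (Real.exp (-k * |x|)) ^ 2 = 1 / k := by
  rw [integral_comp_abs (f := fun x => (Real.exp (-k * x)) ^ 2)]
  have : ∀ x : ℝ, (Real.exp (-k * x)) ^ 2 = Real.exp ((-2 * k) * x) := by
    intro x
    rw [← Real.exp_nat_mul]
    congr 1
    push_cast; ring
  simp_rw [this]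
  rw [integral_exp_mul_Ioi (by linarith)]
  simp
  field_simp

lemma sgn_sq (x : ℝ) : (if x < 0 then (1 : ℝ) else -1) ^ 2 = 1 := by
  split_ifs <;> norm_num

lemma testfun (a k : ℝ) (ha : 0 < a) (hk : 0 < k) :
    ∃ u' : ℝ → ℝ, IsH1 (fun x => a * Real.exp (-k * |x|)) u' ∧
      ∫ x, (u' x) ^ 2 = a ^ 2 * k := by
  have e1 : Integrable (fun x : ℝ => (Real.exp (-k * |x|)) ^ 2) := by
    apply Integrable.of_integral_ne_zero
    rw [exp_integral k hk]; positivity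
  have hsq : ∀ x : ℝ, ((if x < 0 then (1 : ℝ) else -1) * (a * k * Real.exp (-k * |x|))) ^ 2
      = (a * k) ^ 2 * (Real.exp (-k * |x|)) ^ 2 := by
    intro x
    rw [mul_pow, sgn_sq, one_mul, mul_pow]
  refine ⟨fun x => (if x < 0 then (1 : ℝ) else -1) * (a * k * Real.exp (-k * |x|)),
    ⟨by fun_prop, ?_, ?_, ?_⟩, ?_⟩
  · simp_rw [mul_pow]
    exact e1.const_mul _
  · simp_rw [hsq]
    exact e1.const_mul _
  · intro p r hpr
    symm
    apply integral_eq_of_hasDerivAt_off_countable_of_le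
      (fun x => a * Real.exp (-k * |x|)) _ hpr (countable_singleton (0 : ℝ))
    · fun_prop
    · intro x hx
      have hx0 : x ≠ 0 := fun h => hx.2 (by simp [h])
      rcases lt_or_gt_of_ne hx0 with hn | hn
      · have h1 := (((hasDerivAt_abs_neg hn).const_mul (-k)).exp).const_mul a
        refine h1.congr_deriv ?_
        rw [if_pos hn]; ring
      · have h1 := (((hasDerivAt_abs_pos hn).const_mul (-k)).exp).const_mul a
        refine h1.congr_deriv ?_
        rw [if_neg (not_lt.2 hn.le)]; ring
    · have hg : IntervalIntegrable (fun x : ℝ => a * k * Real.exp (-k * |x|)) volume p r :=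
        Continuous.intervalIntegrable (by fun_prop) _ _
      refine hg.mono_fun ?_ ?_
      · apply Measurable.aestronglyMeasurable
        apply Measurable.mul
        · exact Measurable.ite measurableSet_Iio measurable_const measurable_const
        · fun_prop
      · refine Filter.Eventually.of_forall fun x => ?_
        dsimp only
        rw [norm_mul]
        split_ifs <;> simp
  · simp_rw [hsq]
    rw [integral_const_mul, exp_integral k hk]
    field_simp

theorem stmt0 (q μ : ℝ) (hq : 2 < q) (hq' : q < 4) (hμ : 0 < μ) :
    (∃ C : ℝ, ∀ u u' : ℝ → ℝ, IsH1 u u' → mass u = μ → C ≤ Dfun q u u') ∧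
    (∃ u₀ u₀' : ℝ → ℝ, IsH1 u₀ u₀' ∧ mass u₀ = μ ∧ Dfun q u₀ u₀' < 0) := by
  have hq0 : 0 < q := by linarith
  have h4q : 0 < 4 - q := by linarith
  constructor
  · set S : ℝ := (16 * μ) ^ (1 / (4 - q)) with hS
    have hSpos : 0 < S := by positivity
    have hSp : S ^ (4 - q) = 16 * μ := by
      rw [hS, ← Real.rpow_mul (by positivity), one_div_mul_cancel h4q.ne', Real.rpow_one]
    refine ⟨-S ^ q, fun u u' h hm => ?_⟩
    have hk := quartic_le μ hμ u u' h hm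
    have hT : 0 ≤ ∫ x, (u' x) ^ 2 := integral_nonneg fun t => sq_nonneg _
    unfold Dfun
    set T := ∫ x, (u' x) ^ 2
    set s := |u 0| with hs
    have hs0 : 0 ≤ s := abs_nonneg _
    have hs4 : (u 0) ^ 4 = s ^ 4 := by rw [hs, ← abs_pow, abs_of_nonneg (by positivity)]
    rw [hs4] at hk
    have hsq : 0 ≤ s ^ q := Real.rpow_nonneg hs0 _
    have h1q : (1 / q) * s ^ q ≤ s ^ q := by
      have : 1 / q ≤ 1 := by rw [div_le_one hq0]; linarith
      nlinarith
    rcases le_total s S with hle | hle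
    · have := Real.rpow_le_rpow hs0 hle hq0.le
      linarith
    · have hsp : 0 < s := hSpos.trans_le hle
      have h1 := Real.rpow_le_rpow hSpos.le hle h4q.le
      rw [hSp] at h1
      have h2 : s ^ (4 - q) * s ^ q = s ^ 4 := by
        rw [← Real.rpow_add hsp, sub_add_cancel]
        exact_mod_cast Real.rpow_natCast s 4
      have h3 : 16 * μ * s ^ q ≤ 16 * μ * (1 / 2 * T) := by nlinarith
      have h4 := le_of_mul_le_mul_left h3 (by positivity)
      have h5 : 0 ≤ S ^ q := by positivity
      linarith
  · set a : ℝ := (μ / q) ^ (1 / (4 - q)) with ha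
    have hapos : 0 < a := by positivity
    have hap : a ^ (4 - q) = μ / q := by
      rw [ha, ← Real.rpow_mul (by positivity), one_div_mul_cancel h4q.ne', Real.rpow_one]
    have hk : 0 < a ^ 2 / μ := by positivity
    obtain ⟨u', hu, hi⟩ := testfun a (a ^ 2 / μ) hapos hk
    refine ⟨_, u', hu, ?_, ?_⟩
    · unfold mass
      simp_rw [mul_pow]
      rw [integral_const_mul, exp_integral _ hk]
      field_simp
    · unfold Dfun
      rw [hi]
      have h2 : a ^ (4 - q) * a ^ q = a ^ 4 := by
        rw [← Real.rpow_add hapos, sub_add_cancel]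
        exact_mod_cast Real.rpow_natCast a 4
      have h3 : a ^ 2 * (a ^ 2 / μ) = (1 / q) * a ^ q := by
        have : a ^ 2 * (a ^ 2 / μ) = a ^ 4 / μ := by ring
        rw [this, ← h2, hap]
        field_simp
      rw [h3]
      simp only [abs_zero, mul_zero, Real.exp_zero, mul_one, abs_of_pos hapos]
      have : 0 < (1 / q) * a ^ q := by positivity
      linarith
end
end

section
/- Let 0 < μ ≤ 2. Then D_4(u) ≥ 0 for every u ∈ H¹(ℝ) with ‖u‖₂² = μ, and the infimum of D_4 on this constraint set equals 0: for every ε > 0 there exists u ∈ H¹(ℝ) with ‖u‖₂² = μ and D_4(u) < ε. -/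
open MeasureTheory Real Set

noncomputable section

/-- `u` as an indefinite integral, in both directions. -/
lemma h1_eq {u u' : ℝ → ℝ} (h : ∀ a b : ℝ, a ≤ b → u b - u a = ∫ t in a..b, u' t) (a : ℝ) :
    u = fun x => u a + ∫ t in a..x, u' t := by
  funext x
  rcases le_total a x with hx | hx
  · have := h a x hx
    linarith
  · have := h x a hx
    rw [intervalIntegral.integral_symm]
    linarith

/-- Local bound for the increments of `u ^ 2`. -/
lemma h1_sq_sub {u u' : ℝ → ℝ} (hu : IsH1 u u') (hl : LocallyIntegrable u' volume)
    {l : ℝ} (hl0 : 0 < l) {a b : ℝ} (hab : a ≤ b) :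
    |u b ^ 2 - u a ^ 2| ≤ ∫ x in a..b, (l * u x ^ 2 + l⁻¹ * u' x ^ 2) := by
  obtain ⟨hc, h2, h2', hi⟩ := hu
  have hii : IntervalIntegrable u' volume a b :=
    intervalIntegrable_iff.mpr <|
      (hl.integrableOn_isCompact isCompact_uIcc).mono_set uIoc_subset_uIcc
  have hac : AbsolutelyContinuousOnInterval u a b := by
    rw [h1_eq hi a]
    have h1 : AbsolutelyContinuousOnInterval (fun _ : ℝ => u a) a b :=
      contDiffOn_const.absolutelyContinuousOnInterval
    exact h1.add (hii.absolutelyContinuousOnInterval_intervalIntegral (by simp))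
  have hd : ∀ᵐ x, deriv u x = u' x := by
    filter_upwards [_root_.LocallyIntegrable.ae_hasDerivAt_integral hl] with x hx
    rw [h1_eq hi a]
    exact ((hx a).const_add (u a)).deriv
  have key := hac.integral_deriv_mul_eq_sub hac
  have e : u b ^ 2 - u a ^ 2 = ∫ x in a..b, deriv u x * u x + u x * deriv u x := by
    rw [key]; ring
  rw [e, ← Real.norm_eq_abs]
  refine intervalIntegral.norm_integral_le_of_norm_le hab ?_ ?_
  · filter_upwards [hd] with x hx _
    rw [hx, Real.norm_eq_abs]
    have hl1 : l * l⁻¹ = 1 := mul_inv_cancel₀ hl0.ne'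
    have hli : 0 < l⁻¹ := inv_pos.mpr hl0
    have i1 : 0 ≤ l⁻¹ * (l * u x - u' x) ^ 2 := by positivity
    have i2 : 0 ≤ l⁻¹ * (l * u x + u' x) ^ 2 := by positivity
    have e1 : l⁻¹ * (l * u x - u' x) ^ 2
        = (l * l⁻¹) * (l * u x ^ 2) - 2 * (l * l⁻¹) * (u x * u' x) + l⁻¹ * u' x ^ 2 := by ring
    have e2 : l⁻¹ * (l * u x + u' x) ^ 2
        = (l * l⁻¹) * (l * u x ^ 2) + 2 * (l * l⁻¹) * (u x * u' x) + l⁻¹ * u' x ^ 2 := by ring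
    rw [e1, hl1] at i1
    rw [e2, hl1] at i2
    rw [abs_le]
    constructor <;> linarith
  · exact ((h2.const_mul l).add (h2'.const_mul l⁻¹)).intervalIntegrable

/-- An integrable nonnegative function is small somewhere far to the right. -/
lemma exists_small_right {f : ℝ → ℝ} (hf : Integrable f) {d : ℝ} (hd : 0 < d) :
    ∃ b, 0 ≤ b ∧ f b < d := by
  by_contra! hcon
  have h1 : IntegrableOn (fun _ : ℝ => d) (Ici 0) := by
    refine (hf.integrableOn (s := Ici 0)).mono' aestronglyMeasurable_const ?_
    filter_upwards [ae_restrict_mem measurableSet_Ici] with x hx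
    rw [Real.norm_eq_abs, abs_of_pos hd]
    exact hcon x hx
  rw [integrableOn_const_iff] at h1
  simp [hd.ne'] at h1

lemma exists_small_left {f : ℝ → ℝ} (hf : Integrable f) {d : ℝ} (hd : 0 < d) :
    ∃ b, b ≤ 0 ∧ f b < d := by
  obtain ⟨b, hb, h⟩ := exists_small_right hf.comp_neg hd
  exact ⟨-b, by linarith, h⟩

/-- The trace inequality with a parameter. -/
lemma h1_trace {u u' : ℝ → ℝ} (hu : IsH1 u u') (hl : LocallyIntegrable u' volume)
    {l : ℝ} (hl0 : 0 < l) :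
    2 * u 0 ^ 2 ≤ l * (∫ x, u x ^ 2) + l⁻¹ * ∫ x, u' x ^ 2 := by
  have h2 := hu.2.1
  have h2' := hu.2.2.1
  have hI : Integrable (fun x => l * u x ^ 2 + l⁻¹ * u' x ^ 2) :=
    (h2.const_mul l).add (h2'.const_mul l⁻¹)
  refine le_of_forall_pos_le_add fun d hd => ?_
  obtain ⟨b, hb, hbd⟩ := exists_small_right h2 (half_pos hd)
  obtain ⟨a, ha, had⟩ := exists_small_left h2 (half_pos hd)
  have k1 := (abs_le.mp (h1_sq_sub hu hl hl0 ha)).2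
  have k2 := (abs_le.mp (h1_sq_sub hu hl hl0 hb)).1
  have k3 := intervalIntegral.integral_add_adjacent_intervals
    (hI.intervalIntegrable (a := a) (b := 0)) (hI.intervalIntegrable (a := 0) (b := b))
  have k4 : ∫ x in a..b, (l * u x ^ 2 + l⁻¹ * u' x ^ 2)
      ≤ ∫ x, (l * u x ^ 2 + l⁻¹ * u' x ^ 2) := by
    rw [intervalIntegral.integral_of_le (ha.trans hb)]
    refine setIntegral_le_integral hI (Filter.Eventually.of_forall fun x => ?_)
    show 0 ≤ l * u x ^ 2 + l⁻¹ * u' x ^ 2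
    positivity
  rw [integral_add (h2.const_mul l) (h2'.const_mul l⁻¹), integral_const_mul,
    integral_const_mul] at k4
  linarith

/-- If `u'` is not locally integrable then `u 0 = 0`. -/
lemma h1_bad {u u' : ℝ → ℝ} (hu : IsH1 u u') (hl : ¬ LocallyIntegrable u' volume) :
    u 0 = 0 := by
  obtain ⟨hc, h2, -, hi⟩ := hu
  simp only [LocallyIntegrable, not_forall] at hl
  obtain ⟨p, hp⟩ := hl
  have h1 : ∀ a b, a < p → p < b → u a = u b := by
    intro a b ha hb
    have := hi a b (ha.trans hb).le
    rw [intervalIntegral.integral_undef] at this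
    · linarith
    · intro hint
      apply hp
      rw [intervalIntegrable_iff_integrableOn_Ioc_of_le (ha.trans hb).le] at hint
      exact ⟨Ioc a b, Ioc_mem_nhds ha hb, hint⟩
  have h2l : ∀ a, a < p → u a = u (p + 1) := fun a ha => h1 a _ ha (by linarith)
  have h2r : ∀ b, p < b → u b = u (p + 1) := fun b hb =>
    (h1 (p - 1) b (by linarith) hb).symm.trans (h2l _ (by linarith))
  have hconst : u = fun _ => u (p + 1) := by
    refine Continuous.ext_on (s := {p}ᶜ) (dense_compl_singleton p) hc continuous_const ?_
    intro x hx
    rcases lt_or_gt_of_ne hx with h | h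
    · exact h2l x h
    · exact h2r x h
  by_contra h0
  have e : u 0 = u (p + 1) := congrFun hconst 0
  obtain ⟨b, -, hb⟩ := exists_small_right h2 (d := u 0 ^ 2) (by positivity)
  have e' : u b = u (p + 1) := congrFun hconst b
  simp only [e, e'] at hb
  exact lt_irrefl _ hb

lemma part_one (μ : ℝ) (hμ : 0 < μ) (hμ' : μ ≤ 2) (u u' : ℝ → ℝ) (hu : IsH1 u u')
    (hm : mass u = μ) : 0 ≤ Dfun 4 u u' := by
  have hG : 0 ≤ ∫ x, u' x ^ 2 := integral_nonneg fun x => sq_nonneg _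
  have e4 : |u 0| ^ (4 : ℝ) = (u 0 ^ 2) ^ 2 := by
    rw [show (4 : ℝ) = ((4 : ℕ) : ℝ) by norm_num, Real.rpow_natCast, ← sq_abs (u 0)]
    ring
  unfold Dfun
  rw [e4]
  rcases eq_or_ne (u 0) 0 with h0 | h0
  · rw [h0]; simpa using hG
  have hl : LocallyIntegrable u' volume := by
    by_contra h
    exact h0 (h1_bad hu h)
  have hs : 0 < u 0 ^ 2 := by positivity
  have k := h1_trace hu hl (l := u 0 ^ 2 / μ) (by positivity)
  change ∫ x, u x ^ 2 = μ at hm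
  rw [hm, div_mul_cancel₀ _ hμ.ne', inv_div] at k
  have k2 : u 0 ^ 2 ≤ μ * (∫ x, u' x ^ 2) / u 0 ^ 2 := by
    rw [div_mul_eq_mul_div] at k
    linarith
  rw [le_div_iff₀ hs] at k2
  have k3 : μ * (∫ x, u' x ^ 2) ≤ 2 * (∫ x, u' x ^ 2) := by gcongr
  linarith [sq (u 0 ^ 2)]

lemma sq_support {f : ℝ → ℝ} (hs : HasCompactSupport f) :
    HasCompactSupport (fun x => f x ^ 2) :=
  hs.comp_left (g := fun y : ℝ => y ^ 2) (by simp)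

lemma exists_bump : ∃ f : ℝ → ℝ, ContDiff ℝ 1 f ∧ HasCompactSupport f ∧ f 0 = 1 := by
  let f : ContDiffBump (0 : ℝ) := ⟨1, 2, one_pos, one_lt_two⟩
  exact ⟨f, f.contDiff, f.hasCompactSupport, f.one_of_mem_closedBall (by simp [f])⟩

lemma part_two (μ : ℝ) (hμ : 0 < μ) (ε : ℝ) (hε : 0 < ε) :
    ∃ u u' : ℝ → ℝ, IsH1 u u' ∧ mass u = μ ∧ Dfun 4 u u' < ε := by
  obtain ⟨f, hf1, hs, hf0⟩ := exists_bump
  have hfc : Continuous f := hf1.continuous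
  have hfc' : Continuous (deriv f) := hf1.continuous_deriv le_rfl
  have hs' : HasCompactSupport (deriv f) := hs.deriv
  have hI : Integrable (fun x => f x ^ 2) := by
    refine (hfc.pow 2).integrable_of_hasCompactSupport ?_
    exact sq_support hs
  have hI' : Integrable (fun x => deriv f x ^ 2) := by
    refine (hfc'.pow 2).integrable_of_hasCompactSupport ?_
    exact sq_support hs'
  have hM : 0 < ∫ x, f x ^ 2 := by
    refine (hfc.pow 2).integral_pos_of_hasCompactSupport_nonneg_nonzero ?_ (fun x => sq_nonneg _)
      (x := 0) ?_
    · exact sq_support hs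
    · simp [hf0]
  set M := ∫ x, f x ^ 2 with hMd
  set G := ∫ x, deriv f x ^ 2 with hGd
  have hG : 0 ≤ G := integral_nonneg fun x => sq_nonneg _
  obtain ⟨t, ht, htε⟩ : ∃ t : ℝ, 0 < t ∧ μ / M * G * t ^ 2 < ε := by
    have hK : 0 ≤ μ / M * G := by positivity
    have hc : Filter.Tendsto (fun t : ℝ => μ / M * G * t ^ 2) (nhdsWithin 0 (Ioi 0))
        (nhds (μ / M * G * 0 ^ 2)) :=
      ((by fun_prop : Continuous (fun t : ℝ => μ / M * G * t ^ 2)).tendsto 0).mono_left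
        nhdsWithin_le_nhds
    have := (hc.eventually_lt_const (u := ε) (by simpa using hε)).and self_mem_nhdsWithin
    obtain ⟨t, h1, h2⟩ := this.exists
    exact ⟨t, h2, h1⟩
  set A := √(μ / M * t) with hA
  have hA2 : A ^ 2 = μ / M * t := Real.sq_sqrt (by positivity)
  have hder : ∀ x, HasDerivAt (fun x => A * f (t * x)) (A * t * deriv f (t * x)) x := by
    intro x
    have h1 : HasDerivAt f (deriv f (t * x)) (t * x) :=
      ((hf1.differentiable one_ne_zero) _).hasDerivAt
    have h2 : HasDerivAt (fun x : ℝ => t * x) t x := by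
      simpa using (hasDerivAt_id x).const_mul t
    have h3 := (h1.comp x h2).const_mul A
    rw [show A * t * deriv f (t * x) = A * (deriv f (t * x) * t) by ring]
    exact h3
  have e1 : ∀ x, (A * f (t * x)) ^ 2 = A ^ 2 * (fun y => f y ^ 2) (t * x) := fun x => by
    simp only []; ring
  have e2 : ∀ x, (A * t * deriv f (t * x)) ^ 2
      = (A * t) ^ 2 * (fun y => deriv f y ^ 2) (t * x) := fun x => by
    simp only []; ring
  refine ⟨fun x => A * f (t * x), fun x => A * t * deriv f (t * x), ⟨?_, ?_, ?_, ?_⟩, ?_, ?_⟩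
  · fun_prop
  · simp only [e1]
    exact (hI.comp_mul_left' ht.ne').const_mul _
  · simp only [e2]
    exact (hI'.comp_mul_left' ht.ne').const_mul _
  · intro a b _
    rw [intervalIntegral.integral_eq_sub_of_hasDerivAt (fun x _ => hder x)]
    exact Continuous.intervalIntegrable (by fun_prop) _ _
  · unfold mass
    simp only [e1]
    rw [integral_const_mul, Measure.integral_comp_mul_left (fun y => f y ^ 2) t, hA2, ← hMd,
      abs_of_pos (inv_pos.mpr ht), smul_eq_mul]
    field_simp
  · unfold Dfun
    simp only [e2]
    rw [integral_const_mul, Measure.integral_comp_mul_left (fun y => deriv f y ^ 2) t, mul_pow,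
      hA2, ← hGd, abs_of_pos (inv_pos.mpr ht), smul_eq_mul]
    have e3 : μ / M * t * t ^ 2 * (t⁻¹ * G) = μ / M * G * t ^ 2 := by
      field_simp
    rw [e3]
    have h4 : 0 ≤ |A * f (t * 0)| ^ (4 : ℝ) := by positivity
    have h5 : 0 ≤ μ / M * G * t ^ 2 := by positivity
    linarith

theorem stmt2 (μ : ℝ) (hμ : 0 < μ) (hμ' : μ ≤ 2) :
    (∀ u u' : ℝ → ℝ, IsH1 u u' → mass u = μ → 0 ≤ Dfun 4 u u') ∧
    (∀ ε : ℝ, 0 < ε → ∃ u u' : ℝ → ℝ, IsH1 u u' ∧ mass u = μ ∧ Dfun 4 u u' < ε) := by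
  exact ⟨part_one μ hμ hμ', part_two μ hμ⟩
end
end

section
/- Let 0 < μ < 2. Then D_4(u) > 0 for every u ∈ H¹(ℝ) with ‖u‖₂² = μ; consequently, since the infimum of D_4 over this constraint set is 0, no ground state of D_4 at mass μ exists. -/
open MeasureTheory Real Set

noncomputable section

lemma h1_not_const {u : ℝ → ℝ} (hi : Integrable (fun x => (u x) ^ 2)) (hm : 0 < mass u)
    (hc : ∀ x, u x = u 0) : False := by
  have hf : (fun x => (u x) ^ 2) = fun _ : ℝ => (u 0) ^ 2 := by
    funext x; rw [hc x]
  unfold mass at hm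
  rw [hf] at hi hm
  rw [integrable_const_iff] at hi
  rcases hi with h | h
  · rw [h] at hm; simp at hm
  · have := h.measure_univ_lt_top
    simp at this

lemma h1_locInt {u u' : ℝ → ℝ} (h : IsH1 u u') (hm : 0 < mass u) :
    LocallyIntegrable u' := by
  obtain ⟨hcont, hi, hi', hftc⟩ := h
  by_contra hl
  unfold LocallyIntegrable at hl
  push Not at hl
  obtain ⟨c, hc⟩ := hl
  have key : ∀ a b, a < c → c < b → u a = u b := by
    intro a b ha hb
    have hn : ¬ IntervalIntegrable u' volume a b := by
      intro hI
      apply hc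
      refine ⟨Ioc a b, Ioc_mem_nhds ha hb, ?_⟩
      exact (intervalIntegrable_iff_integrableOn_Ioc_of_le (ha.trans hb).le).1 hI
    have := hftc a b (ha.trans hb).le
    rw [intervalIntegral.integral_undef hn] at this
    linarith
  have hoff : ∀ x, x ≠ c → u x = u (c + 1) := by
    intro x hx
    rcases lt_or_gt_of_ne hx with h | h
    · exact key x _ h (by linarith)
    · rw [← key (c - 1) x (by linarith) h]
      exact key _ _ (by linarith) (by linarith)
  have heq : u = fun _ => u (c + 1) := by
    refine Continuous.ext_on (s := {c}ᶜ) (dense_compl_singleton c) hcont continuous_const ?_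
    intro x hx
    exact hoff x hx
  apply h1_not_const hi hm
  intro x
  rw [congrFun heq x, congrFun heq 0]

lemma h1_diff {u u' : ℝ → ℝ} (h : IsH1 u u') (hl : LocallyIntegrable u') (s : ℝ) (hs : 0 < s)
    (a b : ℝ) (hab : a ≤ b) :
    |u b ^ 2 - u a ^ 2| ≤ ∫ x in a..b, (s * u x ^ 2 + s⁻¹ * u' x ^ 2) := by
  obtain ⟨hcont, hi, hi', hftc⟩ := h
  have hI : ∀ x y, IntervalIntegrable u' volume x y := fun x y =>
    intervalIntegrable_iff.mpr <|
      (hl.integrableOn_isCompact isCompact_uIcc).mono_set uIoc_subset_uIcc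
  have hu : u = fun x => u a + ∫ t in a..x, u' t := by
    funext x
    rcases le_total a x with hx | hx
    · rw [← hftc a x hx]; ring
    · rw [intervalIntegral.integral_symm, ← hftc x a hx]; ring
  have hac : AbsolutelyContinuousOnInterval u a b := by
    rw [hu]
    have h1 := (hI a b).absolutelyContinuousOnInterval_intervalIntegral (c := a) (by simp)
    have h2 : AbsolutelyContinuousOnInterval (fun _ : ℝ => u a) a b :=
      ((LipschitzWith.const (u a)).lipschitzOnWith (s := uIcc a b)).absolutelyContinuousOnInterval
    exact h2.add h1
  have hd : ∀ᵐ x, deriv u x = u' x := by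
    filter_upwards [LocallyIntegrable.ae_hasDerivAt_integral hl] with x hx
    have := (hx a).const_add (u a)
    rw [← hu] at this
    exact this.deriv
  have hprod := hac.integral_deriv_mul_eq_sub hac
  have hcongr : ∫ x in a..b, deriv u x * u x + u x * deriv u x = ∫ x in a..b, 2 * (u x * u' x) := by
    apply intervalIntegral.integral_congr_ae
    filter_upwards [hd] with x hx _
    rw [hx]; ring
  have hg : Integrable (fun x => s * u x ^ 2 + s⁻¹ * u' x ^ 2) :=
    (hi.const_mul s).add (hi'.const_mul s⁻¹)
  have e : u b ^ 2 - u a ^ 2 = ∫ x in a..b, 2 * (u x * u' x) := by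
    rw [← hcongr, hprod]; ring
  rw [e, ← Real.norm_eq_abs]
  apply intervalIntegral.norm_integral_le_of_norm_le hab _ hg.intervalIntegrable
  refine Filter.Eventually.of_forall fun x _ => ?_
  rw [Real.norm_eq_abs, abs_le]
  have e1 : s * u x ^ 2 + s⁻¹ * u' x ^ 2 - 2 * (u x * u' x) = s⁻¹ * (s * u x - u' x) ^ 2 := by
    field_simp; ring
  have e2 : s * u x ^ 2 + s⁻¹ * u' x ^ 2 + 2 * (u x * u' x) = s⁻¹ * (s * u x + u' x) ^ 2 := by
    field_simp; ring
  have p1 : 0 ≤ s⁻¹ * (s * u x - u' x) ^ 2 := by positivity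
  have p2 : 0 ≤ s⁻¹ * (s * u x + u' x) ^ 2 := by positivity
  constructor <;> linarith

lemma h1_small {u : ℝ → ℝ} (hi : Integrable (fun x => (u x) ^ 2)) (ε : ℝ) (hε : 0 < ε) :
    ∃ x : ℝ, 0 < x ∧ u x ^ 2 + u (-x) ^ 2 < ε := by
  by_contra hcon
  push Not at hcon
  have hs : Integrable (fun x => u x ^ 2 + u (-x) ^ 2) := hi.add hi.comp_neg
  have : IntegrableOn (fun _ : ℝ => ε) (Ioi 0) := by
    refine Integrable.mono' (hs.integrableOn (s := Ioi 0)) (by fun_prop) ?_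
    filter_upwards [ae_restrict_mem measurableSet_Ioi] with x hx
    rw [Real.norm_eq_abs, abs_of_pos hε]
    exact hcon x hx
  rw [integrableOn_const_iff] at this
  simp [hε.ne'] at this

lemma h1_bound {u u' : ℝ → ℝ} (h : IsH1 u u') (hm : 0 < mass u) (s : ℝ) (hs : 0 < s) :
    2 * u 0 ^ 2 ≤ s * mass u + s⁻¹ * ∫ x, u' x ^ 2 := by
  have hl := h1_locInt h hm
  have hi := h.2.1
  have hi' := h.2.2.1
  have hg : Integrable (fun x => s * u x ^ 2 + s⁻¹ * u' x ^ 2) :=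
    (hi.const_mul s).add (hi'.const_mul s⁻¹)
  have hgi : ∫ x, (s * u x ^ 2 + s⁻¹ * u' x ^ 2) = s * mass u + s⁻¹ * ∫ x, u' x ^ 2 := by
    rw [integral_add (hi.const_mul s) (hi'.const_mul s⁻¹), integral_const_mul, integral_const_mul]
    rfl
  apply le_of_forall_pos_le_add
  intro ε hε
  obtain ⟨x, hx, hxe⟩ := h1_small hi ε hε
  have h1 := (abs_le.1 (h1_diff h hl s hs 0 x hx.le)).1
  have h2 := (abs_le.1 (h1_diff h hl s hs (-x) 0 (by linarith))).2
  have h3 := intervalIntegral.integral_add_adjacent_intervals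
    (hg.intervalIntegrable (a := -x) (b := 0)) (hg.intervalIntegrable (a := 0) (b := x))
  have h4 : ∫ y in (-x)..x, (s * u y ^ 2 + s⁻¹ * u' y ^ 2) ≤
      ∫ y, (s * u y ^ 2 + s⁻¹ * u' y ^ 2) := by
    rw [intervalIntegral.integral_of_le (by linarith)]
    exact setIntegral_le_integral hg (Filter.Eventually.of_forall fun y => by
      show 0 ≤ s * u y ^ 2 + s⁻¹ * u' y ^ 2
      positivity)
  linarith

lemma h1_pos {u u' : ℝ → ℝ} (h : IsH1 u u') (hm : 0 < mass u) (hm2 : mass u < 2) :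
    0 < Dfun 4 u u' := by
  have hT : 0 < ∫ x, u' x ^ 2 := by
    have h0 : 0 ≤ ∫ x, u' x ^ 2 := integral_nonneg fun x => sq_nonneg _
    refine lt_of_le_of_ne h0 fun he => ?_
    have hae := (integral_eq_zero_iff_of_nonneg (fun x => sq_nonneg (u' x)) h.2.2.1).1 he.symm
    have hz : ∀ a b, ∫ t in a..b, u' t = 0 := by
      intro a b
      have : ∫ t in a..b, u' t = ∫ t in a..b, (0 : ℝ) := by
        apply intervalIntegral.integral_congr_ae
        filter_upwards [hae] with x hx _
        simpa using hx
      simpa using this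
    apply h1_not_const h.2.1 hm
    intro x
    rcases le_total 0 x with hx | hx
    · have := h.2.2.2 0 x hx
      rw [hz] at this; linarith
    · have := h.2.2.2 x 0 hx
      rw [hz] at this; linarith
  have hp : |u 0| ^ (4 : ℝ) = (u 0 ^ 2) ^ 2 := by
    have : |u 0| ^ (4 : ℝ) = |u 0| ^ 4 := by exact_mod_cast Real.rpow_natCast |u 0| 4
    rw [this, ← pow_mul, show 4 = 2 * 2 from rfl, pow_mul, sq_abs, ← pow_mul]
  unfold Dfun
  rw [hp]
  set T := ∫ x, u' x ^ 2
  have key : (u 0 ^ 2) ^ 2 ≤ mass u * T := by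
    rcases eq_or_ne (u 0) 0 with h0 | h0
    · rw [h0]; simp; positivity
    · have hw : 0 < u 0 ^ 2 := by positivity
      have hb := h1_bound h hm (u 0 ^ 2 / mass u) (by positivity)
      set w := u 0 ^ 2
      have e : w / mass u * mass u = w := by field_simp
      rw [e] at hb
      have : w ≤ (w / mass u)⁻¹ * T := by linarith
      rw [inv_div, div_mul_eq_mul_div, le_div_iff₀ hw] at this
      nlinarith
  nlinarith

theorem stmt3 (μ : ℝ) (hμ : 0 < μ) (hμ' : μ < 2) :
    (∀ u u' : ℝ → ℝ, IsH1 u u' → mass u = μ → 0 < Dfun 4 u u') ∧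
    ¬ (∃ u u' : ℝ → ℝ, IsH1 u u' ∧ mass u = μ ∧
        ∀ v v' : ℝ → ℝ, IsH1 v v' → mass v = μ → Dfun 4 u u' ≤ Dfun 4 v v') := by
  have hpos : ∀ u u' : ℝ → ℝ, IsH1 u u' → mass u = μ → 0 < Dfun 4 u u' :=
    fun u u' h hm => h1_pos h (hm ▸ hμ) (hm ▸ hμ')
  refine ⟨hpos, ?_⟩
  rintro ⟨u, u', h, hm, hmin⟩
  have hD := hpos u u' h hm
  obtain ⟨hcont, hi, hi', hftc⟩ := h
  have sq1 : (fun x => (1 / 2 * u (x / 4)) ^ 2) = fun x => 1 / 4 * (u (x / 4)) ^ 2 := by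
    funext x; ring
  have sq2 : (fun x => (1 / 8 * u' (x / 4)) ^ 2) = fun x => 1 / 64 * (u' (x / 4)) ^ 2 := by
    funext x; ring
  have i1 := Measure.integral_comp_div (fun x => u x ^ 2) 4
  have i2 := Measure.integral_comp_div (fun x => u' x ^ 2) 4
  have hv : IsH1 (fun x => 1 / 2 * u (x / 4)) (fun x => 1 / 8 * u' (x / 4)) := by
    refine ⟨by fun_prop, ?_, ?_, ?_⟩
    · rw [sq1]
      exact (Integrable.comp_div hi (by norm_num : (4 : ℝ) ≠ 0)).const_mul _
    · rw [sq2]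
      exact (Integrable.comp_div hi' (by norm_num : (4 : ℝ) ≠ 0)).const_mul _
    · intro a b hab
      rw [intervalIntegral.integral_const_mul,
        intervalIntegral.integral_comp_div u' (by norm_num : (4 : ℝ) ≠ 0),
        ← hftc (a / 4) (b / 4) (by linarith), smul_eq_mul]
      ring
  have hvm : mass (fun x => 1 / 2 * u (x / 4)) = μ := by
    rw [← hm]
    unfold mass
    rw [sq1, integral_const_mul, i1, smul_eq_mul, abs_of_pos (by norm_num)]
    ring
  have := hmin _ _ hv hvm
  have hs : Dfun 4 (fun x => 1 / 2 * u (x / 4)) (fun x => 1 / 8 * u' (x / 4)) =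
      1 / 16 * Dfun 4 u u' := by
    unfold Dfun
    rw [sq2, integral_const_mul, i2, smul_eq_mul, abs_of_pos (by norm_num : (0 : ℝ) < 4)]
    have e : ∀ y : ℝ, |y| ^ (4 : ℝ) = |y| ^ (4 : ℕ) := fun y => by
      exact_mod_cast Real.rpow_natCast |y| 4
    simp only [zero_div, abs_mul]
    rw [← abs_mul, e, e, abs_mul]
    rw [abs_of_pos (by norm_num : (0 : ℝ) < 1 / 2)]
    ring
  rw [hs] at this
  linarith
end
end

section
/- For every λ > 0 define χ_λ(x) := √(2λ)·e^{−λ|x|}. Then for every λ > 0 the function χ_λ lies in H¹(ℝ), has mass ‖χ_λ‖₂² = 2, satisfies D_4(χ_λ) = 0, and is a ground state of D_4 at mass 2. Conversely, every nonnegative ground state u of D_4 at mass 2 equals χ_λ for some λ > 0. -/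
open MeasureTheory Real Set

noncomputable section

open Filter Topology

/-- The sign function used for the weak derivative of the profile. -/
def sg (x : ℝ) : ℝ := if x < 0 then -1 else 1

lemma sg_sq (x : ℝ) : sg x ^ 2 = 1 := by unfold sg; split_ifs <;> norm_num

lemma sg_meas : Measurable sg :=
  Measurable.ite measurableSet_Iio measurable_const measurable_const

lemma locInt {u u' : ℝ → ℝ} (h : IsH1 u u') (hm : mass u = 2) : LocallyIntegrable u' := by
  by_contra hc
  unfold LocallyIntegrable at hc
  push Not at hc
  obtain ⟨x, hx⟩ := hc
  obtain ⟨hcont, hu2, -, hftc⟩ := h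
  have key : ∀ a b : ℝ, a < x → x < b → u b = u a := by
    intro a b ha hb
    have h1 : ¬ IntervalIntegrable u' volume a b := by
      intro h2
      apply hx
      rw [intervalIntegrable_iff_integrableOn_Ioc_of_le (ha.trans hb).le] at h2
      exact ⟨Ioc a b, Ioc_mem_nhds ha hb, h2⟩
    have h3 := hftc a b (ha.trans hb).le
    rw [intervalIntegral.integral_undef h1] at h3
    linarith
  have hconst : ∀ y, y ≠ x → u y = u (x + 1) := by
    intro y hy
    rcases lt_or_gt_of_ne hy with h1 | h1
    · exact (key y (x + 1) h1 (by linarith)).symm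
    · rw [key (x - 1) y (by linarith) h1, key (x - 1) (x + 1) (by linarith) (by linarith)]
  have hae : (fun y => u y ^ 2) =ᵐ[volume] fun _ => u (x + 1) ^ 2 := by
    have : ∀ᵐ y : ℝ, y ≠ x := by simp [ae_iff]
    filter_upwards [this] with y hy
    rw [hconst y hy]
  have hi := hu2.congr hae
  rw [integrable_const_iff] at hi
  have hz : u (x + 1) ^ 2 = 0 := by
    rcases hi with hi | hi
    · exact hi
    · exact absurd hi.measure_univ_lt_top (by simp)
  unfold mass at hm
  rw [integral_congr_ae hae, hz] at hm
  simp at hm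

lemma sq_ftc {u u' : ℝ → ℝ} (h : IsH1 u u') (hl : LocallyIntegrable u') (a b : ℝ) (hab : a ≤ b) :
    ∫ x in a..b, 2 * (u x * u' x) = u b ^ 2 - u a ^ 2 := by
  obtain ⟨hcont, hu2, -, hftc⟩ := h
  have hint : ∀ x y, IntervalIntegrable u' volume x y := fun x y =>
    intervalIntegrable_iff.mpr <|
      (hl.integrableOn_isCompact isCompact_uIcc).mono_set uIoc_subset_uIcc
  have hrep : ∀ x, u x = u a + ∫ t in a..x, u' t := by
    intro x
    rcases le_total a x with hx | hx
    · rw [← hftc a x hx]; ring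
    · rw [intervalIntegral.integral_symm, ← hftc x a hx]; ring
  have hrep' : u = fun x => u a + ∫ t in a..x, u' t := funext hrep
  have hac : AbsolutelyContinuousOnInterval u a b := by
    rw [hrep']
    have h1 := (hint a b).absolutelyContinuousOnInterval_intervalIntegral (c := a) (by simp)
    have h2 : AbsolutelyContinuousOnInterval (fun _ : ℝ => u a) a b :=
      (contDiff_const.contDiffOn).absolutelyContinuousOnInterval
    exact h2.fun_add h1
  have hd : ∀ᵐ x, deriv u x = u' x := by
    filter_upwards [_root_.LocallyIntegrable.ae_hasDerivAt_integral hl] with x hx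
    have := (hx a).const_add (u a)
    rw [← hrep'] at this
    exact this.deriv
  have h3 := hac.integral_deriv_mul_eq_sub hac
  rw [sq, sq, ← h3]
  apply intervalIntegral.integral_congr_ae
  filter_upwards [hd] with x hx _
  rw [hx]; ring

lemma memLps {u u' : ℝ → ℝ} (h : IsH1 u u') (hl : LocallyIntegrable u') :
    MemLp u 2 ∧ MemLp u' 2 := by
  obtain ⟨hcont, hu2, hu'2, hftc⟩ := h
  exact ⟨(memLp_two_iff_integrable_sq hcont.aestronglyMeasurable).2 hu2,
    (memLp_two_iff_integrable_sq hl.aestronglyMeasurable).2 hu'2⟩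

lemma int_mul {u u' : ℝ → ℝ} (h : IsH1 u u') (hl : LocallyIntegrable u') :
    Integrable (fun x => 2 * (u x * u' x)) := by
  obtain ⟨h1, h2⟩ := memLps h hl
  exact (h1.integrable_mul h2).const_mul 2

lemma half_int_pos {u u' : ℝ → ℝ} (h : IsH1 u u') (hl : LocallyIntegrable u') :
    ∫ x in Ioi 0, 2 * (u x * u' x) = - u 0 ^ 2 := by
  have hi := int_mul h hl
  have ht := intervalIntegral_tendsto_integral_Ioi (0 : ℝ) hi.integrableOn tendsto_id
  have ht2 : Tendsto (fun x => u x ^ 2) atTop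
      (𝓝 ((∫ x in Ioi 0, 2 * (u x * u' x)) + u 0 ^ 2)) := by
    refine (ht.add_const (u 0 ^ 2)).congr' ?_
    filter_upwards [eventually_ge_atTop 0] with x hx
    rw [id, sq_ftc h hl 0 x hx]; ring
  have := IntegrableAtFilter.eq_zero_of_tendsto (h.2.1.integrableAtFilter atTop) (by
    intro s hs
    rcases mem_atTop_sets.1 hs with ⟨b, hb⟩
    rw [← top_le_iff, ← volume_Ici (a := b)]
    exact measure_mono hb) ht2
  linarith

lemma half_int_neg {u u' : ℝ → ℝ} (h : IsH1 u u') (hl : LocallyIntegrable u') :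
    ∫ x in Iic 0, 2 * (u x * u' x) = u 0 ^ 2 := by
  have hi := int_mul h hl
  have ht := intervalIntegral_tendsto_integral_Iic (0 : ℝ) hi.integrableOn tendsto_id
  have ht2 : Tendsto (fun x => u x ^ 2) atBot
      (𝓝 (u 0 ^ 2 - ∫ x in Iic 0, 2 * (u x * u' x))) := by
    refine (ht.const_sub (u 0 ^ 2)).congr' ?_
    filter_upwards [eventually_le_atBot 0] with x hx
    rw [id, sq_ftc h hl x 0 hx]; ring
  have := IntegrableAtFilter.eq_zero_of_tendsto (h.2.1.integrableAtFilter atBot) (by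
    intro s hs
    rcases mem_atBot_sets.1 hs with ⟨b, hb⟩
    rw [← top_le_iff, ← volume_Iic (a := b)]
    exact measure_mono hb) ht2
  linarith

lemma sg_int {u u' : ℝ → ℝ} (h : IsH1 u u') (hl : LocallyIntegrable u') :
    Integrable (fun x => sg x * (2 * (u x * u' x))) :=
  (int_mul h hl).bdd_mul (c := 1) sg_meas.aestronglyMeasurable
    (Eventually.of_forall fun x => by unfold sg; split_ifs <;> simp)

lemma sg_integral {u u' : ℝ → ℝ} (h : IsH1 u u') (hl : LocallyIntegrable u') :
    ∫ x, sg x * (2 * (u x * u' x)) = - 2 * u 0 ^ 2 := by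
  have hi := sg_int h hl
  rw [← intervalIntegral.integral_Iic_add_Ioi (b := 0) hi.integrableOn hi.integrableOn]
  have h1 : ∫ x in Iic 0, sg x * (2 * (u x * u' x)) = - ∫ x in Iic 0, 2 * (u x * u' x) := by
    rw [← integral_neg, integral_Iic_eq_integral_Iio, integral_Iic_eq_integral_Iio]
    apply setIntegral_congr_fun measurableSet_Iio
    intro x hx
    simp only [sg, if_pos (mem_Iio.1 hx)]; ring
  have h2 : ∫ x in Ioi 0, sg x * (2 * (u x * u' x)) = ∫ x in Ioi 0, 2 * (u x * u' x) := by
    apply setIntegral_congr_fun measurableSet_Ioi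
    intro x hx
    simp only [sg, if_neg (not_lt.2 (mem_Ioi.1 hx).le)]; ring
  rw [h1, h2, half_int_pos h hl, half_int_neg h hl]; ring

lemma sq_expand {u u' : ℝ → ℝ} (h : IsH1 u u') (hm : mass u = 2) :
    Integrable (fun x => (u' x + u 0 ^ 2 / 2 * (sg x * u x)) ^ 2) ∧
    ∫ x, (u' x + u 0 ^ 2 / 2 * (sg x * u x)) ^ 2 = 2 * Dfun 4 u u' := by
  have hl := locInt h hm
  have h1 := h.2.1
  have h2 := h.2.2.1
  have h3 := sg_int h hl
  set c := u 0 ^ 2 / 2 with hc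
  have he : (fun x => (u' x + c * (sg x * u x)) ^ 2) =
      fun x => u' x ^ 2 + c ^ 2 * u x ^ 2 + c * (sg x * (2 * (u x * u' x))) := by
    funext x
    linear_combination (c ^ 2 * u x ^ 2) * sg_sq x
  rw [he]
  refine ⟨(h2.add (h1.const_mul _)).add (h3.const_mul _), ?_⟩
  have h4 : Integrable (fun x => u' x ^ 2 + c ^ 2 * u x ^ 2) := h2.add (h1.const_mul _)
  rw [integral_add h4 (h3.const_mul _),
    integral_add h2 (h1.const_mul _), integral_const_mul, integral_const_mul, sg_integral h hl]
  have hm' : ∫ x, u x ^ 2 = 2 := hm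
  have hp : |u 0| ^ (4 : ℝ) = u 0 ^ 4 := by
    rw [show (4 : ℝ) = ((4 : ℕ) : ℝ) by norm_num, rpow_natCast]
    exact Even.pow_abs (by decide) _
  rw [hm', Dfun, hp, hc]; ring

lemma D_nonneg {u u' : ℝ → ℝ} (h : IsH1 u u') (hm : mass u = 2) : 0 ≤ Dfun 4 u u' := by
  have h1 := (sq_expand h hm).2
  have h2 : 0 ≤ ∫ x, (u' x + u 0 ^ 2 / 2 * (sg x * u x)) ^ 2 :=
    integral_nonneg fun x => sq_nonneg _
  linarith

lemma ode {u : ℝ → ℝ} (hu : Continuous u) (c : ℝ)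
    (h : ∀ x, 0 ≤ x → u x - u 0 = ∫ t in (0 : ℝ)..x, -c * u t) (x : ℝ) (hx : 0 ≤ x) :
    u x = u 0 * exp (-(c * x)) := by
  have hd : ∀ y, HasDerivAt (fun z => ∫ t in (0 : ℝ)..z, -c * u t) (-c * u y) y := fun y =>
    ((continuous_const.mul hu).integral_hasStrictDerivAt 0 y).hasDerivAt
  have hcont : ContinuousOn
      (fun z => (u 0 + ∫ t in (0 : ℝ)..z, -c * u t) * exp (c * z)) (Icc 0 x) := by
    intro y _
    have h1 : ContinuousAt (fun z => exp (c * z)) y := by fun_prop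
    exact (((hd y).const_add (u 0)).continuousAt.mul h1).continuousWithinAt
  have hconst := constant_of_has_deriv_right_zero hcont (by
    intro y hy
    have h1 : HasDerivAt (fun z => exp (c * z)) (exp (c * y) * (c * 1)) y :=
      ((hasDerivAt_id y).const_mul c).exp
    have h2 := ((hd y).const_add (u 0)).mul h1
    refine (HasDerivAt.congr_deriv h2 ?_).hasDerivWithinAt
    rw [← h y hy.1]; ring) x ⟨hx, le_rfl⟩
  simp only [← h x hx] at hconst
  simp at hconst
  rw [exp_neg, ← hconst, mul_assoc, mul_inv_cancel₀ (exp_pos _).ne', mul_one]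

lemma chi_sq {lam : ℝ} (hl : 0 < lam) (x : ℝ) :
    (Real.sqrt (2 * lam) * Real.exp (-(lam * |x|))) ^ 2 =
      2 * lam * Real.exp (-(2 * lam) * |x|) := by
  rw [mul_pow, Real.sq_sqrt (by positivity), ← Real.exp_nat_mul]
  congr 2; push_cast; ring

lemma exp_abs {a : ℝ} (ha : 0 < a) :
    Integrable (fun x : ℝ => Real.exp (-a * |x|)) ∧ ∫ x : ℝ, Real.exp (-a * |x|) = 2 / a := by
  have e1 : EqOn (fun x : ℝ => Real.exp (a * x)) (fun x : ℝ => Real.exp (-a * |x|)) (Iic 0) := by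
    intro x hx
    simp only [abs_of_nonpos (mem_Iic.1 hx)]; ring_nf
  have e2 : EqOn (fun x : ℝ => Real.exp (-a * x)) (fun x : ℝ => Real.exp (-a * |x|)) (Ioi 0) := by
    intro x hx
    simp only [abs_of_pos (mem_Ioi.1 hx)]
  have i1 := (integrableOn_exp_mul_Iic ha 0).congr_fun e1 measurableSet_Iic
  have i2 := (integrableOn_exp_mul_Ioi (neg_lt_zero.2 ha) 0).congr_fun e2 measurableSet_Ioi
  refine ⟨?_, ?_⟩
  · rw [← integrableOn_univ, ← Iic_union_Ioi (a := (0 : ℝ))]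
    exact i1.union i2
  · rw [← intervalIntegral.integral_Iic_add_Ioi i1 i2,
      ← setIntegral_congr_fun measurableSet_Iic e1, ← setIntegral_congr_fun measurableSet_Ioi e2,
      integral_exp_mul_Iic ha, integral_exp_mul_Ioi (neg_lt_zero.2 ha)]
    simp
    field_simp
    norm_num

lemma chi_all {lam : ℝ} (hl : 0 < lam) : ∃ χ' : ℝ → ℝ,
      IsH1 (fun x => Real.sqrt (2 * lam) * Real.exp (-(lam * |x|))) χ' ∧
      mass (fun x => Real.sqrt (2 * lam) * Real.exp (-(lam * |x|))) = 2 ∧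
      Dfun 4 (fun x => Real.sqrt (2 * lam) * Real.exp (-(lam * |x|))) χ' = 0 := by
  obtain ⟨hi, hv⟩ := exp_abs (a := 2 * lam) (by positivity)
  set χ : ℝ → ℝ := fun x => Real.sqrt (2 * lam) * Real.exp (-(lam * |x|)) with hχ
  have hsq : (fun x => χ x ^ 2) = fun x => 2 * lam * Real.exp (-(2 * lam) * |x|) :=
    funext (chi_sq hl)
  have hcont : Continuous χ := by rw [hχ]; fun_prop
  have hi2 : Integrable (fun x => χ x ^ 2) := by rw [hsq]; exact hi.const_mul _
  have hmass : mass χ = 2 := by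
    unfold mass
    rw [hsq, integral_const_mul, hv]; field_simp
  have hd2 : (fun x => (-lam * (sg x * χ x)) ^ 2) = fun x => lam ^ 2 * χ x ^ 2 := by
    funext x
    linear_combination (lam ^ 2 * χ x ^ 2) * sg_sq x
  refine ⟨fun x => -lam * (sg x * χ x), ⟨hcont, hi2, ?_, ?_⟩, hmass, ?_⟩
  · show Integrable (fun x => (-lam * (sg x * χ x)) ^ 2)
    rw [hd2]; exact hi2.const_mul _
  · intro a b hab
    symm
    apply integral_eq_of_hasDerivAt_off_countable_of_le χ _ hab (countable_singleton (0 : ℝ))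
      hcont.continuousOn
    · intro x hx
      have hx0 : x ≠ 0 := hx.2
      rcases lt_or_gt_of_ne hx0 with h0 | h0
      · have h1 := (((hasDerivAt_abs_neg h0).const_mul lam).neg.exp).const_mul (√(2 * lam))
        refine h1.congr_deriv ?_
        simp only [sg, if_pos h0, hχ, Pi.neg_apply]; ring
      · have h1 := (((hasDerivAt_abs_pos h0).const_mul lam).neg.exp).const_mul (√(2 * lam))
        refine h1.congr_deriv ?_
        simp only [sg, if_neg (not_lt.2 h0.le), hχ, Pi.neg_apply]; ring
    · refine IntervalIntegrable.const_mul ?_ _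
      rw [intervalIntegrable_iff]
      exact Integrable.bdd_mul (c := 1) (intervalIntegrable_iff.1 (hcont.intervalIntegrable a b))
        sg_meas.aestronglyMeasurable
        (Eventually.of_forall fun x => by unfold sg; split_ifs <;> simp)
  · unfold Dfun
    have hm' : ∫ x, χ x ^ 2 = 2 := hmass
    have hp : |χ 0| ^ (4 : ℝ) = (2 * lam) ^ 2 := by
      rw [show (4 : ℝ) = ((4 : ℕ) : ℝ) by norm_num, rpow_natCast, Even.pow_abs (by decide)]
      have h0 : χ 0 ^ 2 = 2 * lam := by rw [chi_sq hl]; simp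
      rw [← h0]; ring
    rw [hd2, integral_const_mul, hm', hp]; ring

lemma uniq {u u' : ℝ → ℝ} (h : IsH1 u u') (hpos : ∀ x, 0 ≤ u x) (hm : mass u = 2)
    (hD : Dfun 4 u u' = 0) :
    ∃ lam : ℝ, 0 < lam ∧ u = fun x => Real.sqrt (2 * lam) * Real.exp (-(lam * |x|)) := by
  obtain ⟨hi, hI⟩ := sq_expand h hm
  rw [hD, mul_zero, integral_eq_zero_iff_of_nonneg (fun x => sq_nonneg _) hi] at hI
  obtain ⟨hcont, -, -, hftc⟩ := h
  set c := u 0 ^ 2 / 2 with hc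
  have hu' : ∀ᵐ x, u' x = -c * (sg x * u x) := by
    filter_upwards [hI] with x hx
    have : u' x + c * (sg x * u x) = 0 := by simpa using hx
    linarith
  have hp : ∀ x, 0 ≤ x → u x = u 0 * exp (-(c * x)) := by
    apply ode hcont
    intro x hx
    rw [hftc 0 x hx]
    apply intervalIntegral.integral_congr_ae
    filter_upwards [hu'] with y hy hy2
    rw [uIoc_of_le hx] at hy2
    rw [hy, sg, if_neg (not_lt.2 hy2.1.le)]; ring
  have hn : ∀ x, 0 ≤ x → u (-x) = u (-0) * exp (-(c * x)) := by
    apply ode (u := fun x => u (-x)) (hcont.comp continuous_neg)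
    intro x hx
    have h1 : ∫ t in (0 : ℝ)..x, -c * u (-t) = ∫ t in (-x)..(-0), -c * u t :=
      intervalIntegral.integral_comp_neg (fun t => -c * u t)
    have h2 : ∫ t in (-x)..0, u' t = ∫ t in (-x)..0, -(-c * u t) := by
      apply intervalIntegral.integral_congr_ae
      have h0 : ∀ᵐ y : ℝ, y ≠ 0 := by simp [ae_iff]
      filter_upwards [hu', h0] with y hy hy0 hy2
      rw [uIoc_of_le (by linarith)] at hy2
      rw [hy, sg, if_pos (lt_of_le_of_ne hy2.2 hy0)]; ring
    have h3 := hftc (-x) 0 (by linarith)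
    rw [h2, intervalIntegral.integral_neg] at h3
    rw [h1, neg_zero]
    linarith
  have hall : ∀ x, u x = u 0 * exp (-(c * |x|)) := by
    intro x
    rcases le_total 0 x with hx | hx
    · rw [abs_of_nonneg hx]; exact hp x hx
    · rw [abs_of_nonpos hx]
      have := hn (-x) (by linarith)
      rwa [neg_neg, neg_zero] at this
  have h0 : u 0 ≠ 0 := by
    intro h0
    have : ∀ x, u x = 0 := fun x => by rw [hall x, h0, zero_mul]
    simp [mass, this] at hm
  have hcpos : 0 < c := by positivity
  refine ⟨c, hcpos, funext fun x => ?_⟩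
  have hs : √(2 * c) = u 0 := by
    rw [hc, mul_div_cancel₀ _ (two_ne_zero), Real.sqrt_sq (hpos 0)]
  rw [hs]; exact hall x

theorem stmt4 :
    (∀ lam : ℝ, 0 < lam → ∃ χ' : ℝ → ℝ,
      IsH1 (fun x => Real.sqrt (2 * lam) * Real.exp (-(lam * |x|))) χ' ∧
      mass (fun x => Real.sqrt (2 * lam) * Real.exp (-(lam * |x|))) = 2 ∧
      Dfun 4 (fun x => Real.sqrt (2 * lam) * Real.exp (-(lam * |x|))) χ' = 0 ∧
      (∀ v v' : ℝ → ℝ, IsH1 v v' → mass v = 2 →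
        Dfun 4 (fun x => Real.sqrt (2 * lam) * Real.exp (-(lam * |x|))) χ' ≤ Dfun 4 v v')) ∧
    (∀ u u' : ℝ → ℝ, IsH1 u u' → (∀ x, 0 ≤ u x) → mass u = 2 →
      (∀ v v' : ℝ → ℝ, IsH1 v v' → mass v = 2 → Dfun 4 u u' ≤ Dfun 4 v v') →
      ∃ lam : ℝ, 0 < lam ∧ u = fun x => Real.sqrt (2 * lam) * Real.exp (-(lam * |x|))) := by
  have hfirst : ∀ lam : ℝ, 0 < lam → ∃ χ' : ℝ → ℝ,
      IsH1 (fun x => Real.sqrt (2 * lam) * Real.exp (-(lam * |x|))) χ' ∧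
      mass (fun x => Real.sqrt (2 * lam) * Real.exp (-(lam * |x|))) = 2 ∧
      Dfun 4 (fun x => Real.sqrt (2 * lam) * Real.exp (-(lam * |x|))) χ' = 0 := fun _ hl => chi_all hl
  refine ⟨?_, ?_⟩
  · intro lam hl
    obtain ⟨χ', h1, h2, h3⟩ := hfirst lam hl
    refine ⟨χ', h1, h2, h3, fun v v' hv hm => ?_⟩
    rw [h3]
    exact D_nonneg hv hm
  · intro u u' hu hpos hm hmin
    obtain ⟨χ', h1, h2, h3⟩ := hfirst 1 one_pos
    have h4 := hmin _ χ' h1 h2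
    rw [h3] at h4
    exact uniq hu hpos hm (le_antisymm h4 (D_nonneg hu hm))
end
end

section
/- Let μ > 2. Then D_4 is unbounded below on the mass-constraint set: for every M ∈ ℝ there exists u ∈ H¹(ℝ) with ‖u‖₂² = μ and D_4(u) < M. -/
open MeasureTheory Real Set

noncomputable section

lemma exp_abs_integrable (c : ℝ) (hc : 0 < c) :
    Integrable (fun x : ℝ => Real.exp (-c * |x|)) := by
  rw [← integrableOn_univ, ← Set.Iic_union_Ioi (a := (0 : ℝ))]
  apply IntegrableOn.union
  · refine (integrableOn_exp_mul_Iic hc 0).congr_fun ?_ measurableSet_Iic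
    intro x hx
    simp only [abs_of_nonpos (show x ≤ 0 from hx)]
    ring_nf
  · refine (integrableOn_exp_mul_Ioi (neg_lt_zero.mpr hc) 0).congr_fun ?_ measurableSet_Ioi
    intro x hx
    simp only [abs_of_pos (show 0 < x from hx)]

lemma exp_abs_integral (c : ℝ) (hc : 0 < c) :
    ∫ x : ℝ, Real.exp (-c * |x|) = 2 / c := by
  rw [integral_comp_abs (f := fun x => Real.exp (-c * x)),
    integral_exp_mul_Ioi (neg_lt_zero.mpr hc) 0]
  simp
  field_simp

theorem stmt5 (μ : ℝ) (hμ : 2 < μ) :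
    ∀ M : ℝ, ∃ u u' : ℝ → ℝ, IsH1 u u' ∧ mass u = μ ∧ Dfun 4 u u' < M := by
  intro M
  have hc0 : 0 < μ * (μ - 2) / 4 := by
    have : 0 < μ - 2 := by linarith
    positivity
  set c := μ * (μ - 2) / 4 with hc
  set k := 1 + |M| / c with hk
  have hk1 : 1 ≤ k := by
    have : 0 ≤ |M| / c := by positivity
    linarith
  have hk0 : 0 < k := by linarith
  have hkc : k * c = c + |M| := by rw [hk]; field_simp
  have hA : 0 ≤ k * μ := by nlinarith
  set A := √(k * μ) with hAdef
  have hA2 : A ^ 2 = k * μ := Real.sq_sqrt hA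
  set u : ℝ → ℝ := fun x => A * Real.exp (-k * |x|) with hu
  set v : ℝ → ℝ := fun x => if x ≤ 0 then k * u x else -k * u x with hv
  have husq : ∀ x, u x ^ 2 = k * μ * Real.exp (-(2 * k) * |x|) := by
    intro x
    simp only [hu]
    rw [mul_pow, hA2, ← Real.exp_nat_mul]
    congr 2
    push_cast
    ring
  have hvsq : ∀ x, v x ^ 2 = k ^ 2 * u x ^ 2 := by
    intro x
    simp only [hv]
    split_ifs <;> ring
  have hcont : Continuous u := by simp only [hu]; fun_prop
  have hint : Integrable (fun x => u x ^ 2) := by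
    simp_rw [husq]
    exact (exp_abs_integrable (2 * k) (by linarith)).const_mul _
  have hmass : ∫ x, u x ^ 2 = μ := by
    simp_rw [husq]
    rw [integral_const_mul, exp_abs_integral _ (by linarith)]
    field_simp
  have hvmeas : Measurable v := by
    have := hcont.measurable
    exact Measurable.ite measurableSet_Iic (this.const_mul k) (this.const_mul (-k))
  have huint : Integrable u := (exp_abs_integrable k hk0).const_mul A
  have hvint : Integrable v := by
    refine (huint.const_mul k).mono hvmeas.aestronglyMeasurable (Filter.Eventually.of_forall ?_)
    intro x
    simp only [hv]
    split_ifs <;> simp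
  refine ⟨u, v, ⟨hcont, hint, ?_, ?_⟩, hmass, ?_⟩
  · simp_rw [hvsq]
    exact hint.const_mul _
  · intro a b hab
    symm
    refine MeasureTheory.integral_eq_of_hasDerivAt_off_countable_of_le u v hab
      (Set.countable_singleton (0 : ℝ)) hcont.continuousOn ?_ hvint.intervalIntegrable
    rintro x ⟨-, hx⟩
    have hx : x ≠ 0 := hx
    rcases lt_or_gt_of_ne hx with h | h
    · have h1 := (((hasDerivAt_abs_neg h).const_mul (-k)).exp).const_mul A
      refine h1.congr_deriv ?_
      simp only [hv, hu, if_pos h.le]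
      ring
    · have h1 := (((hasDerivAt_abs_pos h).const_mul (-k)).exp).const_mul A
      refine h1.congr_deriv ?_
      simp only [hv, hu, if_neg (not_le.mpr h)]
      ring
  · have h0 : |u 0| ^ (4 : ℝ) = (k * μ) ^ 2 := by
      have h4 : (4 : ℝ) = ((4 : ℕ) : ℝ) := by norm_num
      rw [h4, Real.rpow_natCast, ← hA2]
      simp [hu, abs_of_nonneg (Real.sqrt_nonneg (k * μ)), hAdef]
      ring
    unfold Dfun
    simp_rw [hvsq]
    rw [integral_const_mul, hmass, h0]
    have e : 1 / 2 * (k ^ 2 * μ) - 1 / 4 * (k * μ) ^ 2 = - (k * (k * c)) := by rw [hc]; ring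
    rw [e, hkc]
    have := neg_abs_le M
    nlinarith [abs_nonneg M]
end
end

section
/- Let 2 < p < 6, 2 < q < 4 and μ > 0. Then there exists a ground state of F_{p,q} at mass μ, i.e. a function u ∈ H¹(ℝ) with ‖u‖₂² = μ such that F_{p,q}(u) ≤ F_{p,q}(v) for every v ∈ H¹(ℝ) with ‖v‖₂² = μ. -/
open MeasureTheory Real Set

noncomputable section

open Filter Topology

/-- `H¹` with measurable derivative. -/
def Good (u u' : ℝ → ℝ) : Prop :=
  Continuous u ∧ MemLp u 2 ∧ MemLp u' 2 ∧ ∀ a b : ℝ, a ≤ b → u b - u a = ∫ t in a..b, u' t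

theorem Good.isH1 {u u' : ℝ → ℝ} (h : Good u u') : IsH1 u u' :=
  ⟨h.1, h.2.1.integrable_sq, h.2.2.1.integrable_sq, h.2.2.2⟩

theorem good_of_isH1 {u u' : ℝ → ℝ} (h : IsH1 u u') (hm : mass u ≠ 0) : Good u u' := by
  obtain ⟨hc, hu, hu', hd⟩ := h
  have hmeas : AEStronglyMeasurable u' := by
    by_contra hcon
    have hnl : ¬ LocallyIntegrable u' := fun h => hcon h.aestronglyMeasurable
    unfold LocallyIntegrable at hnl
    push Not at hnl
    obtain ⟨x, hx⟩ := hnl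
    have key : ∀ c d, c < x → x < d → u c = u d := by
      intro c d h1 h2
      have hni : ¬ IntervalIntegrable u' volume c d := by
        intro hi
        apply hx
        refine ⟨Ioo c d, Ioo_mem_nhds h1 h2, ?_⟩
        rw [intervalIntegrable_iff_integrableOn_Ioc_of_le (h1.trans h2).le] at hi
        exact hi.mono_set Ioo_subset_Ioc_self
      have := hd c d (h1.trans h2).le
      rw [intervalIntegral.integral_undef hni] at this
      linarith
    have hae : (fun y => u y ^ 2) =ᵐ[volume] fun _ => u (x+1) ^ 2 := by
      have : ∀ᵐ y ∂(volume : Measure ℝ), y ≠ x := by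
        simp [ae_iff]
      filter_upwards [this] with y hy
      rcases lt_or_gt_of_ne hy with h | h
      · rw [key y (x+1) h (by linarith)]
      · rw [← key (x-1) y (by linarith) h, ← key (x-1) (x+1) (by linarith) (by linarith)]
    have h0 := hu.congr hae
    rw [integrable_const_iff] at h0
    have h1 : u (x+1)^2 = 0 := by
      rcases h0 with h | h
      · exact h
      · exact absurd h (by simp [isFiniteMeasure_iff])
    apply hm
    unfold mass
    rw [integral_congr_ae hae, h1]; simp
  exact ⟨hc, (memLp_two_iff_integrable_sq hc.aestronglyMeasurable).2 hu,
    (memLp_two_iff_integrable_sq hmeas).2 hu', hd⟩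

theorem Good.intInt {u u' : ℝ → ℝ} (h : Good u u') (a b : ℝ) : IntervalIntegrable u' volume a b :=
  ((h.2.2.1.locallyIntegrable (by norm_num)).integrableOn_isCompact isCompact_uIcc).intervalIntegrable

theorem cs_interval {f : ℝ → ℝ} (hf : MemLp f 2) {a b : ℝ} (hab : a ≤ b) :
    (∫ t in a..b, f t)^2 ≤ (b - a) * ∫ t, f t ^ 2 := by
  rcases hab.eq_or_lt with rfl | hlt
  · simp
  have hi : IntervalIntegrable f volume a b :=
    ((hf.locallyIntegrable (by norm_num)).integrableOn_isCompact isCompact_uIcc).intervalIntegrable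
  have hi2 : IntervalIntegrable (fun t => f t ^2) volume a b :=
    hf.integrable_sq.intervalIntegrable
  set J := ∫ t in a..b, f t with hJ
  have hpos : 0 < b - a := by linarith
  have h0 : 0 ≤ ∫ t in a..b, (f t - J / (b-a))^2 :=
    intervalIntegral.integral_nonneg hab (fun t _ => sq_nonneg _)
  have h1 : ∫ t in a..b, (f t - J / (b-a))^2
      = (∫ t in a..b, f t ^2) - J^2/(b-a) := by
    have : ∀ t, (f t - J / (b-a))^2 = f t ^2 - (2 * (J/(b-a))) * f t + (J/(b-a))^2 := by
      intro t; ring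
    simp_rw [this]
    rw [intervalIntegral.integral_add (hi2.sub (hi.const_mul _)) (by simp),
      intervalIntegral.integral_sub hi2 (hi.const_mul _), intervalIntegral.integral_const_mul]
    simp only [intervalIntegral.integral_const, smul_eq_mul]
    rw [← hJ]
    field_simp
    ring
  have h2 : (∫ t in a..b, f t ^2) ≤ ∫ t, f t ^ 2 := by
    rw [intervalIntegral.integral_of_le hab]
    exact setIntegral_le_integral hf.integrable_sq (Eventually.of_forall fun t => sq_nonneg _)
  rw [h1] at h0
  have : J^2/(b-a) ≤ ∫ t, f t ^ 2 := by linarith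
  rw [div_le_iff₀ hpos] at this
  linarith

theorem Good.sup_bound {u u' : ℝ → ℝ} (h : Good u u') {L : ℝ} (hL : 0 < L) (x : ℝ) :
    u x ^ 2 ≤ 2 / L * mass u + 2 * L * ∫ t, u' t ^ 2 := by
  set D := ∫ t, u' t ^ 2 with hD
  have hD0 : 0 ≤ D := integral_nonneg fun t => sq_nonneg _
  have hy : ∀ y ∈ Icc x (x+L), u x ^ 2 ≤ 2 * u y ^ 2 + 2 * L * D := by
    intro y hy
    have h1 := cs_interval h.2.2.1 hy.1
    rw [← h.2.2.2 x y hy.1, ← hD] at h1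
    have h2 : (y - x) * D ≤ L * D := mul_le_mul_of_nonneg_right (by linarith [hy.2]) hD0
    nlinarith [sq_nonneg (u x - 2 * u y)]
  have hi2 : Integrable (fun t => u t ^2) := h.2.1.integrable_sq
  have h3 : ∫ y in x..(x+L), u x ^ 2 ≤ ∫ y in x..(x+L), (2 * u y ^ 2 + 2 * L * D) := by
    apply intervalIntegral.integral_mono_on (by linarith) (by simp) _ hy
    exact (hi2.intervalIntegrable.const_mul _).add (by simp)
  rw [intervalIntegral.integral_add (hi2.intervalIntegrable.const_mul _) (by simp),
    intervalIntegral.integral_const_mul] at h3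
  simp only [intervalIntegral.integral_const, smul_eq_mul] at h3
  have h4 : (∫ t in x..(x+L), u t ^2) ≤ mass u := by
    rw [intervalIntegral.integral_of_le (by linarith)]
    exact setIntegral_le_integral hi2 (Eventually.of_forall fun t => sq_nonneg _)
  have h5 : u x ^ 2 * L ≤ 2 * mass u + 2 * L * D * L := by nlinarith
  have h6 : (2 / L * mass u + 2 * L * D) * L = 2 * mass u + 2 * L * D * L := by field_simp
  rw [← h6] at h5
  exact le_of_mul_le_mul_right h5 hL

theorem Good.bdd {u u' : ℝ → ℝ} (h : Good u u') : ∃ K, 0 < K ∧ ∀ x, |u x| ≤ K := by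
  refine ⟨Real.sqrt (2 / 1 * mass u + 2 * 1 * ∫ t, u' t ^ 2) + 1, by positivity, fun x => ?_⟩
  have := Real.abs_le_sqrt (h.sup_bound one_pos x)
  linarith

theorem rpow_le_sq {c p t : ℝ} (hp : 2 < p) (h : |t| ≤ c) : |t| ^ p ≤ c ^ (p-2) * t ^ 2 := by
  rcases eq_or_ne t 0 with rfl | h0
  · simp [Real.zero_rpow (by linarith : p ≠ 0)]
  have : |t| ^ p = |t|^(p-2) * t^2 := by
    rw [← sq_abs t, ← Real.rpow_natCast |t| 2, ← Real.rpow_add (abs_pos.2 h0)]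
    norm_num
  rw [this]
  gcongr

theorem Good.int_rpow {u u' : ℝ → ℝ} (h : Good u u') {p : ℝ} (hp : 2 < p) :
    Integrable (fun x => |u x| ^ p) := by
  obtain ⟨K, hK, hb⟩ := h.bdd
  refine (h.2.1.integrable_sq.const_mul (K^(p-2))).mono' ?_ ?_
  · exact (h.1.abs.rpow_const (fun _ => Or.inr (by linarith))).aestronglyMeasurable
  · refine Eventually.of_forall fun x => ?_
    rw [Real.norm_of_nonneg (by positivity)]
    exact rpow_le_sq hp (hb x)

theorem Good.int_rpow_le {u u' : ℝ → ℝ} (h : Good u u') {p c : ℝ} (hp : 2 < p)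
    (hc : ∀ x, |u x| ≤ c) : ∫ x, |u x| ^ p ≤ c ^ (p-2) * mass u := by
  unfold mass
  rw [← integral_const_mul]
  exact integral_mono (h.int_rpow hp) (h.2.1.integrable_sq.const_mul _)
    fun x => rpow_le_sq hp (hc x)

theorem mass_nonneg (u : ℝ → ℝ) : 0 ≤ mass u := integral_nonneg fun x => sq_nonneg _

theorem sublin {A α : ℝ} (hA : 0 < A) (hα : α < 1) (hα0 : 0 < α) :
    ∃ C : ℝ, ∀ t : ℝ, 1 ≤ t → A * t ^ α ≤ t / 8 + C := by
  set T := (8*A)^(1/(1-α)) with hT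
  have hT0 : 0 < T := by positivity
  refine ⟨A * T ^ α, fun t ht => ?_⟩
  rcases le_total t T with h | h
  · have : A * t^α ≤ A * T^α := by gcongr
    linarith
  · have h1 : (8*A) ≤ t ^ (1-α) := by
      have : T ^ (1-α) = 8*A := by
        rw [hT, ← Real.rpow_mul (by positivity), one_div, inv_mul_cancel₀ (by linarith), Real.rpow_one]
      rw [← this]
      exact Real.rpow_le_rpow hT0.le h (by linarith)
    have h2 : t ^ (1-α) * t^α = t := by
      rw [← Real.rpow_add (by linarith)]; simp
    have h3 : 8 * A * t^α ≤ t := by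
      calc 8 * A * t^α ≤ t ^ (1-α) * t^α := by gcongr
        _ = t := h2
    have : 0 ≤ A * T ^ α := by positivity
    linarith

theorem coercive {p q μ : ℝ} (hp : 2 < p) (hp' : p < 6) (hq : 2 < q) (hq' : q < 4)
    (hμ : 0 < μ) : ∃ C : ℝ, ∀ u u' : ℝ → ℝ, Good u u' → mass u = μ →
      (∫ x, u' x ^ 2) / 4 - C ≤ Ffun p q u u' := by
  set K := 2 * (μ + 1) with hK
  have hK0 : 0 < K := by positivity
  obtain ⟨C1, h1⟩ := sublin (A := 1/p * (K ^ ((p-2)/2) * μ)) (α := (p-2)/4) (by positivity)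
    (by linarith) (by linarith)
  obtain ⟨C2, h2⟩ := sublin (A := 1/q * (K ^ (q/2))) (α := q/4) (by positivity)
    (by linarith) (by linarith)
  refine ⟨C1 + C2 + 1/4, fun u u' hg hm => ?_⟩
  set D := ∫ x, u' x ^ 2 with hD
  have hD0 : 0 ≤ D := integral_nonneg fun t => sq_nonneg _
  have hb : ∀ x, |u x| ≤ (K * (D+1)^(1/2:ℝ))^(1/2:ℝ) := by
    intro x
    have := hg.sup_bound (L := (D+1)^(-(1/2):ℝ)) (by positivity) x
    rw [← hD, hm, Real.rpow_neg (by positivity)] at this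
    rw [← Real.sqrt_eq_rpow, ← Real.sqrt_eq_rpow] at *
    apply Real.abs_le_sqrt
    refine this.trans ?_
    have hs : 0 < √(D+1) := by positivity
    have hss : √(D+1) * √(D+1) = D+1 := Real.mul_self_sqrt (by positivity)
    have e1 : (√(D+1))⁻¹ * D ≤ √(D+1) := by
      rw [inv_mul_le_iff₀ hs]; linarith
    rw [hK, div_inv_eq_mul]
    nlinarith
  have e : (K * (D+1)^(1/2:ℝ))^(1/2:ℝ) = K^(1/2:ℝ) * (D+1)^(1/4:ℝ) := by
    rw [Real.mul_rpow (by positivity) (by positivity), ← Real.rpow_mul (by positivity)]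
    norm_num
  rw [e] at hb
  have hp1 := hg.int_rpow_le hp hb
  have hq1 : |u 0| ^ q ≤ (K^(1/2:ℝ) * (D+1)^(1/4:ℝ)) ^ q :=
    Real.rpow_le_rpow (abs_nonneg _) (hb 0) (by linarith)
  rw [Real.mul_rpow (by positivity) (by positivity), ← Real.rpow_mul (by positivity),
    ← Real.rpow_mul (by positivity)] at hp1 hq1
  rw [hm] at hp1
  rw [show 1/2*(p-2) = (p-2)/2 by ring, show 1/4*(p-2) = (p-2)/4 by ring] at hp1
  rw [show 1/2*q = q/2 by ring, show 1/4*q = q/4 by ring] at hq1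
  have k1 := h1 (D+1) (by linarith)
  have k2 := h2 (D+1) (by linarith)
  have m1 : 1/p * ∫ x, |u x| ^ p ≤ 1/p * (K ^ ((p-2)/2) * (D+1)^((p-2)/4) * μ) := by gcongr
  have m2 : 1/q * |u 0| ^ q ≤ 1/q * (K ^ (q/2) * (D+1)^(q/4)) := by gcongr
  have n1 : 1/p * (K ^ ((p-2)/2) * (D+1)^((p-2)/4) * μ) = 1/p * (K ^ ((p-2)/2) * μ) * (D+1)^((p-2)/4) := by ring
  have n2 : 1/q * (K ^ (q/2) * (D+1)^(q/4)) = 1/q * K ^ (q/2) * (D+1)^(q/4) := by ring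
  unfold Ffun
  rw [← hD]
  linarith

theorem Good.translate {u u' : ℝ → ℝ} (h : Good u u') (s : ℝ) :
    Good (fun x => u (x + s)) (fun x => u' (x + s)) := by
  refine ⟨h.1.comp (by fun_prop), ?_, ?_, ?_⟩
  · exact h.2.1.comp_measurePreserving (measurePreserving_add_right volume s)
  · exact h.2.2.1.comp_measurePreserving (measurePreserving_add_right volume s)
  · intro a b hab
    rw [intervalIntegral.integral_comp_add_right, h.2.2.2 _ _ (by linarith)]

theorem Good.smul {u u' : ℝ → ℝ} (h : Good u u') (s : ℝ) :
    Good (fun x => s * u x) (fun x => s * u' x) := by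
  refine ⟨h.1.const_mul s, h.2.1.const_mul s, h.2.2.1.const_mul s, ?_⟩
  intro a b hab
  rw [intervalIntegral.integral_const_mul, ← h.2.2.2 _ _ hab]; ring

theorem Good.sub {u u' v v' : ℝ → ℝ} (h : Good u u') (k : Good v v') :
    Good (fun x => u x - v x) (fun x => u' x - v' x) := by
  refine ⟨h.1.sub k.1, h.2.1.sub k.2.1, h.2.2.1.sub k.2.2.1, ?_⟩
  intro a b hab
  rw [intervalIntegral.integral_sub (h.intInt _ _) (k.intInt _ _), ← h.2.2.2 _ _ hab,
    ← k.2.2.2 _ _ hab]; ring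

theorem mass_translate (u : ℝ → ℝ) (s : ℝ) : mass (fun x => u (x + s)) = mass u :=
  integral_add_right_eq_self (fun x => u x ^ 2) s

theorem F_translate (p q : ℝ) (u u' : ℝ → ℝ) (s : ℝ) :
    Ffun p q (fun x => u (x + s)) (fun x => u' (x + s)) =
      Ffun p q u u' + (1/q) * |u 0|^q - (1/q) * |u s|^q := by
  unfold Ffun
  rw [integral_add_right_eq_self (fun x => u' x ^ 2) s,
    integral_add_right_eq_self (fun x => |u x| ^ p) s]
  simp only [zero_add]
  ring

theorem mass_smul (u : ℝ → ℝ) (s : ℝ) : mass (fun x => s * u x) = s^2 * mass u := by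
  unfold mass
  simp_rw [mul_pow]
  rw [integral_const_mul]

theorem F_smul (p q : ℝ) (u u' : ℝ → ℝ) {s : ℝ} (hs : 0 ≤ s) :
    Ffun p q (fun x => s * u x) (fun x => s * u' x) =
      s^2 * ((1/2) * ∫ x, u' x ^ 2) - s^p * ((1/p) * ∫ x, |u x|^p) - s^q * ((1/q) * |u 0|^q) := by
  unfold Ffun
  simp_rw [mul_pow, abs_mul, abs_of_nonneg hs, Real.mul_rpow hs (abs_nonneg _)]
  rw [integral_const_mul, integral_const_mul]
  ring

theorem Good.int_pos {u u' : ℝ → ℝ} (h : Good u u') {p : ℝ} (hp : 2 < p) (hm : mass u ≠ 0) :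
    0 < ∫ x, |u x| ^ p := by
  rw [integral_pos_iff_support_of_nonneg (fun x => by positivity) (h.int_rpow hp)]
  have : (Function.support fun x => |u x| ^ p) = Function.support u := by
    ext x
    simp [Real.rpow_eq_zero_iff_of_nonneg (abs_nonneg (u x)), (by linarith : p ≠ 0)]
  rw [this]
  refine (h.1.isOpen_support).measure_pos volume ?_
  by_contra hne
  rw [Set.not_nonempty_iff_eq_empty, Function.support_eq_empty_iff] at hne
  apply hm
  simp [mass, hne]

/-- Scaling: ground-state energy bounds at smaller mass. -/
theorem scaling {p q μ I : ℝ} (hp : 2 < p) (hq : 2 < q) (hμ : 0 < μ)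
    (hI : ∀ v v' : ℝ → ℝ, Good v v' → mass v = μ → I ≤ Ffun p q v v')
    {u u' : ℝ → ℝ} (h : Good u u') (hm0 : 0 < mass u) (hm : mass u < μ) :
    mass u / μ * I < Ffun p q u u' := by
  set m := mass u with hmdef
  set s := Real.sqrt (μ / m) with hs
  have hs2 : s^2 = μ / m := Real.sq_sqrt (by positivity)
  have hs1 : 1 < s := by
    rw [hs, Real.lt_sqrt (by norm_num), one_pow, lt_div_iff₀ hm0]; linarith
  have key := hI _ _ (h.smul s) (by rw [mass_smul, ← hmdef, hs2]; field_simp)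
  rw [F_smul _ _ _ _ (by linarith)] at key
  have hP : 0 < (1/p) * ∫ x, |u x|^p := mul_pos (by positivity) (h.int_pos hp hm0.ne')
  have hQ : 0 ≤ (1/q) * |u 0|^q := by positivity
  have e1 : s^2 < s^p := by
    rw [← Real.rpow_natCast]; exact Real.rpow_lt_rpow_of_exponent_lt hs1 (by exact_mod_cast hp)
  have e2 : s^2 < s^q := by
    rw [← Real.rpow_natCast]; exact Real.rpow_lt_rpow_of_exponent_lt hs1 (by exact_mod_cast hq)
  have h1 : I < s^2 * Ffun p q u u' := by
    unfold Ffun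
    nlinarith
  rw [hs2] at h1
  have : m / μ * I < m / μ * (μ / m * Ffun p q u u') := by gcongr
  calc m / μ * I < m / μ * (μ / m * Ffun p q u u') := this
    _ = _ := by field_simp

theorem scaling_le {p q μ I : ℝ} (hp : 2 < p) (hq : 2 < q) (hμ : 0 < μ)
    (hI : ∀ v v' : ℝ → ℝ, Good v v' → mass v = μ → I ≤ Ffun p q v v')
    {u u' : ℝ → ℝ} (h : Good u u') (hm : mass u ≤ μ) :
    mass u / μ * I ≤ Ffun p q u u' := by
  rcases hm.eq_or_lt with h1 | h1
  · rw [h1, div_self hμ.ne', one_mul]; exact hI _ _ h h1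
  rcases (mass_nonneg u).eq_or_lt with h0 | h0
  · have hu : ∀ x, u x = 0 := by
      have hz : (fun x => u x ^ 2) =ᵐ[volume] fun _ => 0 :=
        (integral_eq_zero_iff_of_nonneg (fun x => sq_nonneg _) h.2.1.integrable_sq).1 h0.symm
      have := Continuous.ae_eq_iff_eq volume (h.1.pow 2) continuous_const |>.1 hz
      intro x
      simpa using congrFun this x
    rw [← h0, zero_div, zero_mul]
    unfold Ffun
    simp only [hu, abs_zero, Real.zero_rpow (by linarith : p ≠ 0), Real.zero_rpow (by linarith : q ≠ 0)]
    simp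
    exact integral_nonneg fun x => sq_nonneg _
  · exact (scaling hp hq hμ hI h h0 h1).le

theorem gauss_good : Good (fun x => Real.exp (-x^2)) (fun x => -2 * x * Real.exp (-x^2)) := by
  refine ⟨by fun_prop, ?_, ?_, ?_⟩
  · rw [memLp_two_iff_integrable_sq (by fun_prop)]
    have := integrable_exp_neg_mul_sq (b := 2) (by norm_num)
    refine this.congr (Eventually.of_forall fun x => ?_)
    simp only
    rw [← Real.exp_nat_mul]; congr 1; push_cast; ring
  · rw [memLp_two_iff_integrable_sq (by fun_prop)]
    have := (integrable_rpow_mul_exp_neg_mul_sq (b := 2) (by norm_num) (s := 2) (by norm_num)).const_mul 4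
    refine this.congr (Eventually.of_forall fun x => ?_)
    simp only
    rw [mul_pow, ← Real.exp_nat_mul]
    norm_num
    ring_nf
  · intro a b _
    symm
    apply intervalIntegral.integral_eq_sub_of_hasDerivAt
    · intro x _
      have h2 : HasDerivAt (fun y : ℝ => -y^2) (-(2 * x)) x := by
        simpa using (hasDerivAt_pow 2 x).fun_neg
      exact h2.exp.congr_deriv (by ring)
    · exact (by fun_prop : Continuous fun x : ℝ => -2 * x * Real.exp (-x^2)).intervalIntegrable _ _

theorem exists_neg {p q μ : ℝ} (hp : 2 < p) (hq : 2 < q) (hq' : q < 4) (hμ : 0 < μ) :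
    ∃ v v' : ℝ → ℝ, Good v v' ∧ mass v = μ ∧ Ffun p q v v' < 0 := by
  set g : ℝ → ℝ := fun x => Real.exp (-x^2) with hg
  set g' : ℝ → ℝ := fun x => -2 * x * Real.exp (-x^2) with hg'
  have hG : Good g g' := gauss_good
  set M := mass g with hM
  set D := ∫ x, g' x ^ 2 with hD
  have hM0 : 0 < M := by
    rw [hM]; unfold mass
    rw [integral_pos_iff_support_of_nonneg (fun x => by positivity) hG.2.1.integrable_sq]
    have : (Function.support fun x => g x ^ 2) = univ := by
      ext x; simp [hg, Real.exp_ne_zero]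
    rw [this]; simp
  have hD0 : 0 ≤ D := integral_nonneg fun t => sq_nonneg _
  -- choose the scale
  have hlim : Tendsto (fun s : ℝ => s ^ (2 - q/2) * (1/2 * (μ * D / M))) (𝓝[>] 0) (𝓝 0) := by
    have h1 : Tendsto (fun s : ℝ => s ^ (2 - q/2)) (𝓝[>] 0) (𝓝 0) := by
      have := (Real.continuousAt_rpow_const 0 (2 - q/2) (Or.inr (by linarith))).tendsto
      rw [Real.zero_rpow (by linarith)] at this
      exact this.mono_left nhdsWithin_le_nhds
    simpa using h1.mul_const (1/2 * (μ * D / M))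
  have hB : 0 < 1/q * (μ/M)^(q/2) := by positivity
  obtain ⟨s, hs1, hs0⟩ := ((hlim.eventually_lt_const hB).and self_mem_nhdsWithin).exists
  have hs0 : 0 < s := hs0
  set A := Real.sqrt (μ * s / M) with hA
  have hA2 : A^2 = μ * s / M := Real.sq_sqrt (by positivity)
  have hA0 : 0 ≤ A := Real.sqrt_nonneg _
  refine ⟨fun x => A * g (s * x), fun x => A * (s * g' (s * x)), ?_, ?_, ?_⟩
  · apply Good.smul (u := fun x => g (s * x)) (u' := fun x => s * g' (s*x))
    refine ⟨hG.1.comp (by fun_prop), ?_, ?_, ?_⟩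
    · rw [memLp_two_iff_integrable_sq (by fun_prop)]
      exact hG.2.1.integrable_sq.comp_mul_left' hs0.ne'
    · rw [memLp_two_iff_integrable_sq (by fun_prop)]
      simp_rw [mul_pow]
      exact (hG.2.2.1.integrable_sq.comp_mul_left' hs0.ne').const_mul _
    · intro a b hab
      rw [intervalIntegral.integral_const_mul, intervalIntegral.mul_integral_comp_mul_left]
      exact hG.2.2.2 _ _ (by gcongr)
  · rw [mass_smul, hA2]
    unfold mass
    rw [Measure.integral_comp_mul_left (fun x => g x ^ 2) s, abs_of_pos (by positivity)]
    change μ * s / M * (s⁻¹ • M) = μ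
    rw [smul_eq_mul]; field_simp
  · have hP : 0 ≤ (1/p) * ∫ x, |A * g (s * x)|^p :=
      mul_nonneg (by positivity) (integral_nonneg fun x => by positivity)
    have hDD : ∫ x, (A * (s * g' (s * x)))^2 = μ * D / M * s^2 := by
      simp_rw [mul_pow]
      rw [integral_const_mul, integral_const_mul,
        Measure.integral_comp_mul_left (fun x => g' x ^ 2) s, abs_of_pos (by positivity), hA2]
      change μ * s / M * (s^2 * (s⁻¹ • D)) = _
      rw [smul_eq_mul]; field_simp
    have h0 : |A * g (s * 0)|^q = (μ/M)^(q/2) * s^(q/2) := by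
      have : A * g (s * 0) = A := by simp [hg]
      rw [this, abs_of_nonneg hA0, hA, Real.sqrt_eq_rpow, ← Real.rpow_mul (by positivity),
        ← Real.mul_rpow (by positivity) (by positivity)]
      congr 1 <;> ring
    unfold Ffun
    rw [hDD, h0]
    have hss : s^2 = s^(2-q/2) * s^(q/2) := by
      rw [← Real.rpow_add hs0, ← Real.rpow_natCast]; congr 1; push_cast; ring
    have h3 := mul_lt_mul_of_pos_right hs1 (Real.rpow_pos_of_pos hs0 (q/2))
    rw [hss]
    nlinarith

/-- Brezis–Lieb type lemma. -/
theorem brezis_lieb {f : ℕ → ℝ → ℝ} {w : ℕ → ℝ → ℝ} {u : ℝ → ℝ} {B : ℝ}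
    (hf : ∀ n, Continuous (f n)) (hfi : ∀ n, Integrable (f n))
    (hw : ∀ n, MemLp (w n) 2) (hwc : ∀ n, Continuous (w n)) (hu : MemLp u 2)
    (hB : ∀ n, mass (w n) ≤ B)
    (hlim : ∀ x, Tendsto (fun n => f n x) atTop (𝓝 0))
    (hbd : ∀ ε > 0, ∃ C, ∀ n x, |f n x| ≤ ε * w n x ^ 2 + C * u x ^ 2) :
    Tendsto (fun n => ∫ x, f n x) atTop (𝓝 0) := by
  rw [Metric.tendsto_atTop]
  intro δ hδ
  have hB0 : 0 ≤ B := (mass_nonneg _).trans (hB 0)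
  obtain ⟨C, hC⟩ := hbd (δ / (2 * (B + 1))) (by positivity)
  set ε := δ / (2 * (B + 1)) with hε
  have hε0 : 0 < ε := by positivity
  have hεB : ε * B < δ / 2 := by
    rw [hε, div_mul_eq_mul_div, div_lt_div_iff₀ (by positivity) (by norm_num)]
    nlinarith
  set g : ℕ → ℝ → ℝ := fun n x => max (|f n x| - ε * w n x ^ 2) 0 with hg
  have hgc : ∀ n, Continuous (g n) := fun n =>
    ((hf n).abs.sub (continuous_const.mul ((hwc n).pow 2))).max continuous_const
  have hgb : ∀ n x, ‖g n x‖ ≤ |C| * u x ^ 2 := by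
    intro n x
    rw [Real.norm_of_nonneg (le_max_right _ _)]
    apply max_le _ (by positivity)
    have := hC n x
    have h2 : C * u x ^ 2 ≤ |C| * u x ^ 2 := mul_le_mul_of_nonneg_right (le_abs_self _) (sq_nonneg _)
    linarith
  have hg0 : Tendsto (fun n => ∫ x, g n x) atTop (𝓝 (∫ _ : ℝ, (0:ℝ))) := by
    apply tendsto_integral_of_dominated_convergence (fun x => |C| * u x ^ 2)
    · exact fun n => (hgc n).aestronglyMeasurable
    · exact hu.integrable_sq.const_mul _
    · exact fun n => Eventually.of_forall (hgb n)
    · refine Eventually.of_forall fun x => ?_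
      have h1 : Tendsto (fun n => |f n x|) atTop (𝓝 0) := by simpa using (hlim x).abs
      refine squeeze_zero (fun n => le_max_right _ _) (fun n => ?_) h1
      apply max_le _ (abs_nonneg _)
      have : 0 ≤ ε * w n x ^ 2 := by positivity
      linarith
  rw [integral_zero, Metric.tendsto_atTop] at hg0
  obtain ⟨N, hN⟩ := hg0 (δ/2) (by linarith)
  refine ⟨N, fun n hn => ?_⟩
  have h1 := hN n hn
  rw [Real.dist_eq, sub_zero] at h1 ⊢
  have hgi : Integrable (g n) := (hu.integrable_sq.const_mul _).mono' (hgc n).aestronglyMeasurable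
    (Eventually.of_forall (hgb n))
  have h2 : ∫ x, |f n x| ≤ ∫ x, (g n x + ε * w n x ^ 2) := by
    apply integral_mono (hfi n).abs (hgi.add ((hw n).integrable_sq.const_mul _))
    intro x
    have : |f n x| - ε * w n x ^ 2 ≤ g n x := le_max_left _ _
    change |f n x| ≤ g n x + ε * w n x ^ 2
    linarith
  rw [integral_add hgi ((hw n).integrable_sq.const_mul _), integral_const_mul] at h2
  have h3 : ε * ∫ x, w n x ^ 2 ≤ ε * B := mul_le_mul_of_nonneg_left (hB n) hε0.le
  have h4 := abs_integral_le_integral_abs (f := f n) (μ := volume)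
  have h5 := le_abs_self (∫ x, g n x)
  linarith

theorem rpow_diff {p M x y : ℝ} (hp : 2 < p) (hx : 0 ≤ x) (hy : 0 ≤ y) (hxM : x ≤ M) (hyM : y ≤ M) :
    |y ^ p - x ^ p| ≤ p * M ^ (p-1) * |y - x| := by
  have := Convex.norm_image_sub_le_of_norm_hasDerivWithin_le (f := fun t : ℝ => t ^ p)
    (f' := fun t => p * t ^ (p-1)) (s := Icc 0 M) (C := p * M ^ (p-1)) (x := x) (y := y)
    (fun t _ => (Real.hasDerivAt_rpow_const (Or.inr (by linarith))).hasDerivWithinAt)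
    (fun t ht => by
      rw [Real.norm_of_nonneg (mul_nonneg (by linarith) (Real.rpow_nonneg ht.1 _))]
      have := Real.rpow_le_rpow ht.1 ht.2 (by linarith : 0 ≤ p-1)
      gcongr) (convex_Icc _ _) ⟨hx, hxM⟩ ⟨hy, hyM⟩
  simpa using this

theorem bl_pointwise {p K : ℝ} (hp : 2 < p) (hK : 0 < K) {ε : ℝ} (hε : 0 < ε) :
    ∃ C, ∀ w b : ℝ, |w| ≤ K → |b| ≤ K →
      |(|w + b| ^ p - |w| ^ p - |b| ^ p)| ≤ ε * w ^ 2 + C * b ^ 2 := by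
  set c := p * (2*K)^(p-2) with hc
  have hc0 : 0 < c := by positivity
  refine ⟨c^2 / (4*ε) + c + K^(p-2), fun w b hw hb => ?_⟩
  have h1 : |(|w+b|^p - |w|^p)| ≤ c * (|w| + |b|) * |b| := by
    have h := rpow_diff (M := |w|+|b|) hp (abs_nonneg w) (abs_nonneg (w+b))
      (by linarith [abs_nonneg b]) (abs_add_le _ _)
    have h' : |(|w+b| - |w|)| ≤ |b| := by simpa using abs_abs_sub_abs_le_abs_sub (w+b) w
    have hM : (|w|+|b|)^(p-1) ≤ (2*K)^(p-2) * (|w|+|b|) := by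
      rcases (by positivity : 0 ≤ |w|+|b|).eq_or_lt with h0 | h0
      · rw [← h0, Real.zero_rpow (by linarith)]; simp
      · rw [show p - 1 = (p-2)+1 by ring, Real.rpow_add_one h0.ne']
        gcongr
        linarith
    calc _ ≤ _ := h
      _ ≤ p * ((2*K)^(p-2) * (|w|+|b|)) * |b| := by gcongr
      _ = _ := by rw [hc]; ring
  have h2 := rpow_le_sq hp hb
  have h3 : 0 ≤ |b|^p := by positivity
  have h4 : |(|w + b| ^ p - |w| ^ p - |b| ^ p)| ≤ |(|w+b|^p - |w|^p)| + |b|^p := by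
    have := abs_sub (|w + b| ^ p - |w| ^ p) (|b|^p)
    rwa [abs_of_nonneg h3] at this
  have h5 : c * |w| * |b| ≤ ε * w^2 + c^2/(4*ε) * b^2 := by
    rw [← sq_abs w, ← sq_abs b]
    have e : ε * |w|^2 + c^2/(4*ε) * |b|^2 - c * |w| * |b| = ε * (|w| - c/(2*ε) * |b|)^2 := by
      field_simp; ring
    have : 0 ≤ ε * (|w| - c/(2*ε) * |b|)^2 := by positivity
    linarith
  have h6 : |b| * |b| = b^2 := by rw [← sq, sq_abs]
  nlinarith

theorem weak_compact (f : ℕ → ℝ → ℝ) (hf : ∀ n, MemLp (f n) 2) {B : ℝ}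
    (hB : ∀ n, ∫ x, f n x ^ 2 ≤ B) :
    ∃ (g : ℝ → ℝ) (φ : ℕ → ℕ), MemLp g 2 ∧ StrictMono φ ∧ ∀ h : ℝ → ℝ, MemLp h 2 →
      Tendsto (fun n => ∫ x, f (φ n) x * h x) atTop (𝓝 (∫ x, g x * h x)) := by
  have inner_eq : ∀ (a : Lp ℝ 2 (volume : Measure ℝ)) (h k: ℝ → ℝ) (_ : a =ᵐ[volume] k) (hh : MemLp h 2),
      inner ℝ a (hh.toLp h) = ∫ x, k x * h x := by
    intro a h k hk hh
    rw [L2.inner_def]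
    apply integral_congr_ae
    filter_upwards [hk, hh.coeFn_toLp] with x h1 h2
    rw [h1, h2]; simp [mul_comm]
  set F : ℕ → WeakDual ℝ (Lp ℝ 2 (volume : Measure ℝ)) := fun n =>
    StrongDual.toWeakDual (InnerProductSpace.toDual ℝ _ ((hf n).toLp (f n))) with hF
  have hmem : ∀ n, F n ∈ WeakDual.toStrongDual ⁻¹' Metric.closedBall (0 : StrongDual ℝ (Lp ℝ 2 (volume : Measure ℝ))) (Real.sqrt B) := by
    intro n
    simp only [hF, mem_preimage, mem_closedBall_zero_iff]
    change ‖InnerProductSpace.toDual ℝ _ ((hf n).toLp (f n))‖ ≤ _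
    rw [LinearIsometryEquiv.norm_map]
    apply Real.le_sqrt_of_sq_le
    rw [← real_inner_self_eq_norm_sq, inner_eq _ _ _ (hf n).coeFn_toLp]
    simpa [sq] using hB n
  have : Fact ((2 : ENNReal) ≠ ⊤) := ⟨by norm_num⟩
  have : SecondCountableTopology (Lp ℝ 2 (volume : Measure ℝ)) := inferInstance
  obtain ⟨a, _, φ, hφ, hlim⟩ := WeakDual.isSeqCompact_closedBall ℝ _ 0 (Real.sqrt B) hmem
  set G := (InnerProductSpace.toDual ℝ (Lp ℝ 2 (volume : Measure ℝ))).symm (WeakDual.toStrongDual a) with hG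
  refine ⟨G, φ, Lp.memLp G, hφ, fun h hh => ?_⟩
  have h1 := (WeakDual.eval_continuous (𝕜 := ℝ) (hh.toLp h)).tendsto a |>.comp hlim
  have e : a (hh.toLp h) = ∫ x, G x * h x := by
    rw [← inner_eq G h G (by rfl) hh, hG, InnerProductSpace.toDual_symm_apply]
    rfl
  rw [← e]
  refine h1.congr fun n => ?_
  rw [← inner_eq _ h _ (hf (φ n)).coeFn_toLp hh]
  rfl

theorem integral_sub3 {f g h : ℝ → ℝ} (hf : Integrable f) (hg : Integrable g) (hh : Integrable h) :
    ∫ x, (f x - g x - h x) = (∫ x, f x) - (∫ x, g x) - ∫ x, h x := by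
  have h1 : Integrable fun x => f x - g x := hf.sub hg
  rw [integral_sub h1 hh, integral_sub hf hg]

theorem Good.mass_pos {u u' : ℝ → ℝ} (h : Good u u') {x : ℝ} (hx : u x ≠ 0) : 0 < mass u := by
  unfold mass
  rw [integral_pos_iff_support_of_nonneg (fun x => by positivity) h.2.1.integrable_sq]
  refine ((h.1.pow 2).isOpen_support).measure_pos volume ⟨x, ?_⟩
  simpa using hx

theorem small_const {p q μ J : ℝ} (hp : 2 < p) (hq : 2 < q) (hJ : 0 < J) :
    ∃ c : ℝ, 0 < c ∧ 1/p * (c^(p-2) * μ) + 1/q * c^q < J := by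
  have h1 : Tendsto (fun c : ℝ => 1/p * (c^(p-2) * μ) + 1/q * c^q) (𝓝[>] 0) (𝓝 0) := by
    have a1 := (Real.continuousAt_rpow_const 0 (p-2) (Or.inr (by linarith))).tendsto
    have a2 := (Real.continuousAt_rpow_const 0 q (Or.inr (by linarith))).tendsto
    rw [Real.zero_rpow (by linarith)] at a1 a2
    have := ((a1.mul_const μ).const_mul (1/p)).add (a2.const_mul (1/q))
    simp only [zero_mul, mul_zero, add_zero] at this
    exact this.mono_left nhdsWithin_le_nhds
  obtain ⟨c, hc1, hc0⟩ := ((h1.eventually_lt_const hJ).and self_mem_nhdsWithin).exists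
  exact ⟨c, hc0, hc1⟩

/-- Recentred minimizing elements. -/
theorem recentre {p q μ I c : ℝ} (hp : 2 < p) (hq : 2 < q)
    (hc0 : 0 < c) (hc : 1/p * (c^(p-2) * μ) + 1/q * c^q < -I/2)
    {v v' : ℝ → ℝ} (hv : Good v v') (hm : mass v = μ) (hF : Ffun p q v v' ≤ I/2) :
    ∃ u u' : ℝ → ℝ, Good u u' ∧ mass u = μ ∧ c ≤ |u 0| ∧ Ffun p q u u' ≤ Ffun p q v v' := by
  by_cases h0 : c ≤ |v 0|
  · exact ⟨v, v', hv, hm, h0, le_rfl⟩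
  push Not at h0
  by_cases hx : ∃ x, c < |v x|
  · obtain ⟨x, hx⟩ := hx
    refine ⟨_, _, hv.translate x, by rw [mass_translate, hm], by simpa using hx.le, ?_⟩
    rw [F_translate]
    have : 1/q * |v 0|^q ≤ 1/q * |v x|^q := by
      have := h0.trans hx
      gcongr
    linarith
  · exfalso
    push Not at hx
    have h1 := hv.int_rpow_le hp hx
    rw [hm] at h1
    have h2 : 1/p * ∫ x, |v x|^p ≤ 1/p * (c^(p-2) * μ) := by gcongr
    have h3 : 1/q * |v 0|^q ≤ 1/q * c^q := by gcongr
    have h4 : 0 ≤ ∫ x, v' x ^ 2 := integral_nonneg fun t => sq_nonneg _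
    unfold Ffun at hF
    linarith

/-- Weak limits of bounded sequences. -/
theorem compact {u u' : ℕ → ℝ → ℝ} (hu : ∀ n, Good (u n) (u' n)) {μ B : ℝ}
    (hm : ∀ n, mass (u n) = μ) (hB : ∀ n, ∫ x, u' n x ^ 2 ≤ B) :
    ∃ (v v' : ℝ → ℝ) (φ : ℕ → ℕ), Good v v' ∧ StrictMono φ ∧
      (∀ x, Tendsto (fun n => u (φ n) x) atTop (𝓝 (v x))) ∧
      Tendsto (fun n => ∫ x, u' (φ n) x * v' x) atTop (𝓝 (∫ x, v' x * v' x)) := by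
  obtain ⟨g, φ, hg, hφ, hlim⟩ := weak_compact u' (fun n => (hu n).2.2.1) hB
  have hb0 : ∀ n, u (φ n) 0 ∈ Icc (-Real.sqrt (2/1 * μ + 2*1*B)) (Real.sqrt (2/1 * μ + 2*1*B)) := by
    intro n
    have h := (hu (φ n)).sup_bound one_pos 0
    rw [hm] at h
    have := Real.abs_le_sqrt (h.trans (by linarith [hB (φ n)] : _ ≤ 2/1 * μ + 2*1*B))
    exact abs_le.1 this
  obtain ⟨c0, _, ψ, hψ, hlim0⟩ := isCompact_Icc.tendsto_subseq hb0
  have hgI : ∀ a b, IntervalIntegrable g volume a b := fun a b =>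
    ((hg.locallyIntegrable (by norm_num)).integrableOn_isCompact isCompact_uIcc).intervalIntegrable
  have hI : ∀ a b, a ≤ b → Tendsto (fun n => ∫ t in a..b, u' (φ (ψ n)) t) atTop
      (𝓝 (∫ t in a..b, g t)) := by
    intro a b hab
    have hmem : MemLp ((Ioc a b).indicator fun _ => (1:ℝ)) 2 volume :=
      memLp_indicator_const 2 measurableSet_Ioc 1 (Or.inr (by simp))
    have e : ∀ f : ℝ → ℝ, ∫ x, f x * (Ioc a b).indicator (fun _ => (1:ℝ)) x = ∫ t in a..b, f t := by
      intro f
      rw [intervalIntegral.integral_of_le hab, ← integral_indicator measurableSet_Ioc]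
      congr 1; ext x
      by_cases hx : x ∈ Ioc a b <;> simp [hx]
    have := (hlim _ hmem).comp hψ.tendsto_atTop
    simp only [e] at this
    exact this
  have hpt : ∀ x, Tendsto (fun n => u (φ (ψ n)) x) atTop (𝓝 (c0 + ∫ t in (0:ℝ)..x, g t)) := by
    intro x
    rcases le_total 0 x with h | h
    · refine (hlim0.add (hI 0 x h)).congr fun n => ?_
      rw [← (hu (φ (ψ n))).2.2.2 0 x h]; simp
    · rw [intervalIntegral.integral_symm, ← sub_eq_add_neg]
      refine (hlim0.sub (hI x 0 h)).congr fun n => ?_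
      rw [← (hu (φ (ψ n))).2.2.2 x 0 h]; simp
  have hcont : Continuous fun x => c0 + ∫ t in (0:ℝ)..x, g t :=
    continuous_const.add (intervalIntegral.continuous_primitive hgI 0)
  refine ⟨fun x => c0 + ∫ t in (0:ℝ)..x, g t, g, φ ∘ ψ, ⟨hcont, ?_, hg, ?_⟩, hφ.comp hψ, hpt,
    (hlim g hg).comp hψ.tendsto_atTop⟩
  · refine ⟨hcont.aestronglyMeasurable, ?_⟩
    have := Lp.eLpNorm_lim_le_liminf_eLpNorm (p := 2) (μ := volume)
      (f := fun n => u (φ (ψ n))) (fun n => (hu _).1.aestronglyMeasurable) _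
      (Eventually.of_forall hpt)
    refine this.trans_lt ?_
    have e : ∀ n, eLpNorm (u (φ (ψ n))) 2 volume = ENNReal.ofReal (μ ^ ((2:ℝ)⁻¹)) := by
      intro n
      rw [(hu (φ (ψ n))).2.1.eLpNorm_eq_integral_rpow_norm (by norm_num) (by norm_num)]
      congr 2
      · rw [← hm (φ (ψ n))]; unfold mass
        congr 1; ext x; simp
    simp only [e]
    simp
  · intro a b hab
    rw [add_sub_add_left_eq_sub, intervalIntegral.integral_interval_sub_left (hgI _ _) (hgI _ _)]

theorem main_good (p q μ : ℝ) (hp : 2 < p) (hp' : p < 6) (hq : 2 < q) (hq' : q < 4)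
    (hμ : 0 < μ) :
    ∃ u u' : ℝ → ℝ, Good u u' ∧ mass u = μ ∧
      ∀ v v' : ℝ → ℝ, Good v v' → mass v = μ → Ffun p q u u' ≤ Ffun p q v v' := by
  set S : Set ℝ := {e | ∃ v v' : ℝ → ℝ, Good v v' ∧ mass v = μ ∧ Ffun p q v v' = e} with hS
  obtain ⟨C, hC⟩ := coercive hp hp' hq hq' hμ
  have hbdd : BddBelow S := by
    refine ⟨-C, ?_⟩
    rintro e ⟨v, v', hv, hm, rfl⟩
    have := hC v v' hv hm
    have h4 : 0 ≤ ∫ x, v' x ^ 2 := integral_nonneg fun t => sq_nonneg _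
    linarith
  obtain ⟨v0, v0', hv0, hm0, hneg⟩ := exists_neg hp hq hq' hμ
  set I := sInf S with hIdef
  have hI : ∀ v v' : ℝ → ℝ, Good v v' → mass v = μ → I ≤ Ffun p q v v' :=
    fun v v' hv hm => csInf_le hbdd ⟨v, v', hv, hm, rfl⟩
  have hI0 : I < 0 := (hI _ _ hv0 hm0).trans_lt hneg
  obtain ⟨c, hc0, hc⟩ := small_const (μ := μ) (J := -I/2) hp hq (by linarith)
  have hseq : ∀ n : ℕ, ∃ u u' : ℝ → ℝ, Good u u' ∧ mass u = μ ∧ c ≤ |u 0| ∧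
      Ffun p q u u' ≤ I + 1 / ((n:ℝ) + 1) := by
    intro n
    have hpos : 0 < 1 / ((n:ℝ) + 1) := by positivity
    obtain ⟨e, ⟨v, v', hv, hm, rfl⟩, hlt⟩ := exists_lt_of_csInf_lt (s := S)
      ⟨_, v0, v0', hv0, hm0, rfl⟩ (b := I + min (1 / ((n:ℝ) + 1)) (-I/2))
      (by linarith [lt_min hpos (by linarith : 0 < -I/2)])
    obtain ⟨u, u', hu, hmu, hcu, hFu⟩ := recentre hp hq hc0 hc hv hm
      (by linarith [min_le_right (1 / ((n:ℝ) + 1)) (-I/2)])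
    exact ⟨u, u', hu, hmu, hcu, by linarith [min_le_left (1 / ((n:ℝ) + 1)) (-I/2)]⟩
  choose u0 u0' hu0 hmu0 hcu0 hFu0 using hseq
  set B := 4 * (I + 1 + C) with hB
  have hD0 : ∀ n, ∫ x, u0' n x ^ 2 ≤ B := by
    intro n
    have h1 := hC _ _ (hu0 n) (hmu0 n)
    have h2 := hFu0 n
    have h3 : 1 / ((n:ℝ)+1) ≤ 1 := by
      rw [div_le_one (by positivity)]; linarith [(Nat.cast_nonneg n : (0:ℝ) ≤ n)]
    linarith
  obtain ⟨v, v', φ, hv, hφ, hpt, hweak⟩ := compact hu0 hmu0 hD0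
  set u : ℕ → ℝ → ℝ := fun n => u0 (φ n) with hudef
  set u' : ℕ → ℝ → ℝ := fun n => u0' (φ n) with hu'def
  have hu : ∀ n, Good (u n) (u' n) := fun n => hu0 _
  have hmu : ∀ n, mass (u n) = μ := fun n => hmu0 _
  have hFlim : Tendsto (fun n => Ffun p q (u n) (u' n)) atTop (𝓝 I) := by
    have h1 : Tendsto (fun n : ℕ => I + 1 / ((n:ℝ) + 1)) atTop (𝓝 I) := by
      simpa using (tendsto_one_div_add_atTop_nhds_zero_nat (𝕜 := ℝ)).const_add I
    exact tendsto_of_tendsto_of_tendsto_of_le_of_le tendsto_const_nhds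
      (h1.comp hφ.tendsto_atTop) (fun n => hI _ _ (hu n) (hmu n)) (fun n => hFu0 (φ n))
  set m := mass v with hmdef
  have hm0 : 0 < m := by
    apply hv.mass_pos (x := 0)
    have : c ≤ |v 0| := ge_of_tendsto (hpt 0).abs (Eventually.of_forall fun n => hcu0 (φ n))
    intro h
    rw [h, abs_zero] at this
    linarith
  -- the remainder
  set w : ℕ → ℝ → ℝ := fun n x => u n x - v x with hwdef
  set w' : ℕ → ℝ → ℝ := fun n x => u' n x - v' x with hw'def
  have hw : ∀ n, Good (w n) (w' n) := fun n => (hu n).sub hv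
  have hwlim : ∀ x, Tendsto (fun n => w n x) atTop (𝓝 0) := by
    intro x
    simpa using (hpt x).sub_const (v x)
  have hwB : ∀ n, mass (w n) ≤ 2 * μ + 2 * m := by
    intro n
    rw [← hmu n, hmdef]
    unfold mass
    rw [← integral_const_mul, ← integral_const_mul,
      ← integral_add ((hu n).2.1.integrable_sq.const_mul _) (hv.2.1.integrable_sq.const_mul _)]
    apply integral_mono (hw n).2.1.integrable_sq
      (((hu n).2.1.integrable_sq.const_mul _).add (hv.2.1.integrable_sq.const_mul _))
    intro x
    change (u n x - v x)^2 ≤ 2 * u n x ^ 2 + 2 * v x ^ 2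
    nlinarith [sq_nonneg (u n x + v x)]
  -- uniform bound
  obtain ⟨K, hK0, hKw, hKv⟩ : ∃ K, 0 < K ∧ (∀ n x, |w n x| ≤ K) ∧ ∀ x, |v x| ≤ K := by
    obtain ⟨K1, hK1, h1⟩ := hv.bdd
    have h2 : ∀ n x, |u n x| ≤ Real.sqrt (2/1 * μ + 2*1*B) := by
      intro n x
      have h := (hu n).sup_bound one_pos x
      rw [hmu] at h
      exact Real.abs_le_sqrt (h.trans (by linarith [hD0 (φ n)] : _ ≤ 2/1 * μ + 2*1*B))
    refine ⟨Real.sqrt (2/1 * μ + 2*1*B) + K1, by positivity, fun n x => ?_, fun x => ?_⟩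
    · exact (abs_sub _ _).trans (add_le_add (h2 n x) (h1 x))
    · linarith [h1 x, Real.sqrt_nonneg (2/1 * μ + 2*1*B)]
  have hp0 : 0 ≤ p := by linarith
  -- mass splitting
  have hmass : Tendsto (fun n => mass (w n)) atTop (𝓝 (μ - m)) := by
    have h := brezis_lieb (f := fun n x => u n x ^ 2 - w n x ^ 2 - v x ^ 2) (w := w) (u := v)
      (fun n => (((hu n).1.pow 2).sub ((hw n).1.pow 2)).sub (hv.1.pow 2))
      (fun n => ((hu n).2.1.integrable_sq.sub (hw n).2.1.integrable_sq).sub hv.2.1.integrable_sq)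
      (fun n => (hw n).2.1) (fun n => (hw n).1) hv.2.1 hwB
      (fun x => by
        have := (((hpt x).pow 2).sub ((hwlim x).pow 2)).sub_const (v x ^ 2)
        simpa using this)
      (fun ε hε => by
        refine ⟨1/ε, fun n x => ?_⟩
        have e : u n x ^ 2 - w n x ^ 2 - v x ^ 2 = 2 * (v x * w n x) := by
          simp only [hwdef]; ring
        rw [e, abs_le]
        have e1 : ε * w n x ^ 2 + 1/ε * v x ^ 2 - 2 * (v x * w n x) = ε * (w n x - v x / ε)^2 := by
          field_simp; ring
        have e2 : ε * w n x ^ 2 + 1/ε * v x ^ 2 + 2 * (v x * w n x) = ε * (w n x + v x / ε)^2 := by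
          field_simp; ring
        have p1 : 0 ≤ ε * (w n x - v x / ε)^2 := by positivity
        have p2 : 0 ≤ ε * (w n x + v x / ε)^2 := by positivity
        constructor <;> linarith)
    have e : ∀ n, ∫ x, (u n x ^ 2 - w n x ^ 2 - v x ^ 2) = μ - mass (w n) - m := by
      intro n
      rw [integral_sub3 (hu n).2.1.integrable_sq (hw n).2.1.integrable_sq hv.2.1.integrable_sq,
        ← hmu n]
      rfl
    simp only [e] at h
    have := h.const_sub (μ - m)
    simp only [sub_zero] at this
    refine this.congr fun n => by ring
  have hmle : m ≤ μ := by
    have := ge_of_tendsto hmass (Eventually.of_forall fun n => mass_nonneg (w n))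
    linarith
  -- L^p splitting
  have hLp : Tendsto (fun n => (∫ x, |u n x|^p) - (∫ x, |w n x|^p) - ∫ x, |v x|^p) atTop (𝓝 0) := by
    have h := brezis_lieb (f := fun n x => |u n x| ^ p - |w n x| ^ p - |v x| ^ p) (w := w) (u := v)
      (fun n => (((hu n).1.abs.rpow_const fun _ => Or.inr hp0).sub
        ((hw n).1.abs.rpow_const fun _ => Or.inr hp0)).sub (hv.1.abs.rpow_const fun _ => Or.inr hp0))
      (fun n => (((hu n).int_rpow hp).sub ((hw n).int_rpow hp)).sub (hv.int_rpow hp))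
      (fun n => (hw n).2.1) (fun n => (hw n).1) hv.2.1 hwB
      (fun x => by
        have := (((hpt x).abs.rpow_const (Or.inr hp0)).sub
          ((hwlim x).abs.rpow_const (Or.inr hp0))).sub_const (|v x| ^ p)
        simpa [Real.zero_rpow (by linarith : p ≠ 0)] using this)
      (fun ε hε => by
        obtain ⟨C', hC'⟩ := bl_pointwise hp hK0 hε
        refine ⟨C', fun n x => ?_⟩
        have := hC' (w n x) (v x) (hKw n x) (hKv x)
        simpa [hwdef] using this)
    refine h.congr fun n => ?_
    rw [integral_sub3 ((hu n).int_rpow hp) ((hw n).int_rpow hp) (hv.int_rpow hp)]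
  -- derivative splitting
  have hDer : Tendsto (fun n => (∫ x, u' n x ^ 2) - (∫ x, w' n x ^ 2) - ∫ x, v' x ^ 2) atTop (𝓝 0) := by
    have h1 := (hweak.const_mul 2).sub_const (2 * ∫ x, v' x * v' x)
    rw [sub_self] at h1
    refine h1.congr fun n => ?_
    have e : ∀ x, w' n x ^ 2 = u' n x ^ 2 - 2 * (u' n x * v' x) + v' x ^ 2 := by
      intro x; simp only [hw'def]; ring
    have hprod : Integrable fun x => u' n x * v' x := (hu n).2.2.1.integrable_mul hv.2.2.1
    have i1 := (hu n).2.2.1.integrable_sq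
    have i2 := hv.2.2.1.integrable_sq
    simp only [e]
    have i3 : Integrable fun x => u' n x ^ 2 - 2 * (u' n x * v' x) := i1.sub (hprod.const_mul 2)
    rw [integral_add i3 i2, integral_sub i1 (hprod.const_mul 2),
      integral_const_mul]
    have e2 : ∀ x, v' x * v' x = v' x ^ 2 := fun x => by ring
    simp only [e2]
    change 2 * (∫ x, u' n x * v' x) - _ = _
    ring
  have hpt0 : Tendsto (fun n => |u n 0|^q - |w n 0|^q - |v 0|^q) atTop (𝓝 0) := by
    have := (((hpt 0).abs.rpow_const (p := q) (Or.inr (by linarith))).sub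
          ((hwlim 0).abs.rpow_const (p := q) (Or.inr (by linarith)))).sub_const (|v 0| ^ q)
    simpa [Real.zero_rpow (by linarith : q ≠ 0)] using this
  have hFw : Tendsto (fun n => Ffun p q (w n) (w' n)) atTop (𝓝 (I - Ffun p q v v')) := by
    have := ((hFlim.sub_const (Ffun p q v v')).sub
      (((hDer.const_mul (1/2)).sub (hLp.const_mul (1/p))).sub (hpt0.const_mul (1/q))))
    simp only [mul_zero, sub_zero] at this
    refine this.congr fun n => ?_
    unfold Ffun
    ring
  have hfin : (μ - m) / μ * I ≤ I - Ffun p q v v' := by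
    refine le_of_tendsto_of_tendsto ((hmass.div_const μ).mul_const I) hFw ?_
    filter_upwards [hmass.eventually_lt_const (by linarith : μ - m < μ)] with n hn
    exact scaling_le hp hq hμ hI (hw n) hn.le
  have hfin2 : Ffun p q v v' ≤ m / μ * I := by
    have : (μ - m) / μ * I = I - m / μ * I := by field_simp
    linarith
  have hmeq : m = μ := by
    rcases hmle.eq_or_lt with h | h
    · exact h
    · have := scaling hp hq hμ hI hv hm0 h
      rw [← hmdef] at this
      linarith
  refine ⟨v, v', hv, hmeq, fun z z' hz hmz => ?_⟩
  rw [hmeq, div_self hμ.ne', one_mul] at hfin2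
  exact hfin2.trans (hI _ _ hz hmz)

theorem stmt7 (p q μ : ℝ) (hp : 2 < p) (hp' : p < 6) (hq : 2 < q) (hq' : q < 4)
    (hμ : 0 < μ) :
    ∃ u u' : ℝ → ℝ, IsH1 u u' ∧ mass u = μ ∧
      ∀ v v' : ℝ → ℝ, IsH1 v v' → mass v = μ → Ffun p q u u' ≤ Ffun p q v v' := by
  obtain ⟨u, u', hu, hm, h⟩ := main_good p q μ hp hp' hq hq' hμ
  exact ⟨u, u', hu.isH1, hm, fun v v' hv hmv =>
    h v v' (good_of_isH1 hv (by rw [hmv]; exact hμ.ne')) hmv⟩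
end
end

section
/- Let 2 < q < 4 and 0 < μ < (√3/2)·π. Then F_{6,q} is bounded below on the set of u ∈ H¹(ℝ) with ‖u‖₂² = μ, there exists u₀ in this set with F_{6,q}(u₀) < 0, there exists a ground state of F_{6,q} at mass μ, and any two nonnegative ground states of F_{6,q} at mass μ coincide. -/
open MeasureTheory Real Set

noncomputable section

open Filter Topology

/-- `H¹` pairs whose weak derivative is locally integrable. -/
structure H1s (u u' : ℝ → ℝ) : Prop where
  cont : Continuous u
  sq : Integrable (fun x => (u x) ^ 2)
  dsq : Integrable (fun x => (u' x) ^ 2)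
  ii : ∀ a b : ℝ, IntervalIntegrable u' volume a b
  ftc : ∀ a b : ℝ, u b - u a = ∫ t in a..b, u' t

lemma atTop_vol : ∀ s ∈ (atTop : Filter ℝ), volume s = ⊤ := by
  intro s hs
  rcases mem_atTop_sets.1 hs with ⟨b, hb⟩
  rw [← top_le_iff, ← Real.volume_Ici (a := b)]
  exact measure_mono hb

lemma atBot_vol : ∀ s ∈ (atBot : Filter ℝ), volume s = ⊤ := by
  intro s hs
  rcases mem_atBot_sets.1 hs with ⟨b, hb⟩
  rw [← top_le_iff, ← Real.volume_Iic (a := b)]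
  exact measure_mono hb

lemma isH1_ii {u u' : ℝ → ℝ} (h : IsH1 u u') (hm : mass u ≠ 0) {a b : ℝ} (hab : a ≤ b) :
    IntervalIntegrable u' volume a b := by
  obtain ⟨hc, hs, -, hf⟩ := h
  by_contra hn
  have key : ∀ x y, x ≤ y → ¬ IntervalIntegrable u' volume x y → u y = u x := by
    intro x y hxy hi
    have := hf x y hxy
    rw [intervalIntegral.integral_undef hi] at this
    linarith
  have hmono : ∀ x y, x ≤ a → b ≤ y → ¬ IntervalIntegrable u' volume x y := by
    intro x y hx hy hi
    apply hn
    refine hi.mono_set ?_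
    rw [uIcc_of_le hab, uIcc_of_le (by linarith)]
    exact Icc_subset_Icc hx hy
  have hR : ∀ y, b ≤ y → u y = u a := fun y hy => key a y (by linarith) (hmono a y le_rfl hy)
  have hL : ∀ x, x ≤ a → u x = u a := fun x hx => by
    rw [← key x b (by linarith) (hmono x b hx le_rfl), hR b le_rfl]
  have h0 : (u a)^2 = 0 := by
    refine IntegrableAtFilter.eq_zero_of_tendsto (f := fun x => u x ^2) (l := atTop) (μ := volume)
      ?_ atTop_vol ?_
    · exact hs.integrableAtFilter _
    · apply tendsto_const_nhds.congr'
      filter_upwards [eventually_ge_atTop b] with y hy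
      rw [hR y hy]
  have h0' : u a = 0 := by simpa using h0
  have hz : ∀ x, u x = 0 := by
    intro x
    rcases le_total x a with hx | hx
    · rw [hL x hx, h0']
    rcases le_total b x with hx' | hx'
    · rw [hR x hx', h0']
    by_cases h1 : IntervalIntegrable u' volume a x
    · by_cases h2 : IntervalIntegrable u' volume x b
      · exact absurd (h1.trans h2) hn
      · rw [← key x b hx' h2, hR b le_rfl, h0']
    · rw [key a x hx h1, h0']
  apply hm
  simp [mass, hz]

lemma IsH1.toH1s {u u' : ℝ → ℝ} (h : IsH1 u u') (hm : mass u ≠ 0) : H1s u u' where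
  cont := h.1
  sq := h.2.1
  dsq := h.2.2.1
  ii := fun a b => by
    rcases le_total a b with hab | hab
    · exact isH1_ii h hm hab
    · exact (isH1_ii h hm hab).symm
  ftc := fun a b => by
    rcases le_total a b with hab | hab
    · exact h.2.2.2 a b hab
    · rw [intervalIntegral.integral_symm, ← h.2.2.2 b a hab]; ring

lemma H1s.toIsH1 {u u' : ℝ → ℝ} (h : H1s u u') : IsH1 u u' :=
  ⟨h.cont, h.sq, h.dsq, fun a b _ => h.ftc a b⟩

namespace H1s

variable {u u' : ℝ → ℝ}

lemma locInt (h : H1s u u') : LocallyIntegrable u' volume := by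
  intro x
  refine ⟨Ioc (x-1) (x+1), Ioc_mem_nhds (by linarith) (by linarith), ?_⟩
  exact (intervalIntegrable_iff_integrableOn_Ioc_of_le (by linarith)).1 (h.ii (x-1) (x+1))

lemma aesm (h : H1s u u') : AEStronglyMeasurable u' volume := h.locInt.aestronglyMeasurable

lemma aesm_u (h : H1s u u') : AEStronglyMeasurable u volume := h.cont.aestronglyMeasurable

lemma ae_deriv (h : H1s u u') : ∀ᵐ x, HasDerivAt u (u' x) x := by
  filter_upwards [_root_.LocallyIntegrable.ae_hasDerivAt_integral h.locInt] with x hx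
  have := (hx 0).const_add (u 0)
  refine this.congr_of_eventuallyEq (Eventually.of_forall fun y => ?_)
  have := h.ftc 0 y
  simp only
  linarith

lemma ac (h : H1s u u') (a b : ℝ) : AbsolutelyContinuousOnInterval u a b := by
  have h1 := (h.ii a b).absolutelyContinuousOnInterval_intervalIntegral (c := a) left_mem_uIcc
  have h2 : AbsolutelyContinuousOnInterval (fun _ : ℝ => u a) a b :=
    ((LipschitzWith.const (u a)).lipschitzOnWith (s := uIcc a b)).absolutelyContinuousOnInterval
  have h3 := h2.add h1
  have h4 : u = (fun _ : ℝ => u a) + fun x => ∫ v in a..x, u' v := by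
    funext x
    simp only [Pi.add_apply]
    linarith [h.ftc a x]
  rw [h4]
  exact h3

lemma ac_pow (h : H1s u u') (a b : ℝ) (n : ℕ) :
    AbsolutelyContinuousOnInterval (fun x => u x ^ n) a b := by
  induction n with
  | zero =>
    simpa using
      ((LipschitzWith.const (1:ℝ)).lipschitzOnWith (s := uIcc a b)).absolutelyContinuousOnInterval
  | succ n ih =>
    simpa [pow_succ] using ih.fun_mul (h.ac a b)

lemma _root_.ac_of_C1 {a b : ℝ} (hab : a ≤ b) {G G' : ℝ → ℝ}
    (hG : ∀ x ∈ Icc a b, HasDerivAt G (G' x) x) (hG' : ContinuousOn G' (Icc a b)) :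
    AbsolutelyContinuousOnInterval G a b := by
  obtain ⟨C, hC⟩ := isCompact_Icc.exists_bound_of_continuousOn hG'
  have : LipschitzOnWith (Real.toNNReal C) G (Icc a b) := by
    refine (convex_Icc a b).lipschitzOnWith_of_nnnorm_hasDerivWithin_le
      (fun x hx => (hG x hx).hasDerivWithinAt) ?_
    intro x hx
    exact NNReal.le_toNNReal_of_coe_le (by simpa using hC x hx)
  rw [← uIcc_of_le hab] at this
  exact this.absolutelyContinuousOnInterval

lemma prod_ac (h : H1s u u') {a b : ℝ} (hab : a ≤ b) {G G' : ℝ → ℝ}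
    (hG : ∀ x ∈ Icc a b, HasDerivAt G (G' x) x) (hG' : ContinuousOn G' (Icc a b)) (n : ℕ) :
    AbsolutelyContinuousOnInterval (fun x => G x * u x ^ n) a b :=
  (ac_of_C1 hab hG hG').fun_mul (h.ac_pow a b n)

lemma prod_deriv (h : H1s u u') {a b : ℝ} {G G' : ℝ → ℝ}
    (hG : ∀ x ∈ Icc a b, HasDerivAt G (G' x) x) (n : ℕ) :
    ∀ᵐ x, x ∈ Icc a b → HasDerivAt (fun x => G x * u x ^ n)
      (G' x * u x ^ n + G x * (n * u x ^ (n-1) * u' x)) x := by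
  filter_upwards [h.ae_deriv] with x hx hxI
  exact (hG x hxI).mul (hx.pow n)

lemma prod_ftc (h : H1s u u') {a b : ℝ} (hab : a ≤ b) {G G' : ℝ → ℝ}
    (hG : ∀ x ∈ Icc a b, HasDerivAt G (G' x) x) (hG' : ContinuousOn G' (Icc a b)) (n : ℕ) :
    ∫ x in a..b, (G' x * u x ^ n + G x * (n * u x ^ (n-1) * u' x))
      = G b * u b ^ n - G a * u a ^ n := by
  rw [← (h.prod_ac hab hG hG' n).integral_deriv_eq_sub]
  apply intervalIntegral.integral_congr_ae
  filter_upwards [h.prod_deriv hG n] with x hx hxI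
  rw [uIoc_of_le hab] at hxI
  exact (hx (Ioc_subset_Icc_self hxI)).deriv.symm

lemma reflect (h : H1s u u') : H1s (fun x => u (-x)) (fun x => - u' (-x)) where
  cont := h.cont.comp continuous_neg
  sq := h.sq.comp_neg
  dsq := by simpa using h.dsq.comp_neg
  ii := fun a b => by
    have := (h.ii (-a) (-b)).comp_sub_left 0
    simp at this
    exact this.neg
  ftc := fun a b => by
    have := h.ftc (-a) (-b)
    rw [intervalIntegral.integral_neg, intervalIntegral.integral_comp_neg,
      ← intervalIntegral.integral_symm]
    exact this

/-- integrability of the product of the function and its derivative. -/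
lemma int_uu' (h : H1s u u') : Integrable (fun x => u x * u' x) := by
  refine Integrable.mono' (h.sq.add h.dsq) (h.aesm_u.mul h.aesm) (Eventually.of_forall fun x => ?_)
  simp only [Pi.add_apply, Real.norm_eq_abs, abs_mul]
  nlinarith [sq_nonneg (|u x| - |u' x|), sq_abs (u x), sq_abs (u' x), sq_nonneg (u x),
    sq_nonneg (u' x)]

lemma tendsto_sq (h : H1s u u') : Tendsto (fun x => u x ^ 2) atTop (𝓝 0) := by
  have h1 : ∀ x, 0 ≤ x → u x ^ 2 = u 0 ^ 2 + ∫ t in (0:ℝ)..x, 2 * (u t * u' t) := by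
    intro x hx
    have := h.prod_ftc (G := fun _ => 1) (G' := fun _ => 0) hx (fun x _ => hasDerivAt_const x 1)
      continuousOn_const 2
    simp only [one_mul, zero_mul, zero_add] at this
    have e : u x ^ 2 - u 0 ^2 = ∫ t in (0:ℝ)..x, 2 * (u t * u' t) := by
      rw [← this]; congr 1; ext t; push_cast; ring
    linarith
  have h2 := intervalIntegral_tendsto_integral_Ioi (a := (0:ℝ)) (b := id)
    ((h.int_uu'.const_mul 2).integrableOn (s := Ioi 0)) tendsto_id
  have h3 : Tendsto (fun x => u x ^ 2) atTop
      (𝓝 (u 0 ^ 2 + ∫ t in Ioi (0:ℝ), 2 * (u t * u' t))) := by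
    refine (h2.const_add (u 0 ^ 2)).congr' ?_
    filter_upwards [eventually_ge_atTop 0] with x hx
    rw [h1 x hx]; rfl
  have h4 := IntegrableAtFilter.eq_zero_of_tendsto (h.sq.integrableAtFilter _) atTop_vol h3
  rwa [h4] at h3

lemma tendsto_u (h : H1s u u') : Tendsto u atTop (𝓝 0) := by
  have := h.tendsto_sq.sqrt
  simp only [Real.sqrt_zero, Real.sqrt_sq_eq_abs] at this
  exact (tendsto_zero_iff_abs_tendsto_zero u).2 this

lemma bdd (h : H1s u u') : ∃ C, ∀ x, |u x| ≤ C := by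
  have h1 := h.tendsto_u
  have h2 := h.reflect.tendsto_u
  have e1 : ∀ᶠ x in atTop, |u x| < 1 := by
    have := h1.abs; rw [abs_zero] at this
    exact this.eventually_lt_const (by norm_num)
  have e2 : ∀ᶠ x in atTop, |u (-x)| < 1 := by
    have := h2.abs; rw [abs_zero] at this
    exact this.eventually_lt_const (by norm_num)
  obtain ⟨R, hR⟩ := eventually_atTop.1 (e1.and e2)
  obtain ⟨C, hC⟩ := (isCompact_Icc (a := -R) (b := R)).exists_bound_of_continuousOn h.cont.continuousOn
  refine ⟨max C 1, fun x => ?_⟩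
  by_cases hx : R ≤ x
  · exact (hR x hx).1.le.trans (le_max_right _ _)
  by_cases hx' : x ≤ -R
  · have := (hR (-x) (by linarith)).2
    rw [neg_neg] at this
    exact this.le.trans (le_max_right _ _)
  · push Not at hx hx'
    exact (hC x ⟨hx'.le, hx.le⟩).trans (le_max_left _ _)

lemma int6 (h : H1s u u') : Integrable (fun x => u x ^ 6) := by
  obtain ⟨C, hC⟩ := h.bdd
  refine Integrable.mono' (h.sq.const_mul (C^4)) (h.cont.pow 6).aestronglyMeasurable
    (Eventually.of_forall fun x => ?_)
  have h4 : |u x| ^ 4 ≤ C ^ 4 := pow_le_pow_left₀ (abs_nonneg _) (hC x) 4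
  rw [Real.norm_eq_abs, abs_pow, ← sq_abs (u x)]
  nlinarith [sq_nonneg (|u x|)]

/-- energy density -/
lemma intE (h : H1s u u') : Integrable (fun x => (1/2) * u' x ^ 2 - (1/6) * u x ^ 6) :=
  (h.dsq.const_mul _).sub (h.int6.const_mul _)

end H1s

/-- tail mass -/
def tm (u : ℝ → ℝ) (x : ℝ) : ℝ := ∫ t in Ioi x, u t ^ 2

def BB : ℝ := 2 / √3

def cc (m : ℝ) : ℝ := BB / 8 * (cos (BB * m) / sin (BB * m))

lemma BB_pos : 0 < BB := by unfold BB; positivity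

lemma BB_sq : BB ^ 2 = 4 / 3 := by
  unfold BB
  rw [div_pow, Real.sq_sqrt (by norm_num)]; norm_num

lemma cc_deriv {m : ℝ} (hm : sin (BB * m) ≠ 0) : HasDerivAt cc (-1/6 - 8 * cc m ^ 2) m := by
  have h1 : HasDerivAt (fun m => BB * m) BB m := by simpa using (hasDerivAt_id m).const_mul BB
  have h2 := (((h1.cos).div (h1.sin) hm).const_mul (BB / 8))
  refine h2.congr_deriv ?_
  unfold cc
  have h4 := BB_sq
  field_simp
  linear_combination (-6 * sin (BB * m) ^ 2) * h4

lemma sin_BB_pos {m : ℝ} (h0 : 0 < m) (h1 : BB * m < π) : 0 < sin (BB * m) :=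
  sin_pos_of_pos_of_lt_pi (mul_pos BB_pos h0) h1

namespace H1s

variable {u u' : ℝ → ℝ}

lemma tm_nonneg (u : ℝ → ℝ) (x : ℝ) : 0 ≤ tm u x :=
  setIntegral_nonneg measurableSet_Ioi fun _ _ => sq_nonneg _

lemma tm_eq (h : H1s u u') (a x : ℝ) : tm u x = tm u a - ∫ t in a..x, u t ^ 2 := by
  unfold tm
  have := intervalIntegral.integral_interval_add_Ioi (a := a) (b := x) (f := fun t => u t ^ 2)
    (μ := volume) h.sq.integrableOn h.sq.integrableOn
  linarith

lemma tm_deriv (h : H1s u u') (x : ℝ) : HasDerivAt (tm u) (-(u x ^ 2)) x := by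
  have h1 : HasDerivAt (fun y => ∫ t in (0:ℝ)..y, u t ^ 2) (u x ^ 2) x :=
    (h.cont.pow 2).integral_hasStrictDerivAt 0 x |>.hasDerivAt
  have h2 := h1.const_sub (tm u 0)
  refine h2.congr_of_eventuallyEq (Eventually.of_forall fun y => ?_)
  exact h.tm_eq 0 y

lemma tm_cont (h : H1s u u') : Continuous (tm u) :=
  continuous_iff_continuousAt.2 fun x => (h.tm_deriv x).continuousAt

lemma tm_anti (h : H1s u u') : Antitone (tm u) := by
  apply antitone_of_hasDerivAt_nonpos (f' := fun x => -(u x ^ 2)) (fun x => h.tm_deriv x)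
  intro x
  simpa using sq_nonneg (u x)

lemma tm_tendsto (h : H1s u u') : Tendsto (tm u) atTop (𝓝 0) := by
  have h2 := intervalIntegral_tendsto_integral_Ioi (a := (0:ℝ)) (b := id)
    (h.sq.integrableOn (s := Ioi 0)) tendsto_id
  have h3 := h2.const_sub (tm u 0)
  have e : tm u 0 - ∫ t in Ioi (0:ℝ), u t ^ 2 = 0 := by simp [tm]
  rw [e] at h3
  exact h3.congr fun x => (h.tm_eq 0 x).symm

lemma HJ (h : H1s u u') {a b ε : ℝ} (hab : a ≤ b) (hb : 0 < tm u b + ε)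
    (ha : BB * (tm u a + ε) < π) :
    IntervalIntegrable (fun x => (u' x + 4 * cc (tm u x + ε) * u x ^ 3) ^ 2) volume a b ∧
    ∫ x in a..b, ((1/2) * u' x ^ 2 - (1/6) * u x ^ 6) =
      cc (tm u a + ε) * u a ^ 4 - cc (tm u b + ε) * u b ^ 4
      + (1/2) * ∫ x in a..b, (u' x + 4 * cc (tm u x + ε) * u x ^ 3) ^ 2 := by
  have hs : ∀ x ∈ Icc a b, sin (BB * (tm u x + ε)) ≠ 0 := by
    intro x hx
    refine (sin_BB_pos ?_ ?_).ne'
    · linarith [h.tm_anti hx.2]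
    · refine lt_of_le_of_lt ?_ ha
      have := h.tm_anti hx.1
      have := BB_pos
      gcongr
  set G : ℝ → ℝ := fun x => cc (tm u x + ε) with hGdef
  set G' : ℝ → ℝ := fun x => (-1/6 - 8 * G x ^ 2) * (-(u x ^ 2)) with hG'def
  have hG : ∀ x ∈ Icc a b, HasDerivAt G (G' x) x := by
    intro x hx
    have h1 := (h.tm_deriv x).add_const ε
    exact HasDerivAt.comp (h₂ := cc) x (cc_deriv (hs x hx)) h1
  have hGc : ContinuousOn G (Icc a b) := fun x hx => (hG x hx).continuousAt.continuousWithinAt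
  have huc := h.cont.continuousOn (s := Icc a b)
  have hG' : ContinuousOn G' (Icc a b) := by
    apply ContinuousOn.mul
    · fun_prop
    · fun_prop
  have hftc := h.prod_ftc hab hG hG' 4
  have hi1 : IntervalIntegrable
      (fun x => G' x * u x ^ 4 + G x * ((4:ℕ) * u x ^ (4-1) * u' x)) volume a b := by
    apply IntervalIntegrable.add
    · apply ContinuousOn.intervalIntegrable
      rw [uIcc_of_le hab]
      exact hG'.mul (huc.pow 4)
    · have : IntervalIntegrable (fun x => u' x * (G x * ((4:ℕ) * u x ^ (4-1)))) volume a b := by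
        apply (h.ii a b).mul_continuousOn
        rw [uIcc_of_le hab]
        fun_prop
      refine this.congr ?_
      intro x _
      simp only; ring
  have hi2 : IntervalIntegrable (fun x => (1/2) * u' x ^ 2 - (1/6) * u x ^ 6) volume a b :=
    h.intE.intervalIntegrable
  have hpt : ∀ x, (u' x + 4 * G x * u x ^ 3) ^ 2 =
      2 * (((1/2) * u' x ^ 2 - (1/6) * u x ^ 6) +
        (G' x * u x ^ 4 + G x * ((4:ℕ) * u x ^ (4-1) * u' x))) := by
    intro x
    simp only [hG'def]
    push_cast
    norm_num
    ring
  constructor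
  · change IntervalIntegrable (fun x => (u' x + 4 * G x * u x ^ 3) ^ 2) volume a b
    simp_rw [hpt]
    exact (hi2.add hi1).const_mul 2
  · change _ = G a * u a ^ 4 - G b * u b ^ 4 + (1/2) * ∫ x in a..b, (u' x + 4 * G x * u x ^ 3) ^ 2
    simp_rw [hpt]
    rw [intervalIntegral.integral_const_mul, intervalIntegral.integral_add hi2 hi1, hftc]
    ring

lemma half_eps (h : H1s u u') {a ε : ℝ} (hε : 0 < ε) (ha : BB * (tm u a + ε) < π) :
    cc (tm u a + ε) * u a ^ 4 ≤ ∫ x in Ioi a, ((1/2) * u' x ^ 2 - (1/6) * u x ^ 6) := by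
  have h1 := intervalIntegral_tendsto_integral_Ioi (a := a) (b := id)
    (h.intE.integrableOn (s := Ioi a)) tendsto_id
  have hce : ContinuousAt cc ε := by
    refine (cc_deriv (sin_BB_pos hε ?_).ne').continuousAt
    nlinarith [tm_nonneg u a, BB_pos]
  have h2 : Tendsto (fun b => cc (tm u b + ε) * u b ^ 4) atTop (𝓝 0) := by
    have e1 : Tendsto (fun b => tm u b + ε) atTop (𝓝 ε) := by
      simpa using h.tm_tendsto.add_const ε
    have e2 := (hce.tendsto.comp e1).mul (h.tendsto_u.pow 4)
    simpa using e2
  have h3 : Tendsto (fun b => cc (tm u a + ε) * u a ^ 4 - cc (tm u b + ε) * u b ^ 4) atTop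
      (𝓝 (cc (tm u a + ε) * u a ^ 4)) := by
    simpa using h2.const_sub (cc (tm u a + ε) * u a ^ 4)
  refine le_of_tendsto_of_tendsto h3 h1 ?_
  filter_upwards [eventually_ge_atTop a] with b hb
  have := (h.HJ hb (by linarith [tm_nonneg u b]) ha).2
  simp only [id]
  rw [this]
  have : 0 ≤ ∫ x in a..b, (u' x + 4 * cc (tm u x + ε) * u x ^ 3) ^ 2 :=
    intervalIntegral.integral_nonneg hb fun x _ => sq_nonneg _
  linarith

lemma half_zero (h : H1s u u') {a : ℝ} (ha : BB * tm u a < π) (hu : u a = 0) :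
    0 ≤ ∫ x in Ioi a, ((1/2) * u' x ^ 2 - (1/6) * u x ^ 6) := by
  have hB := BB_pos
  have := h.half_eps (a := a) (ε := (π - BB * tm u a) / (2 * BB)) (by apply div_pos <;> linarith)
    (by
      have : BB * ((π - BB * tm u a) / (2 * BB)) = (π - BB * tm u a) / 2 := by field_simp
      rw [mul_add, this]; linarith)
  simpa [hu] using this

lemma half (h : H1s u u') {a : ℝ} (ha : BB * tm u a < π) (hm : 0 < tm u a) :
    cc (tm u a) * u a ^ 4 ≤ ∫ x in Ioi a, ((1/2) * u' x ^ 2 - (1/6) * u x ^ 6) := by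
  have hc : ContinuousAt cc (tm u a) := (cc_deriv (sin_BB_pos hm ha).ne').continuousAt
  have e0 : Tendsto (fun ε : ℝ => tm u a + ε) (𝓝[>] 0) (𝓝 (tm u a)) := by
    have : Tendsto (fun ε : ℝ => tm u a + ε) (𝓝 0) (𝓝 (tm u a + 0)) :=
      (continuous_const.add continuous_id).tendsto 0
    rw [add_zero] at this
    exact this.mono_left nhdsWithin_le_nhds
  have e1 : Tendsto (fun ε => cc (tm u a + ε) * u a ^ 4) (𝓝[>] 0) (𝓝 (cc (tm u a) * u a ^ 4)) :=
    (hc.tendsto.comp e0).mul_const _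
  refine le_of_tendsto e1 ?_
  have e2 : ∀ᶠ ε : ℝ in 𝓝[>] 0, BB * (tm u a + ε) < π :=
    (e0.const_mul BB).eventually_lt_const ha
  filter_upwards [e2, self_mem_nhdsWithin] with ε h1 h2
  exact h.half_eps h2 h1

lemma half_strong (h : H1s u u') {a b : ℝ} (hab : a ≤ b) (ha : BB * tm u a < π)
    (hm : 0 < tm u b) :
    IntervalIntegrable (fun x => (u' x + 4 * cc (tm u x) * u x ^ 3) ^ 2) volume a b ∧
    cc (tm u a) * u a ^ 4 + (1/2) * ∫ x in a..b, (u' x + 4 * cc (tm u x) * u x ^ 3) ^ 2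
      ≤ ∫ x in Ioi a, ((1/2) * u' x ^ 2 - (1/6) * u x ^ 6) := by
  have h1 := h.HJ (ε := 0) hab (by simpa using hm) (by simpa using ha)
  simp only [add_zero] at h1
  have h2 := h.half (a := b) (lt_of_le_of_lt (by
    have := h.tm_anti hab
    have := BB_pos
    gcongr) ha) hm
  have h3 := intervalIntegral.integral_interval_add_Ioi (a := a) (b := b) (μ := volume)
    (h.intE.integrableOn (s := Ioi a)) (h.intE.integrableOn (s := Ioi b))
  refine ⟨h1.1, ?_⟩
  rw [← h3, h1.2]
  linarith

end H1s

lemma cc_diff {M d : ℝ} (h1 : sin (BB * (M + d)) ≠ 0) (h2 : sin (BB * (M - d)) ≠ 0)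
    (h3 : sin (BB * M) ≠ 0) :
    cc (M + d) + cc (M - d) - 2 * cc M =
      BB / 4 * (cos (BB * M) * sin (BB * d) ^ 2 /
        (sin (BB * M) * sin (BB * (M + d)) * sin (BB * (M - d)))) := by
  unfold cc
  rw [mul_add, mul_sub, sin_add, sin_sub] at *
  rw [cos_add, cos_sub]
  have h4 := sin_sq_add_cos_sq (BB * M)
  generalize sin (BB * M) = S at *
  generalize cos (BB * M) = C at *
  generalize sin (BB * d) = s at *
  generalize cos (BB * d) = c at *
  obtain ⟨P, hP⟩ : ∃ P, P = S * c + C * s := ⟨_, rfl⟩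
  obtain ⟨Q, hQ⟩ : ∃ Q, Q = S * c - C * s := ⟨_, rfl⟩
  rw [← hP] at h1 ⊢
  rw [← hQ] at h2 ⊢
  have e : ((C * c - S * s) * Q + (C * c + S * s) * P) * S - 2 * C * P * Q = 2 * C * s ^ 2 := by
    rw [hP, hQ]; linear_combination (2 * C * s ^ 2) * h4
  field_simp
  linear_combination 4 * BB * e

lemma cc_convex {m₁ m₂ : ℝ} (h1 : 0 < m₁) (h2 : 0 < m₂) (h : BB * (m₁ + m₂) < π) :
    2 * cc ((m₁ + m₂) / 2) ≤ cc m₁ + cc m₂ ∧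
      (cc m₁ + cc m₂ ≤ 2 * cc ((m₁ + m₂) / 2) → m₁ = m₂) := by
  have hB := BB_pos
  obtain ⟨M, hM⟩ : ∃ M, M = (m₁ + m₂) / 2 := ⟨_, rfl⟩
  obtain ⟨d, hd⟩ : ∃ d, d = (m₁ - m₂) / 2 := ⟨_, rfl⟩
  have e1 : m₁ = M + d := by rw [hM, hd]; ring
  have e2 : m₂ = M - d := by rw [hM, hd]; ring
  rw [← hM]
  have hMp : 0 < M := by rw [hM]; linarith
  have s1 : 0 < sin (BB * m₁) := sin_BB_pos h1 (by nlinarith)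
  have s2 : 0 < sin (BB * m₂) := sin_BB_pos h2 (by nlinarith)
  have s3 : 0 < sin (BB * M) := sin_BB_pos hMp (by rw [hM]; nlinarith)
  have c3 : 0 < cos (BB * M) := cos_pos_of_mem_Ioo ⟨by
    have := mul_pos hB hMp
    linarith [pi_pos], by rw [hM]; linarith⟩
  rw [e1] at s1
  rw [e2] at s2
  have key := cc_diff s1.ne' s2.ne' s3.ne'
  rw [← e1, ← e2] at key
  rw [← e1] at s1
  rw [← e2] at s2
  constructor
  · have : 0 ≤ BB / 4 * (cos (BB * M) * sin (BB * d) ^ 2 /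
        (sin (BB * M) * sin (BB * m₁) * sin (BB * m₂))) := by positivity
    linarith
  · intro hle
    by_contra hne
    have hd0 : d ≠ 0 := by
      intro h0; apply hne; rw [e1, e2, h0]; ring
    have hs : sin (BB * d) ≠ 0 := by
      intro h0
      rw [sin_eq_zero_iff_of_lt_of_lt] at h0
      · rcases mul_eq_zero.1 h0 with h0 | h0
        · exact hB.ne' h0
        · exact hd0 h0
      · rw [hd]; nlinarith [pi_pos]
      · rw [hd]; nlinarith [pi_pos]
    have : 0 < BB / 4 * (cos (BB * M) * sin (BB * d) ^ 2 /
        (sin (BB * M) * sin (BB * m₁) * sin (BB * m₂))) := by positivity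
    linarith

lemma scalar_min {q c : ℝ} (hq : 2 < q) (hq' : q < 4) (hc : 0 < c) :
    ∃ a : ℝ, 0 < a ∧ 2 * c * a ^ 4 - (1 / q) * a ^ q < 0 ∧
      ∀ b : ℝ, 0 ≤ b → 2 * c * a ^ 4 - (1 / q) * a ^ q ≤ 2 * c * b ^ 4 - (1 / q) * b ^ q ∧
        (2 * c * b ^ 4 - (1 / q) * b ^ q ≤ 2 * c * a ^ 4 - (1 / q) * a ^ q → b = a) := by
  have hq0 : 0 < q := by linarith
  set a : ℝ := (1 / (8 * c)) ^ (1 / (4 - q)) with ha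
  have hap : 0 < a := by positivity
  have h1 : a ^ (4 - q) = 1 / (8 * c) := by
    rw [ha, ← rpow_mul (by positivity), one_div_mul_cancel (by linarith), rpow_one]
  have h2 : 8 * c * a ^ 4 = a ^ q := by
    have : a ^ 4 = a ^ (4 - q) * a ^ q := by
      rw [← rpow_add hap, ← rpow_natCast]; norm_num
    rw [this, h1]; field_simp
  have hA : 0 < a ^ q := rpow_pos_of_pos hap q
  have hfa : 2 * c * a ^ 4 - (1 / q) * a ^ q = a ^ q * (1 / 4 - 1 / q) := by
    linear_combination (1/4) * h2
  have hdiff : ∀ b : ℝ, 0 ≤ b → 2 * c * b ^ 4 - (1 / q) * b ^ q - a ^ q * (1/4 - 1/q)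
      = a ^ q / 4 * (((b / a) ^ q) ^ (4 / q) - (1 + (4 / q) * ((b / a) ^ q - 1))) := by
    intro b hb
    have e1 : ((b / a) ^ q) ^ (4 / q) = b ^ 4 / a ^ 4 := by
      rw [← rpow_mul (by positivity), mul_div_cancel₀ _ hq0.ne', ← div_pow, ← rpow_natCast]
      norm_num
    rw [e1, div_rpow hb hap.le]
    have e2 : b ^ 4 / a ^ 4 = 8 * c * b ^ 4 / a ^ q := by
      rw [← h2]; field_simp
    rw [e2]
    field_simp
    ring
  refine ⟨a, hap, ?_, ?_⟩
  · rw [hfa]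
    apply mul_neg_of_pos_of_neg hA
    have : 1 / 4 < 1 / q := one_div_lt_one_div_of_lt hq0 hq'
    linarith
  · intro b hb
    rw [hfa]
    have hd := hdiff b hb
    have hr : 1 < 4 / q := by rw [lt_div_iff₀ hq0]; linarith
    have ht : 0 ≤ (b / a) ^ q := by positivity
    by_cases hba : (b / a) ^ q = 1
    · have : b = a := by
        have h3 : b / a = 1 := by
          have h4 : ((b / a) ^ q) ^ (1 / q) = 1 := by rw [hba, one_rpow]
          rwa [← rpow_mul (by positivity), mul_one_div_cancel hq0.ne', rpow_one] at h4
        field_simp at h3; exact h3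
      refine ⟨?_, fun _ => this⟩
      rw [hba] at hd
      simp only [one_rpow, sub_self, mul_zero, add_zero] at hd
      linarith
    · have h3 := one_add_mul_self_lt_rpow_one_add (s := (b / a) ^ q - 1) (by linarith)
        (fun h => hba (by linarith)) hr
      rw [add_sub_cancel] at h3
      have h4 : 0 < a ^ q / 4 * (((b / a) ^ q) ^ (4 / q) - (1 + (4 / q) * ((b / a) ^ q - 1))) := by
        apply mul_pos (by linarith); linarith
      exact ⟨by linarith, fun h => by linarith⟩

/-- half-line energy -/
def EE (u u' : ℝ → ℝ) : ℝ := ∫ x in Ioi (0:ℝ), ((1/2) * u' x ^ 2 - (1/6) * u x ^ 6)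

namespace H1s

variable {u u' : ℝ → ℝ}

lemma tm_pos (h : H1s u u') {a : ℝ} (hu : u a ≠ 0) : 0 < tm u a := by
  rcases (tm_nonneg u a).lt_or_eq with h1 | h1
  · exact h1
  · exfalso
    have : IsLocalMin (tm u) a := Eventually.of_forall fun x => by
      rw [← h1]; exact tm_nonneg u x
    have h2 := this.hasDerivAt_eq_zero (h.tm_deriv a)
    simp at h2
    exact hu h2

lemma mass_split (h : H1s u u') : tm u 0 + tm (fun x => u (-x)) 0 = mass u := by
  unfold tm mass
  have h1 := integral_comp_neg_Ioi (0:ℝ) (fun x => u x ^ 2)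
  rw [h1, neg_zero, add_comm]
  exact intervalIntegral.integral_Iic_add_Ioi h.sq.integrableOn h.sq.integrableOn

lemma F_split (h : H1s u u') (q : ℝ) : Ffun 6 q u u' =
    EE u u' + EE (fun x => u (-x)) (fun x => - u' (-x)) - (1 / q) * |u 0| ^ q := by
  unfold Ffun EE
  have h1 := integral_comp_neg_Ioi (0:ℝ) (fun x => (1/2) * u' x ^ 2 - (1/6) * u x ^ 6)
  simp only [neg_sq]
  rw [h1, neg_zero, add_comm,
    intervalIntegral.integral_Iic_add_Ioi h.intE.integrableOn h.intE.integrableOn,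
    integral_sub (h.dsq.const_mul _) (h.int6.const_mul _), integral_const_mul, integral_const_mul]
  have : ∀ x, |u x| ^ (6:ℝ) = u x ^ 6 := by
    intro x
    rw [show (6:ℝ) = ((6:ℕ):ℝ) by norm_num, rpow_natCast]
    exact (show Even 6 by decide).pow_abs _
  simp_rw [this]

lemma lower (h : H1s u u') {q μ : ℝ} (hm : mass u = μ) (hμ : BB * μ < π) :
    2 * cc (μ / 2) * |u 0| ^ 4 - (1 / q) * |u 0| ^ q ≤ Ffun 6 q u u' ∧
    (u 0 ≠ 0 → Ffun 6 q u u' ≤ 2 * cc (μ / 2) * |u 0| ^ 4 - (1 / q) * |u 0| ^ q →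
      tm u 0 = μ / 2 ∧ EE u u' ≤ cc (μ / 2) * u 0 ^ 4 ∧
      tm (fun x => u (-x)) 0 = μ / 2 ∧
      EE (fun x => u (-x)) (fun x => - u' (-x)) ≤ cc (μ / 2) * u 0 ^ 4) := by
  have hB := BB_pos
  have hsum := h.mass_split
  rw [hm] at hsum
  have n1 := tm_nonneg u 0
  have n2 := tm_nonneg (fun x => u (-x)) 0
  have b1 : BB * tm u 0 < π := by nlinarith
  have b2 : BB * tm (fun x => u (-x)) 0 < π := by nlinarith
  rw [h.F_split]
  have h4 : |u 0| ^ 4 = u 0 ^ 4 := (show Even 4 by decide).pow_abs _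
  rw [h4]
  by_cases hu : u 0 = 0
  · refine ⟨?_, fun hn => absurd hu hn⟩
    have e1 : 0 ≤ EE u u' := h.half_zero b1 hu
    have e2 : 0 ≤ EE (fun x => u (-x)) (fun x => - u' (-x)) :=
      h.reflect.half_zero b2 (by simpa using hu)
    rw [show u 0 ^ 4 = 0 by rw [hu]; norm_num]
    linarith
  · have p1 := h.tm_pos hu
    have p2 := h.reflect.tm_pos (a := 0) (by simpa using hu)
    have e1 : cc (tm u 0) * u 0 ^ 4 ≤ EE u u' := h.half b1 p1
    have e2 : cc (tm (fun x => u (-x)) 0) * u 0 ^ 4 ≤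
        EE (fun x => u (-x)) (fun x => - u' (-x)) := by
      have := h.reflect.half b2 p2
      rw [neg_zero] at this
      exact this
    have hc := cc_convex p1 p2 (by rw [hsum]; exact hμ)
    rw [hsum] at hc
    have hp : 0 < u 0 ^ 4 := by positivity
    refine ⟨by nlinarith [hc.1], fun _ hle => ?_⟩
    have h5 : (cc (tm u 0) + cc (tm (fun x => u (-x)) 0)) * u 0 ^ 4 ≤ 2 * cc (μ / 2) * u 0 ^ 4 := by
      linarith
    have h6 := hc.2 (le_of_mul_le_mul_right h5 hp)
    have t1 : tm u 0 = μ / 2 := by linarith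
    have t2 : tm (fun x => u (-x)) 0 = μ / 2 := by linarith
    rw [t1] at e1
    rw [t2] at e2
    exact ⟨t1, by linarith, t2, by linarith⟩

end H1s

def tt (K m x : ℝ) : ℝ := tan (BB * m / 2) * exp (-(K * BB * x))

def MM (K m x : ℝ) : ℝ := 2 / BB * arctan (tt K m x)

lemma sin_two_arctan (t : ℝ) : sin (2 * arctan t) = 2 * t / (1 + t ^ 2) := by
  rw [sin_two_mul, sin_arctan, cos_arctan]
  have h : 0 < 1 + t ^ 2 := by positivity
  have h2 := Real.mul_self_sqrt h.le
  have h3 : √(1 + t ^ 2) ≠ 0 := (Real.sqrt_pos.2 h).ne'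
  field_simp
  rw [Real.sq_sqrt h.le]

lemma sin_MM (K m x : ℝ) : sin (BB * MM K m x) = 2 * tt K m x / (1 + tt K m x ^ 2) := by
  rw [← sin_two_arctan]
  congr 1
  unfold MM
  have := BB_pos.ne'
  field_simp

lemma tt_deriv (K m x : ℝ) : HasDerivAt (tt K m) (-(K * BB) * tt K m x) x := by
  have h1 : HasDerivAt (fun x => -(K * BB * x)) (-(K * BB)) x := by
    have h3 := ((hasDerivAt_id x).const_mul (K * BB)).neg
    rw [mul_one] at h3
    exact h3
  have h2 := (h1.exp).const_mul (tan (BB * m / 2))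
  refine h2.congr_deriv ?_
  unfold tt; ring

lemma MM_deriv (K m x : ℝ) : HasDerivAt (MM K m) (-(K * sin (BB * MM K m x))) x := by
  have h1 := ((tt_deriv K m x).arctan).const_mul (2 / BB)
  refine h1.congr_deriv ?_
  rw [sin_MM]
  have := BB_pos.ne'
  have : 0 < 1 + tt K m x ^ 2 := by positivity
  field_simp

lemma tan_pos' {m : ℝ} (h0 : 0 < m) (h1 : BB * m < π) : 0 < tan (BB * m / 2) :=
  tan_pos_of_pos_of_lt_pi_div_two (by have := BB_pos; positivity) (by linarith)

lemma tt_pos {K m : ℝ} (h0 : 0 < m) (h1 : BB * m < π) (x : ℝ) : 0 < tt K m x :=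
  mul_pos (tan_pos' h0 h1) (exp_pos _)

lemma MM_zero {K m : ℝ} (h0 : 0 < m) (h1 : BB * m < π) : MM K m 0 = m := by
  have hB := BB_pos
  have := mul_pos hB h0
  unfold MM tt
  rw [mul_zero, neg_zero, exp_zero, mul_one, arctan_tan (by linarith) (by linarith)]
  field_simp

lemma MM_pos {K m : ℝ} (h0 : 0 < m) (h1 : BB * m < π) (x : ℝ) : 0 < MM K m x :=
  mul_pos (div_pos two_pos BB_pos) (arctan_pos.2 (tt_pos h0 h1 x))

lemma MM_anti {K m : ℝ} (hK : 0 ≤ K) (h0 : 0 < m) (h1 : BB * m < π) : Antitone (MM K m) := by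
  apply antitone_of_hasDerivAt_nonpos (fun x => MM_deriv K m x)
  intro x
  simp only [Pi.zero_apply, neg_nonpos]
  rw [sin_MM]
  have := tt_pos (K := K) h0 h1 x
  positivity

namespace H1s

variable {u u' : ℝ → ℝ}

lemma eq_conserved (h : H1s u u') {m : ℝ} (h1 : BB * m < π) (hm : tm u 0 = m)
    (hE : EE u u' ≤ cc m * u 0 ^ 4) {X : ℝ} (hX : 0 ≤ X) (hXm : 0 < tm u X) :
    ∀ x ∈ Icc 0 X, u x ^ 2 = u 0 ^ 2 / sin (BB * m) * sin (BB * tm u x) := by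
  have hB := BB_pos
  have hs : ∀ x ∈ Icc 0 X, sin (BB * tm u x) ≠ 0 := by
    intro x hx
    refine (sin_BB_pos ?_ ?_).ne'
    · linarith [h.tm_anti hx.2]
    · refine lt_of_le_of_lt ?_ h1
      have := h.tm_anti hx.1
      rw [hm] at this
      gcongr
  obtain ⟨hi, hle⟩ := h.half_strong hX (by rw [hm]; exact h1) hXm
  rw [hm] at hle
  unfold EE at hE
  have hnn : 0 ≤ ∫ x in (0:ℝ)..X, (u' x + 4 * cc (tm u x) * u x ^ 3) ^ 2 :=
    intervalIntegral.integral_nonneg hX fun x _ => sq_nonneg _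
  have hz : ∫ x in (0:ℝ)..X, (u' x + 4 * cc (tm u x) * u x ^ 3) ^ 2 = 0 := by linarith
  rw [intervalIntegral.integral_eq_zero_iff_of_le_of_nonneg_ae hX
    (Eventually.of_forall fun x => sq_nonneg _) hi] at hz
  have hz' := (ae_restrict_iff' measurableSet_Ioc).1 hz
  have hne : ∀ᵐ x : ℝ, x ≠ 0 := by simp [ae_iff, measure_singleton]
  set G : ℝ → ℝ := fun x => (sin (BB * tm u x))⁻¹ with hGdef
  set G' : ℝ → ℝ := fun x => BB * cos (BB * tm u x) * u x ^ 2 / sin (BB * tm u x) ^ 2 with hG'def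
  have hG : ∀ x ∈ Icc 0 X, HasDerivAt G (G' x) x := by
    intro x hx
    have h2 := (((h.tm_deriv x).const_mul BB).sin).inv (hs x hx)
    refine h2.congr_deriv ?_
    simp only [hG'def]
    ring
  have hG' : ContinuousOn G' (Icc 0 X) := by
    have h2 := h.tm_cont
    have h3 := h.cont
    apply ContinuousOn.div
    · fun_prop
    · fun_prop
    · intro x hx; exact pow_ne_zero 2 (hs x hx)
  obtain ⟨C, hC⟩ := (h.prod_ac hX hG hG' 2).const_of_ae_hasDerivAt_zero (by
    filter_upwards [h.prod_deriv hG 2, hz', hne] with x hx hx2 hx3 hxI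
    rw [uIcc_of_le hX] at hxI
    refine (hx hxI).congr_deriv ?_
    have h4 := hx2 ⟨lt_of_le_of_ne hxI.1 hx3.symm, hxI.2⟩
    have h5 : u' x = - (4 * cc (tm u x) * u x ^ 3) := by
      have : u' x + 4 * cc (tm u x) * u x ^ 3 = 0 := by simpa using h4
      linarith
    rw [h5]
    simp only [hGdef, hG'def, cc]
    have := hs x hxI
    push_cast
    norm_num
    field_simp
    ring)
  rw [uIcc_of_le hX] at hC
  intro x hx
  have c1 := hC x hx
  have c0 := hC 0 ⟨le_rfl, hX⟩
  rw [← c0] at c1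
  simp only [hGdef] at c1
  have s0 := hs 0 ⟨le_rfl, hX⟩
  have sx := hs x hx
  rw [hm] at c1 s0
  field_simp at c1 ⊢
  linarith

lemma eq_tm (h : H1s u u') {m : ℝ} (h0 : 0 < m) (h1 : BB * m < π) (hm : tm u 0 = m)
    (hE : EE u u' ≤ cc m * u 0 ^ 4) {X : ℝ} (hX : 0 ≤ X) (hXm : 0 < tm u X) :
    ∀ x ∈ Icc 0 X, tm u x = MM (u 0 ^ 2 / sin (BB * m)) m x := by
  set K := u 0 ^ 2 / sin (BB * m) with hK
  have hc := h.eq_conserved h1 hm hE hX hXm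
  have hlip : ∀ t : ℝ, LipschitzWith (Real.toNNReal (|K| * BB)) (fun y : ℝ => -(K * sin (BB * y))) := by
    intro _
    apply lipschitzWith_of_nnnorm_deriv_le
    · fun_prop
    · intro y
      have hd : HasDerivAt (fun y : ℝ => -(K * sin (BB * y))) (-(K * (cos (BB * y) * BB))) y := by
        have h1 : HasDerivAt (fun m => BB * m) BB y := by
          simpa using (hasDerivAt_id y).const_mul BB
        exact ((h1.sin).const_mul K).neg
      rw [hd.deriv]
      apply NNReal.le_toNNReal_of_coe_le
      rw [coe_nnnorm, norm_neg, Real.norm_eq_abs, abs_mul, abs_mul, abs_of_pos BB_pos]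
      have := abs_cos_le_one (BB * y)
      have hB := BB_pos
      have hK0 := abs_nonneg K
      have : |cos (BB * y)| * BB ≤ BB := by nlinarith
      gcongr
  have := ODE_solution_unique (f := tm u) (g := MM K m) (a := 0) (b := X) hlip
    h.tm_cont.continuousOn
    (fun t ht => by
      refine (h.tm_deriv t).hasDerivWithinAt.congr_deriv ?_
      rw [hc t ⟨ht.1, ht.2.le⟩])
    (fun t _ => (MM_deriv K m t).continuousAt.continuousWithinAt)
    (fun t _ => (MM_deriv K m t).hasDerivWithinAt)
    (by rw [hm, MM_zero h0 h1])
  exact this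

lemma eq_sq (h : H1s u u') {m : ℝ} (h0 : 0 < m) (h1 : BB * m < π) (hm : tm u 0 = m)
    (hE : EE u u' ≤ cc m * u 0 ^ 4) {x : ℝ} (hx : 0 ≤ x) :
    u x ^ 2 = u 0 ^ 2 / sin (BB * m) *
      sin (BB * MM (u 0 ^ 2 / sin (BB * m)) m x) := by
  set K := u 0 ^ 2 / sin (BB * m) with hK
  have hK0 : 0 ≤ K := div_nonneg (sq_nonneg _) (sin_BB_pos h0 h1).le
  have hpos : 0 < tm u x := by
    rcases (tm_nonneg u x).lt_or_eq with hp | hp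
    · exact hp
    exfalso
    have hMx := MM_pos (K := K) h0 h1 x
    have hMle : MM K m x ≤ m := by
      have := MM_anti hK0 h0 h1 hx
      rwa [MM_zero h0 h1] at this
    have hmem : MM K m x / 2 ∈ Icc (tm u x) (tm u 0) := by
      rw [← hp, hm]; constructor <;> linarith
    obtain ⟨y, hy, hyv⟩ := intermediate_value_Icc' hx h.tm_cont.continuousOn hmem
    have h3 := h.eq_tm h0 h1 hm hE hy.1 (by rw [hyv]; linarith) y ⟨hy.1, le_rfl⟩
    have h4 := MM_anti hK0 h0 h1 hy.2
    rw [← hK] at h3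
    linarith
  rw [h.eq_conserved h1 hm hE hx hpos x ⟨hx, le_rfl⟩,
    h.eq_tm h0 h1 hm hE hx hpos x ⟨hx, le_rfl⟩]

end H1s

lemma integrable_of_even {f : ℝ → ℝ} (he : ∀ x, f (-x) = f x) (hf : IntegrableOn f (Ioi 0)) :
    Integrable f := by
  have int_Iic : IntegrableOn f (Iic 0) := by
    rw [← Measure.map_neg_eq_self (volume : Measure ℝ)]
    let m : MeasurableEmbedding fun x : ℝ => -x := (Homeomorph.neg ℝ).measurableEmbedding
    rw [m.integrableOn_map_iff]
    simp_rw [Function.comp_def, he, neg_preimage, neg_Iic, neg_zero]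
    exact Iff.mpr integrableOn_Ici_iff_integrableOn_Ioi hf
  have h2 := int_Iic.union hf
  rwa [Iic_union_Ioi, integrableOn_univ] at h2

def gg (K m x : ℝ) : ℝ := √(K * (2 * tt K m x / (1 + tt K m x ^ 2)))

def gd (K m x : ℝ) : ℝ :=
  -(BB * K / 2) * gg K m x * ((1 - tt K m x ^ 2) / (1 + tt K m x ^ 2))

def UU (K m x : ℝ) : ℝ := gg K m |x|

def UD (K m x : ℝ) : ℝ := if 0 < x then gd K m x else - gd K m (-x)

def Ph (K m x : ℝ) : ℝ :=
  BB * K ^ 2 / 4 * (tt K m x * (1 - tt K m x ^ 2) / (1 + tt K m x ^ 2) ^ 2)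

section

variable {K m : ℝ}

lemma tt_cont : Continuous (tt K m) := by unfold tt; fun_prop

lemma gg_cont : Continuous (gg K m) := by
  have := tt_cont (K := K) (m := m)
  unfold gg
  refine Continuous.sqrt ?_
  refine continuous_const.mul (Continuous.div (by fun_prop) (by fun_prop) fun x => ?_)
  positivity

lemma gd_cont : Continuous (gd K m) := by
  have := tt_cont (K := K) (m := m)
  have := gg_cont (K := K) (m := m)
  unfold gd
  refine Continuous.mul (by fun_prop) (Continuous.div (by fun_prop) (by fun_prop) fun x => ?_)
  positivity


lemma gg_sq (hK : 0 < K) (h0 : 0 < m) (h1 : BB * m < π) (x : ℝ) : gg K m x ^ 2 = K * (2 * tt K m x / (1 + tt K m x ^ 2)) := by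
  have := tt_pos (K := K) h0 h1 x
  unfold gg
  rw [Real.sq_sqrt (by positivity)]

lemma gg_pos (hK : 0 < K) (h0 : 0 < m) (h1 : BB * m < π) (x : ℝ) : 0 < gg K m x := by
  have := tt_pos (K := K) h0 h1 x
  unfold gg
  exact Real.sqrt_pos.2 (by positivity)

lemma gg_deriv (hK : 0 < K) (h0 : 0 < m) (h1 : BB * m < π) (x : ℝ) : HasDerivAt (gg K m) (gd K m x) x := by
  have ht := tt_pos (K := K) h0 h1 x
  have hp : 0 < 1 + tt K m x ^ 2 := by positivity
  have hd := tt_deriv K m x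
  have d1 := ((hd.const_mul 2).div ((hd.pow 2).const_add 1) hp.ne').const_mul K
  have d2 := d1.sqrt (by simp only [Pi.pow_apply, Pi.div_apply]; positivity)
  refine d2.congr_deriv ?_
  have hs := gg_sq hK h0 h1 x
  have hg := gg_pos hK h0 h1 x
  unfold gd
  simp only [Pi.pow_apply, Pi.div_apply]
  change _ / (2 * gg K m x) = _
  rw [div_eq_iff (by positivity)]
  rw [show ∀ a b c : ℝ, a * gg K m x * b * (2 * gg K m x) = 2 * a * b * gg K m x ^ 2 by
    intros; ring, hs]
  · field_simp
    ring
  · exact 0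

lemma gd_sq_le (hK : 0 < K) (h0 : 0 < m) (h1 : BB * m < π) (x : ℝ) : gd K m x ^ 2 ≤ (BB * K / 2) ^ 2 * gg K m x ^ 2 := by
  unfold gd
  have hp : 0 < 1 + tt K m x ^ 2 := by positivity
  have : ((1 - tt K m x ^ 2) / (1 + tt K m x ^ 2)) ^ 2 ≤ 1 := by
    rw [div_pow, div_le_one (by positivity)]
    nlinarith [sq_nonneg (tt K m x)]
  rw [mul_pow, mul_pow, neg_sq]
  exact mul_le_of_le_one_right (by positivity) this

lemma tt_tendsto (hK : 0 < K) : Tendsto (tt K m) atTop (𝓝 0) := by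
  have hB := BB_pos
  have h : Tendsto (fun x : ℝ => -(K * BB * x)) atTop atBot :=
    tendsto_neg_atTop_atBot.comp (tendsto_id.const_mul_atTop (by positivity))
  have := (tendsto_exp_atBot.comp h).const_mul (tan (BB * m / 2))
  rw [mul_zero] at this
  exact this

lemma gg_int (hK : 0 < K) (h0 : 0 < m) (h1 : BB * m < π) : IntegrableOn (fun x => gg K m x ^ 2) (Ioi 0) ∧ ∫ x in Ioi 0, gg K m x ^ 2 = m := by
  have hM : Tendsto (MM K m) atTop (𝓝 0) := by
    have := ((continuous_arctan.tendsto 0).comp (tt_tendsto (m := m) hK)).const_mul (2 / BB)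
    rw [arctan_zero, mul_zero] at this
    exact this
  have hd : ∀ x ∈ Ici (0:ℝ), HasDerivAt (fun x => - MM K m x) (gg K m x ^ 2) x := by
    intro x _
    refine (MM_deriv K m x).fun_neg.congr_deriv ?_
    rw [gg_sq hK h0 h1, sin_MM, neg_neg]
  have hM' := hM.neg
  refine ⟨integrableOn_Ioi_deriv_of_nonneg' hd (fun x _ => sq_nonneg _) hM', ?_⟩
  rw [integral_Ioi_of_hasDerivAt_of_nonneg' hd (fun x _ => sq_nonneg _) hM', MM_zero h0 h1]
  simp

lemma UU_sq_int (hK : 0 < K) (h0 : 0 < m) (h1 : BB * m < π) : Integrable (fun x => UU K m x ^ 2) := by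
  refine integrable_of_even (fun x => by simp [UU]) ?_
  refine (gg_int hK h0 h1).1.congr_fun (fun x hx => ?_) measurableSet_Ioi
  simp only [UU, abs_of_pos (mem_Ioi.1 hx)]

lemma UD_ii (a b : ℝ) : IntervalIntegrable (UD K m) volume a b := by
  have hA := gd_cont (K := K) (m := m)
  have hB : Continuous (fun x => - gd K m (-x)) := by fun_prop
  have key : ∀ a b : ℝ, IntegrableOn (UD K m) (Ioc a b) := by
    intro a b
    have i1 : IntegrableOn (gd K m) (Ioc a b) := (hA.integrableOn_Icc).mono_set Ioc_subset_Icc_self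
    have i2 : IntegrableOn (fun x => - gd K m (-x)) (Ioc a b) :=
      (hB.integrableOn_Icc).mono_set Ioc_subset_Icc_self
    have := Integrable.piecewise (μ := volume.restrict (Ioc a b)) (s := Ioi (0:ℝ)) measurableSet_Ioi
      (Integrable.integrableOn i1) (Integrable.integrableOn i2)
    refine Integrable.congr this (Eventually.of_forall fun x => ?_)
    by_cases hx : 0 < x <;> simp [Set.piecewise, UD, hx]
  exact ⟨key a b, key b a⟩

lemma UU_H1 (hK : 0 < K) (h0 : 0 < m) (h1 : BB * m < π) : H1s (UU K m) (UD K m) where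
  cont := (gg_cont).comp continuous_abs
  sq := UU_sq_int hK h0 h1
  dsq := by
    have hm : AEStronglyMeasurable (fun x => UD K m x ^ 2) volume := by
      have : Measurable (UD K m) :=
        Measurable.ite measurableSet_Ioi gd_cont.measurable
          (gd_cont.comp continuous_neg).neg.measurable
      exact (this.pow_const 2).aestronglyMeasurable
    refine ((UU_sq_int hK h0 h1).const_mul ((BB * K / 2) ^ 2)).mono' hm
      (Eventually.of_forall fun x => ?_)
    rw [Real.norm_of_nonneg (sq_nonneg _)]
    unfold UD UU
    split_ifs with hx
    · rw [abs_of_pos hx]; exact gd_sq_le hK h0 h1 x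
    · rw [abs_of_nonpos (not_lt.1 hx), neg_sq]; exact gd_sq_le hK h0 h1 (-x)
  ii := UD_ii
  ftc := fun a b => by
    symm
    refine integral_eq_of_hasDerivAt_off_countable _ _ (s := {0}) (countable_singleton _)
      ((gg_cont).comp continuous_abs).continuousOn ?_ (UD_ii a b)
    rintro x ⟨_, hx⟩
    rcases lt_or_gt_of_ne (show x ≠ 0 from hx) with hx | hx
    · have hd : HasDerivAt (fun y => gg K m (-y)) (- gd K m (-x)) x := by
        have := (gg_deriv hK h0 h1 (-x)).comp x (hasDerivAt_neg x)
        simpa [Function.comp_def] using this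
      simp only [UD, not_lt.2 hx.le, if_false]
      refine hd.congr_of_eventuallyEq ?_
      filter_upwards [Iio_mem_nhds hx] with y hy
      simp [UU, abs_of_neg (mem_Iio.1 hy)]
    · simp only [UD, show 0 < x from hx, if_true]
      refine (gg_deriv hK h0 h1 x).congr_of_eventuallyEq ?_
      filter_upwards [Ioi_mem_nhds hx] with y hy
      simp [UU, abs_of_pos (mem_Ioi.1 hy)]

lemma UU_mass (hK : 0 < K) (h0 : 0 < m) (h1 : BB * m < π) : mass (UU K m) = 2 * m := by
  unfold mass UU
  rw [integral_comp_abs (f := fun x => gg K m x ^ 2), (gg_int hK h0 h1).2]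

lemma Ph_deriv (hK : 0 < K) (h0 : 0 < m) (h1 : BB * m < π) (x : ℝ) :
    HasDerivAt (Ph K m) (-((1/2) * gd K m x ^ 2 - (1/6) * gg K m x ^ 6)) x := by
  have hp : 0 < 1 + tt K m x ^ 2 := by positivity
  have hd := tt_deriv K m x
  have d1 := ((hd.mul ((hd.pow 2).const_sub 1)).div (((hd.pow 2).const_add 1).pow 2)
    (pow_pos hp 2).ne').const_mul (BB * K ^ 2 / 4)
  refine d1.congr_deriv ?_
  have hs := gg_sq hK h0 h1 x
  have hB : BB ^ 2 = 4 / 3 := BB_sq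
  have e6 : gg K m x ^ 6 = (gg K m x ^ 2) ^ 3 := by ring
  unfold gd
  rw [mul_pow, mul_pow, e6, hs]
  simp only [Pi.pow_apply, Pi.mul_apply]
  have e1 : (-(BB * K / 2)) ^ 2 = K ^ 2 / 3 := by
    rw [neg_sq, div_pow, mul_pow, hB]; ring
  rw [e1]
  generalize tt K m x = t at *
  field_simp
  ring_nf
  rw [hB]
  ring

lemma UU_EE (hK : 0 < K) (h0 : 0 < m) (h1 : BB * m < π) : EE (UU K m) (UD K m) = Ph K m 0 := by
  have hintE := ((UU_H1 hK h0 h1).intE).integrableOn (s := Ioi (0:ℝ))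
  have hd : ∀ x ∈ Ioi (0:ℝ), HasDerivAt (fun x => - Ph K m x)
      ((1/2) * UD K m x ^ 2 - (1/6) * UU K m x ^ 6) x := by
    intro x hx
    refine (Ph_deriv hK h0 h1 x).fun_neg.congr_deriv ?_
    simp only [UD, UU, show 0 < x from hx, if_true, abs_of_pos (mem_Ioi.1 hx), neg_neg]
  have hlim : Tendsto (fun x => - Ph K m x) atTop (𝓝 0) := by
    have ht := tt_tendsto (m := m) hK
    have := (((ht.mul ((ht.pow 2).const_sub 1)).div (((ht.pow 2).const_add 1).pow 2)
      (by norm_num)).const_mul (BB * K ^ 2 / 4)).neg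
    norm_num at this
    simpa [Ph] using this
  unfold EE
  rw [integral_Ioi_of_hasDerivAt_of_tendsto
    ((Ph_deriv hK h0 h1 0).continuousAt.neg.continuousWithinAt) hd hintE hlim]
  simp

lemma UU_zero (hK : 0 < K) (h0 : 0 < m) (h1 : BB * m < π) : UU K m 0 ^ 2 = K * sin (BB * m) := by
  simp only [UU, abs_zero]
  rw [gg_sq hK h0 h1, ← sin_MM, MM_zero h0 h1]

lemma Ph_zero (hK : 0 < K) (h0 : 0 < m) (h1 : BB * m < π) : Ph K m 0 = cc m * UU K m 0 ^ 4 := by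
  have hs : sin (BB * m) = 2 * tt K m 0 / (1 + tt K m 0 ^ 2) := by
    rw [← sin_MM, MM_zero h0 h1]
  have ht := tt_pos (K := K) h0 h1 0
  have htan : tt K m 0 = tan (BB * m / 2) := by simp [tt]
  have hB := BB_pos
  have hc2 : cos (BB * m / 2) ≠ 0 := by
    refine (cos_pos_of_mem_Ioo ⟨?_, ?_⟩).ne' <;> nlinarith
  have hc : cos (BB * m) = (1 - tt K m 0 ^ 2) / (1 + tt K m 0 ^ 2) := by
    have e1 : BB * m = 2 * (BB * m / 2) := by ring
    have e2 := sin_sq_add_cos_sq (BB * m / 2)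
    rw [htan, tan_eq_sin_div_cos]
    nth_rw 1 [e1]
    rw [cos_two_mul']
    rw [div_pow, one_sub_div (pow_ne_zero 2 hc2), one_add_div (pow_ne_zero 2 hc2)]
    rw [div_div_div_cancel_right₀ (pow_ne_zero 2 hc2), add_comm (cos _ ^ 2), e2, div_one]
  have e4 : UU K m 0 ^ 4 = (UU K m 0 ^ 2) ^ 2 := by ring
  rw [e4, UU_zero hK h0 h1]
  unfold cc Ph
  rw [hs, hc]
  have hp : 0 < 1 + tt K m 0 ^ 2 := by positivity
  field_simp
  try ring

lemma UU_F (hK : 0 < K) (h0 : 0 < m) (h1 : BB * m < π) (q : ℝ) : Ffun 6 q (UU K m) (UD K m) =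
    2 * cc m * UU K m 0 ^ 4 - (1 / q) * |UU K m 0| ^ q := by
  rw [(UU_H1 hK h0 h1).F_split]
  have : EE (fun x => UU K m (-x)) (fun x => - UD K m (-x)) = EE (UU K m) (UD K m) := by
    unfold EE
    refine setIntegral_congr_fun measurableSet_Ioi fun x hx => ?_
    have hx : 0 < x := hx
    simp [UU, UD, hx, not_lt.2 hx.le]
  rw [this, UU_EE hK h0 h1, Ph_zero hK h0 h1]
  ring

end
lemma sq_eq_of_min {u u' : ℝ → ℝ} (h : H1s u u') {q μ a : ℝ} (hμ : 0 < μ) (hB : BB * μ < π)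
    (hm : mass u = μ) (ha : 0 < a)
    (hmin : ∀ b, 0 ≤ b → 2 * cc (μ / 2) * b ^ 4 - (1 / q) * b ^ q ≤
      2 * cc (μ / 2) * a ^ 4 - (1 / q) * a ^ q → b = a)
    (hF : Ffun 6 q u u' ≤ 2 * cc (μ / 2) * a ^ 4 - (1 / q) * a ^ q) (x : ℝ) :
    u x ^ 2 = a ^ 2 / sin (BB * (μ / 2)) *
      sin (BB * MM (a ^ 2 / sin (BB * (μ / 2))) (μ / 2) |x|) := by
  obtain ⟨l1, l2⟩ := h.lower (q := q) hm hB
  have hua : |u 0| = a := hmin _ (abs_nonneg _) (l1.trans hF)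
  have hu2 : u 0 ^ 2 = a ^ 2 := by rw [← hua, sq_abs]
  have hu0 : u 0 ≠ 0 := by
    intro h0; rw [h0, abs_zero] at hua; exact ha.ne hua
  rw [← hua] at hF
  obtain ⟨t1, e1, t2, e2⟩ := l2 hu0 hF
  have hm0 : 0 < μ / 2 := by positivity
  have hm1 : BB * (μ / 2) < π := by nlinarith [BB_pos]
  rcases le_total 0 x with hx | hx
  · rw [abs_of_nonneg hx, ← hu2]
    exact h.eq_sq hm0 hm1 t1 e1 hx
  · rw [abs_of_nonpos hx, ← hu2]
    have := h.reflect.eq_sq hm0 hm1 t2 (by simpa using e2) (neg_nonneg.2 hx)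
    simpa using this

theorem stmt9 (q μ : ℝ) (hq : 2 < q) (hq' : q < 4) (hμ : 0 < μ)
    (hμ' : μ < (Real.sqrt 3 / 2) * Real.pi) :
    (∃ C : ℝ, ∀ u u' : ℝ → ℝ, IsH1 u u' → mass u = μ → C ≤ Ffun 6 q u u') ∧
    (∃ u₀ u₀' : ℝ → ℝ, IsH1 u₀ u₀' ∧ mass u₀ = μ ∧ Ffun 6 q u₀ u₀' < 0) ∧
    (∃ u u' : ℝ → ℝ, IsH1 u u' ∧ mass u = μ ∧
      ∀ v v' : ℝ → ℝ, IsH1 v v' → mass v = μ → Ffun 6 q u u' ≤ Ffun 6 q v v') ∧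
    (∀ u u' v v' : ℝ → ℝ,
      IsH1 u u' → (∀ x, 0 ≤ u x) → mass u = μ →
      (∀ w w' : ℝ → ℝ, IsH1 w w' → mass w = μ → Ffun 6 q u u' ≤ Ffun 6 q w w') →
      IsH1 v v' → (∀ x, 0 ≤ v x) → mass v = μ →
      (∀ w w' : ℝ → ℝ, IsH1 w w' → mass w = μ → Ffun 6 q v v' ≤ Ffun 6 q w w') →
      u = v) := by
  have hBp := BB_pos
  have hB : BB * μ < π := by
    have h3 : 0 < √(3:ℝ) := by positivity
    have hBB : BB * (√3 / 2) = 1 := by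
      unfold BB
      field_simp
    calc BB * μ < BB * (√3 / 2 * π) := by gcongr
      _ = π := by rw [← mul_assoc, hBB, one_mul]
  have hm0 : 0 < μ / 2 := by positivity
  have hm1 : BB * (μ / 2) < π := by nlinarith
  have hsin := sin_BB_pos hm0 hm1
  have hc : 0 < cc (μ / 2) := by
    unfold cc
    have : 0 < cos (BB * (μ / 2)) := cos_pos_of_mem_Ioo ⟨by nlinarith [pi_pos], by linarith⟩
    positivity
  obtain ⟨a, ha, hneg, hmin⟩ := scalar_min hq hq' hc
  set K := a ^ 2 / sin (BB * (μ / 2)) with hKdef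
  have hK : 0 < K := by positivity
  have hU := UU_H1 hK hm0 hm1
  have hUm : mass (UU K (μ / 2)) = μ := by rw [UU_mass hK hm0 hm1]; ring
  have hU0 : UU K (μ / 2) 0 = a := by
    have e := UU_zero hK hm0 hm1
    rw [hKdef, div_mul_cancel₀ _ hsin.ne', ← hKdef] at e
    have hn : 0 ≤ UU K (μ / 2) 0 := Real.sqrt_nonneg _
    exact (pow_left_inj₀ hn ha.le two_ne_zero).1 e
  have hUF : Ffun 6 q (UU K (μ / 2)) (UD K (μ / 2)) =
      2 * cc (μ / 2) * a ^ 4 - (1 / q) * a ^ q := by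
    rw [UU_F hK hm0 hm1, hU0, abs_of_pos ha]
  have hlow : ∀ u u' : ℝ → ℝ, IsH1 u u' → mass u = μ →
      2 * cc (μ / 2) * a ^ 4 - (1 / q) * a ^ q ≤ Ffun 6 q u u' := by
    intro u u' hu hm
    have h := hu.toH1s (by rw [hm]; exact hμ.ne')
    exact ((hmin _ (abs_nonneg (u 0))).1).trans (h.lower hm hB).1
  refine ⟨⟨_, hlow⟩, ⟨_, _, hU.toIsH1, hUm, by rw [hUF]; exact hneg⟩,
    ⟨_, _, hU.toIsH1, hUm, fun v v' hv hm => by rw [hUF]; exact hlow v v' hv hm⟩, ?_⟩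
  intro u u' v v' hu hu0 hum humin hv hv0 hvm hvmin
  have h1 := humin _ _ hU.toIsH1 hUm
  have h2 := hvmin _ _ hU.toIsH1 hUm
  rw [hUF] at h1 h2
  have hmin' := fun b hb => (hmin b hb).2
  funext x
  have e1 := sq_eq_of_min (hu.toH1s (by rw [hum]; exact hμ.ne')) hμ hB hum ha hmin' h1 x
  have e2 := sq_eq_of_min (hv.toH1s (by rw [hvm]; exact hμ.ne')) hμ hB hvm ha hmin' h2 x
  exact (pow_left_inj₀ (hu0 x) (hv0 x) two_ne_zero).1 (e1.trans e2.symm)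
end
end
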